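/- arXiv:2404.13763 — 2 statements merged into one kernel-verified Lean document; each statement's English description precedes it below -/
import Mathlib

section
/- For every fixed integer d ≥ 1, as the integer b → ∞ (with b > d), I(b,d,3) = b·log b + a₁/b⁵ + a₂/b⁶ + a₃/b⁷ + a₄/b⁸ + O(b⁻⁹), where: a₁ = (d + 1/2)/d²; a₂ = (d + 1/2)·d/(d²(d+1)) · 0 + (d + 1/2)(d + 0)/(d²(d+1)) evaluated as (d + 1/2)((3−2)d + 3 − 3)/(d²(d+1)) = (d + 1/2)·d/(d²(d+1)); a₃ = (d + 1/2)ζ(2) + (d + 1/2)((3² − 5·3 + 4)d³ + (2·3² − 12·3 + 8)d² + (3² − 7·3 + 1)d − 2)/(2d³(d+1)²) = (d + 1/2)ζ(2) + (d + 1/2)(−2d³ − 10d² − 11d − 2)/(2d³(d+1)²); a₄ = −(2d+1)d·ζ(3) + 3(d + 1/2)ζ(2) − (12d⁶ − 50d⁴ − 81d³ − 71d² − 33d − 6)/(12d⁴(d+1)³). -/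
open Filter Asymptotics

/-- The Irwin harmonic sum `I(b,d,k)`: sum of `1/m` over positive integers `m`
whose base-`b` digit list contains the digit `d` exactly `k` times. -/
noncomputable def irwinSum (b d k : ℕ) : ℝ :=
  ∑' m : ℕ, if 0 < m ∧ (Nat.digits b m).count d = k then (1 : ℝ) / m else 0

/-- `ζ(s) = ∑_{n ≥ 1} n^{-s}` for an integer exponent. -/
noncomputable def zetaR (s : ℕ) : ℝ := ∑' n : ℕ, 1 / ((n : ℝ) + 1) ^ s


namespace Irw

/-- number of digits `d` in base `b`, as an integer -/
def cnt (b d n : ℕ) : ℤ := ((Nat.digits b n).count d : ℕ)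

/-- level `l` sums -/
noncomputable def A (b d l : ℕ) (k : ℤ) (f : ℝ → ℝ) : ℝ :=
  (∑ n ∈ Finset.range (b ^ l), if cnt b d n = k then f ((n : ℝ) / (b : ℝ) ^ l) else 0) / (b : ℝ) ^ l

noncomputable def mu (b d : ℕ) (k : ℤ) (f : ℝ → ℝ) : ℝ := ∑' l, A b d l k f

noncomputable def nu (b d : ℕ) (k : ℤ) (f : ℝ → ℝ) : ℝ :=
  mu b d k f - b * ∫ x in (0 : ℝ)..1, f x

/-- affine contraction -/
noncomputable def ph (b a : ℕ) (x : ℝ) : ℝ := ((a : ℝ) + x) / b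

def Good (f : ℝ → ℝ) : Prop := ContinuousOn f (Set.Icc 0 1)

def Lip (f : ℝ → ℝ) (K : ℝ) : Prop :=
  ∀ x ∈ Set.Icc (0 : ℝ) 1, ∀ y ∈ Set.Icc (0 : ℝ) 1, |f x - f y| ≤ K * |x - y|

lemma cnt_add (b d l a n : ℕ) (hb : 2 ≤ b) (hd : 1 ≤ d) (ha : a < b) (hn : n < b ^ l) :
    cnt b d (a * b ^ l + n) = cnt b d n + if a = d then 1 else 0 := by
  rcases Nat.eq_zero_or_pos a with h0 | h0
  · subst h0
    have : ¬ (0 = d) := by omega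
    simp [this]
  · have hlen : (Nat.digits b n).length ≤ l := (Nat.digits_length_le_iff (by omega) n).2 hn
    have h := Nat.digits_append_zeroes_append_digits (b := b) (k := l - (Nat.digits b n).length)
      (m := a) (n := n) (by omega) h0
    have e : n + b ^ ((Nat.digits b n).length + (l - (Nat.digits b n).length)) * a
        = a * b ^ l + n := by
      rw [Nat.add_sub_cancel' hlen]; ring
    rw [e] at h
    unfold cnt
    rw [← h, Nat.digits_of_lt b a (by omega) ha]
    have hd0 : ¬ ((0 : ℕ) = d) := by omega
    simp [List.count_append, List.count_replicate, List.count_singleton, hd0]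

lemma sum_range_mul' (N M : ℕ) (F : ℕ → ℝ) :
    ∑ n ∈ Finset.range (N * M), F n
      = ∑ a ∈ Finset.range N, ∑ r ∈ Finset.range M, F (a * M + r) := by
  induction N with
  | zero => simp
  | succ N ih =>
    rw [Finset.sum_range_succ, ← ih, Nat.succ_mul, Finset.sum_range_add]

lemma A_zero (b d : ℕ) (k : ℤ) (f : ℝ → ℝ) : A b d 0 k f = if k = 0 then f 0 else 0 := by
  simp [A, cnt, eq_comm]

lemma A_neg (b d l : ℕ) (k : ℤ) (hk : k < 0) (f : ℝ → ℝ) : A b d l k f = 0 := by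
  unfold A
  rw [Finset.sum_eq_zero]; · simp
  intro n _
  rw [if_neg]
  unfold cnt; omega

lemma A_inner (b d l a : ℕ) (k : ℤ) (hb : 2 ≤ b) (hd : 1 ≤ d) (ha : a < b) (f : ℝ → ℝ) :
    (∑ r ∈ Finset.range (b ^ l), if cnt b d (a * b ^ l + r) = k then
      f (((a * b ^ l + r : ℕ) : ℝ) / (b : ℝ) ^ (l + 1)) else 0) / (b : ℝ) ^ l
      = A b d l (if a = d then k - 1 else k) (fun x => f (ph b a x)) := by
  have hb0 : (b : ℝ) ≠ 0 := by positivity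
  unfold A
  congr 1
  apply Finset.sum_congr rfl
  intro r hr
  rw [cnt_add b d l a r hb hd ha (Finset.mem_range.1 hr)]
  have e : ((a * b ^ l + r : ℕ) : ℝ) / (b : ℝ) ^ (l + 1) = ph b a ((r : ℝ) / (b : ℝ) ^ l) := by
    unfold ph; push_cast; field_simp; ring
  rw [e]
  by_cases h : a = d
  · simp only [h, if_true, eq_sub_iff_add_eq]
  · simp [h]

lemma A_succ (b d l : ℕ) (k : ℤ) (hb : 2 ≤ b) (hd : 1 ≤ d) (hdb : d < b) (f : ℝ → ℝ) :
    A b d (l + 1) k f = (1 / (b : ℝ)) * (∑ a ∈ Finset.range b, A b d l k (fun x => f (ph b a x))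
      + (A b d l (k - 1) (fun x => f (ph b d x)) - A b d l k (fun x => f (ph b d x)))) := by
  have hb0 : (b : ℝ) ≠ 0 := by positivity
  have h1 : A b d (l + 1) k f = (1 / (b : ℝ)) * ∑ a ∈ Finset.range b,
      A b d l (if a = d then k - 1 else k) (fun x => f (ph b a x)) := by
    rw [← Finset.sum_congr rfl (fun a ha => A_inner b d l a k hb hd (Finset.mem_range.1 ha) f)]
    rw [A, pow_succ' b l, sum_range_mul', ← Finset.sum_div]
    have hS : ∀ S : ℝ, S / (b : ℝ) ^ (l + 1) = 1 / (b : ℝ) * (S / (b : ℝ) ^ l) := by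
      intro S; field_simp; ring
    exact hS _
  rw [h1]
  congr 1
  have h2 : ∀ a ∈ Finset.range b, A b d l (if a = d then k - 1 else k) (fun x => f (ph b a x))
      = A b d l k (fun x => f (ph b a x)) + if a = d then
        (A b d l (k - 1) (fun x => f (ph b d x)) - A b d l k (fun x => f (ph b d x))) else 0 := by
    intro a _
    by_cases h : a = d
    · subst h; simp
    · simp [h]
  rw [Finset.sum_congr rfl h2, Finset.sum_add_distrib, Finset.sum_ite_eq']
  simp [hdb]

/-- masses -/
noncomputable def c (b d l : ℕ) (k : ℤ) : ℝ := A b d l k (fun _ => 1)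

lemma c_nonneg (b d l : ℕ) (k : ℤ) : 0 ≤ c b d l k := by
  unfold c A
  apply div_nonneg _ (by positivity)
  apply Finset.sum_nonneg
  intro n _
  split_ifs <;> norm_num

lemma c_succ (b d l : ℕ) (k : ℤ) (hb : 2 ≤ b) (hd : 1 ≤ d) (hdb : d < b) :
    c b d (l + 1) k = c b d l k + (1 / (b : ℝ)) * (c b d l (k - 1) - c b d l k) := by
  have hb0 : (b : ℝ) ≠ 0 := by positivity
  unfold c
  rw [A_succ b d l k hb hd hdb]
  simp only [Finset.sum_const, Finset.card_range, nsmul_eq_mul]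
  field_simp

lemma c_sum_le (b d : ℕ) (hb : 2 ≤ b) (hd : 1 ≤ d) (hdb : d < b) (L : ℕ) :
    ∀ k : ℤ, ∑ l ∈ Finset.range L, c b d l k ≤ b := by
  have hb0 : (0 : ℝ) < b := by positivity
  have hb2 : (2 : ℝ) ≤ b := by exact_mod_cast hb
  induction L with
  | zero => intro k; simp
  | succ L ih =>
    intro k
    rw [Finset.sum_range_succ', Finset.sum_congr rfl (fun l _ => c_succ b d l k hb hd hdb),
      Finset.sum_add_distrib, ← Finset.mul_sum, Finset.sum_sub_distrib]
    have h1 := ih k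
    have h2 := ih (k - 1)
    set S := ∑ l ∈ Finset.range L, c b d l k
    set S' := ∑ l ∈ Finset.range L, c b d l (k - 1) with hS'
    have hi : 0 < 1 / (b : ℝ) := by positivity
    have hbi : (1 / (b : ℝ)) * b = 1 := by field_simp
    have hi1 : 1 / (b : ℝ) ≤ 1 := by rw [div_le_one hb0]; linarith
    have e : S + 1 / (b : ℝ) * (S' - S) = (1 - 1 / (b : ℝ)) * S + 1 / (b : ℝ) * S' := by ring
    rw [e]
    have m1 : (1 - 1 / (b : ℝ)) * S ≤ (1 - 1 / (b : ℝ)) * b :=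
      mul_le_mul_of_nonneg_left h1 (by linarith)
    have m2 : (1 / (b : ℝ)) * S' ≤ (1 / (b : ℝ)) * b := mul_le_mul_of_nonneg_left h2 hi.le
    have c0 : c b d 0 k = if k = 0 then 1 else 0 := A_zero _ _ _ _
    rw [c0]
    by_cases hk : k = 0
    · have : S' = 0 := by
        rw [hS']; apply Finset.sum_eq_zero; intro l _
        exact A_neg _ _ _ _ (by omega) _
      rw [this, if_pos hk]
      nlinarith
    · rw [if_neg hk]; nlinarith

lemma c_summable (b d : ℕ) (hb : 2 ≤ b) (hd : 1 ≤ d) (hdb : d < b) (k : ℤ) :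
    Summable (fun l => c b d l k) :=
  summable_of_sum_range_le (fun l => c_nonneg b d l k) (fun L => c_sum_le b d hb hd hdb L k)

lemma frac_mem (b l n : ℕ) (hn : n < b ^ l) : (n : ℝ) / (b : ℝ) ^ l ∈ Set.Icc (0 : ℝ) 1 := by
  have h : (n : ℝ) < (b : ℝ) ^ l := by exact_mod_cast hn
  refine ⟨by positivity, ?_⟩
  exact div_le_one_of_le₀ h.le (by positivity)

lemma ph_mem (b a : ℕ) (ha : a < b) (x : ℝ) (hx : x ∈ Set.Icc (0 : ℝ) 1) :
    ph b a x ∈ Set.Icc (0 : ℝ) 1 := by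
  have h : (a : ℝ) + 1 ≤ b := by exact_mod_cast ha
  obtain ⟨h0, h1⟩ := hx
  unfold ph
  refine ⟨by positivity, ?_⟩
  apply div_le_one_of_le₀ _ (by positivity)
  linarith

lemma A_abs_le (b d l : ℕ) (k : ℤ) (f : ℝ → ℝ) (M : ℝ)
    (hf : ∀ x ∈ Set.Icc (0 : ℝ) 1, |f x| ≤ M) : |A b d l k f| ≤ M * c b d l k := by
  unfold c A
  rw [abs_div, abs_of_nonneg (show (0 : ℝ) ≤ (b : ℝ) ^ l by positivity), ← mul_div_assoc]
  apply div_le_div_of_nonneg_right _ (by positivity)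
  refine (Finset.abs_sum_le_sum_abs _ _).trans ?_
  rw [Finset.mul_sum]
  apply Finset.sum_le_sum
  intro n hn
  split_ifs
  · simpa using hf _ (frac_mem b l n (Finset.mem_range.1 hn))
  · simp

lemma Good.bdd {f : ℝ → ℝ} (hf : Good f) : ∃ M, ∀ x ∈ Set.Icc (0 : ℝ) 1, |f x| ≤ M := by
  obtain ⟨M, hM⟩ := isCompact_Icc.exists_bound_of_continuousOn hf
  exact ⟨M, hM⟩

lemma Good.ph {f : ℝ → ℝ} (hf : Good f) (b a : ℕ) (ha : a < b) : Good (fun x => f (ph b a x)) := by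
  apply ContinuousOn.comp hf
  · unfold Irw.ph; fun_prop
  · intro x hx; exact ph_mem b a ha x hx

lemma A_summable (b d : ℕ) (hb : 2 ≤ b) (hd : 1 ≤ d) (hdb : d < b) (k : ℤ) (f : ℝ → ℝ)
    (hf : Good f) : Summable (fun l => A b d l k f) := by
  obtain ⟨M, hM⟩ := hf.bdd
  exact Summable.of_norm_bounded ((c_summable b d hb hd hdb k).mul_left M)
    (fun l => A_abs_le b d l k f M hM)

lemma A_congr (b d l : ℕ) (k : ℤ) (f g : ℝ → ℝ) (h : ∀ x ∈ Set.Icc (0 : ℝ) 1, f x = g x) :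
    A b d l k f = A b d l k g := by
  unfold A
  congr 1
  apply Finset.sum_congr rfl
  intro n hn
  rw [h _ (frac_mem b l n (Finset.mem_range.1 hn))]

lemma A_add (b d l : ℕ) (k : ℤ) (f g : ℝ → ℝ) :
    A b d l k (fun x => f x + g x) = A b d l k f + A b d l k g := by
  unfold A
  rw [← add_div, ← Finset.sum_add_distrib]
  congr 1
  apply Finset.sum_congr rfl
  intro n hn
  split_ifs <;> simp

lemma A_smul (b d l : ℕ) (k : ℤ) (r : ℝ) (f : ℝ → ℝ) :
    A b d l k (fun x => r * f x) = r * A b d l k f := by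
  unfold A
  rw [← mul_div_assoc, Finset.mul_sum]
  congr 1
  apply Finset.sum_congr rfl
  intro n hn
  split_ifs <;> simp

end Irw


namespace Irw

structure Ok (b d : ℕ) : Prop where
  hb : 2 ≤ b
  hd : 1 ≤ d
  hdb : d < b

lemma Ok.pos {b d : ℕ} (h : Ok b d) : (0 : ℝ) < b := by
  have := h.hb; positivity

lemma Ok.two {b d : ℕ} (h : Ok b d) : (2 : ℝ) ≤ b := by exact_mod_cast h.hb

lemma Ok.sum {b d : ℕ} (h : Ok b d) (k : ℤ) {f : ℝ → ℝ} (hf : Good f) :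
    HasSum (fun l => A b d l k f) (mu b d k f) :=
  (A_summable b d h.hb h.hd h.hdb k f hf).hasSum

lemma Good.int {f : ℝ → ℝ} (hf : Good f) : IntervalIntegrable f MeasureTheory.volume 0 1 := by
  apply ContinuousOn.intervalIntegrable
  rw [Set.uIcc_of_le zero_le_one]; exact hf

lemma Good.add {f g : ℝ → ℝ} (hf : Good f) (hg : Good g) : Good (fun x => f x + g x) :=
  ContinuousOn.add hf hg

lemma Good.smul {f : ℝ → ℝ} (hf : Good f) (r : ℝ) : Good (fun x => r * f x) :=
  ContinuousOn.mul continuousOn_const hf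

lemma Good.const (r : ℝ) : Good (fun _ => r) := continuousOn_const

lemma Good.sum {ι : Type*} (s : Finset ι) (f : ι → ℝ → ℝ) (hf : ∀ i ∈ s, Good (f i)) :
    Good (fun x => ∑ i ∈ s, f i x) := continuousOn_finsetSum s hf

lemma mu_add {b d : ℕ} (h : Ok b d) (k : ℤ) {f g : ℝ → ℝ} (hf : Good f) (hg : Good g) :
    mu b d k (fun x => f x + g x) = mu b d k f + mu b d k g := by
  have := (h.sum k hf).add (h.sum k hg)
  simp only [← A_add] at this
  exact this.tsum_eq

lemma mu_smul {b d : ℕ} (k : ℤ) (r : ℝ) (f : ℝ → ℝ) :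
    mu b d k (fun x => r * f x) = r * mu b d k f := by
  unfold mu
  simp only [A_smul, tsum_mul_left]

lemma mu_congr {b d : ℕ} (k : ℤ) {f g : ℝ → ℝ} (h : ∀ x ∈ Set.Icc (0 : ℝ) 1, f x = g x) :
    mu b d k f = mu b d k g := by
  unfold mu
  exact tsum_congr (fun l => A_congr b d l k f g h)

lemma mu_rec {b d : ℕ} (h : Ok b d) (k : ℤ) {f : ℝ → ℝ} (hf : Good f) :
    mu b d k f = (if k = 0 then f 0 else 0) + (1 / (b : ℝ)) *
      (∑ a ∈ Finset.range b, mu b d k (fun x => f (ph b a x))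
      + (mu b d (k - 1) (fun x => f (ph b d x)) - mu b d k (fun x => f (ph b d x)))) := by
  have h1 : HasSum (fun l => A b d (l + 1) k f) ((1 / (b : ℝ)) *
      (∑ a ∈ Finset.range b, mu b d k (fun x => f (ph b a x))
      + (mu b d (k - 1) (fun x => f (ph b d x)) - mu b d k (fun x => f (ph b d x))))) := by
    simp only [A_succ b d _ k h.hb h.hd h.hdb f]
    apply HasSum.mul_left
    apply HasSum.add
    · exact hasSum_sum (fun a ha => h.sum k (hf.ph b a (Finset.mem_range.1 ha)))
    · exact (h.sum _ (hf.ph b d h.hdb)).sub (h.sum _ (hf.ph b d h.hdb))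
  rw [← h1.tsum_eq, ← A_zero b d k f]
  exact (A_summable b d h.hb h.hd h.hdb k f hf).tsum_eq_zero_add

lemma mu_neg {b d : ℕ} (k : ℤ) (hk : k < 0) (f : ℝ → ℝ) : mu b d k f = 0 := by
  unfold mu
  simp [A_neg b d _ k hk]

lemma mu_const1 {b d : ℕ} (h : Ok b d) (k : ℕ) : mu b d k (fun _ => 1) = b := by
  have hb := h.pos
  induction k with
  | zero =>
    have := mu_rec h 0 (Good.const 1)
    rw [mu_neg (0 - 1) (by norm_num)] at this
    simp only [Finset.sum_const, Finset.card_range, nsmul_eq_mul, if_true] at this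
    field_simp at this
    push_cast
    linarith
  | succ k ih =>
    have := mu_rec h (k + 1 : ℤ) (Good.const 1)
    have e : ((k : ℤ) + 1 - 1) = k := by ring
    have e2 : ¬ ((k : ℤ) + 1 = 0) := by omega
    rw [e, ih, if_neg e2] at this
    simp only [Finset.sum_const, Finset.card_range, nsmul_eq_mul] at this
    field_simp at this
    push_cast
    linarith

lemma mu_const {b d : ℕ} (h : Ok b d) (k : ℕ) (r : ℝ) : mu b d k (fun _ => r) = r * b := by
  have := mu_smul (b := b) (d := d) k r (fun _ => 1)
  rw [mu_const1 h] at this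
  simpa using this

lemma mu_abs_le {b d : ℕ} (h : Ok b d) (k : ℕ) {f : ℝ → ℝ} {M : ℝ}
    (hM : ∀ x ∈ Set.Icc (0 : ℝ) 1, |f x| ≤ M) : |mu b d k f| ≤ M * b := by
  have hs : HasSum (fun l => M * c b d l k) (M * b) := by
    rw [← mu_const1 h k]
    exact (h.sum k (Good.const 1)).mul_left M
  unfold mu
  exact tsum_of_norm_bounded (f := fun l => A b d l k f) hs (fun l => A_abs_le b d l k f M hM)

lemma int_rec {b d : ℕ} (h : Ok b d) {f : ℝ → ℝ} (hf : Good f) :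
    ∫ x in (0 : ℝ)..1, f x = (1 / (b : ℝ)) * ∑ a ∈ Finset.range b,
      ∫ x in (0 : ℝ)..1, f (ph b a x) := by
  have hb := h.pos
  have h1 : ∀ a ∈ Finset.range b, ∫ x in (0 : ℝ)..1, f (ph b a x)
      = b * ∫ x in ((a : ℕ) : ℝ) / b..((a + 1 : ℕ) : ℝ) / b, f x := by
    intro a _
    have := intervalIntegral.integral_comp_add_div (a := 0) (b := 1) f hb.ne' ((a : ℝ) / b)
    simp only [smul_eq_mul] at this
    have e : ∀ x, ph b a x = (a : ℝ) / b + x / b := by intro x; unfold ph; ring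
    simp only [e]
    rw [this]
    congr 2
    · ring
    · push_cast; ring
  rw [Finset.sum_congr rfl h1, ← Finset.mul_sum,
    intervalIntegral.sum_integral_adjacent_intervals (a := fun a : ℕ => (a : ℝ) / b)]
  · have : (b : ℝ) / b = 1 := div_self hb.ne'
    simp only [this, Nat.cast_zero, zero_div]
    field_simp
  · intro a ha
    apply hf.int.mono_set
    have ha' : (a : ℝ) + 1 ≤ b := by exact_mod_cast ha
    rw [Set.uIcc_of_le zero_le_one, Set.uIcc_of_le]
    · apply Set.Icc_subset_Icc
      · positivity
      · apply div_le_one_of_le₀ _ hb.le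
        push_cast; exact ha'
    · apply div_le_div_of_nonneg_right _ hb.le
      push_cast; linarith

lemma nu_add {b d : ℕ} (h : Ok b d) (k : ℤ) {f g : ℝ → ℝ} (hf : Good f) (hg : Good g) :
    nu b d k (fun x => f x + g x) = nu b d k f + nu b d k g := by
  unfold nu
  rw [mu_add h k hf hg, intervalIntegral.integral_add hf.int hg.int]; ring

lemma nu_smul {b d : ℕ} (k : ℤ) (r : ℝ) (f : ℝ → ℝ) :
    nu b d k (fun x => r * f x) = r * nu b d k f := by
  unfold nu
  rw [mu_smul, intervalIntegral.integral_const_mul]; ring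

lemma nu_congr {b d : ℕ} (k : ℤ) {f g : ℝ → ℝ} (h : ∀ x ∈ Set.Icc (0 : ℝ) 1, f x = g x) :
    nu b d k f = nu b d k g := by
  unfold nu
  rw [mu_congr k h, intervalIntegral.integral_congr (g := g)]
  rw [Set.uIcc_of_le zero_le_one]; exact h

lemma nu_const {b d : ℕ} (h : Ok b d) (k : ℕ) (r : ℝ) : nu b d k (fun _ => r) = 0 := by
  unfold nu
  rw [mu_const h]; simp; ring

lemma nu_sum {b d : ℕ} (h : Ok b d) (k : ℕ) {ι : Type*} (s : Finset ι) (f : ι → ℝ → ℝ)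
    (hf : ∀ i ∈ s, Good (f i)) :
    nu b d k (fun x => ∑ i ∈ s, f i x) = ∑ i ∈ s, nu b d k (f i) := by
  classical
  induction s using Finset.induction_on with
  | empty => simpa using nu_const h k 0
  | insert a s ha ih =>
    simp only [Finset.sum_insert ha]
    rw [nu_add h k (hf a (by simp)) (Good.sum s f (fun i hi => hf i (by simp [hi]))),
      ih (fun i hi => hf i (by simp [hi]))]

lemma nu_rec {b d : ℕ} (h : Ok b d) (k : ℕ) {f : ℝ → ℝ} (hf : Good f) :
    nu b d (k + 1 : ℕ) f = (1 / (b : ℝ)) *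
      (∑ a ∈ Finset.range b, nu b d (k + 1 : ℕ) (fun x => f (ph b a x))
      + (nu b d k (fun x => f (ph b d x)) - nu b d (k + 1 : ℕ) (fun x => f (ph b d x)))) := by
  have e : (((k + 1 : ℕ) : ℤ) - 1) = k := by push_cast; ring
  have e2 : ¬ (((k + 1 : ℕ) : ℤ) = 0) := by omega
  unfold nu
  rw [mu_rec h _ hf, e, if_neg e2, int_rec h hf, Finset.sum_sub_distrib, ← Finset.mul_sum]
  ring

lemma nu_rec0 {b d : ℕ} (h : Ok b d) {f : ℝ → ℝ} (hf : Good f) :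
    nu b d (0 : ℕ) f = f 0 + (1 / (b : ℝ)) *
      (∑ a ∈ Finset.range b, nu b d (0 : ℕ) (fun x => f (ph b a x))
      - mu b d (0 : ℕ) (fun x => f (ph b d x))) := by
  unfold nu
  rw [mu_rec h _ hf, if_pos (by simp), int_rec h hf, Finset.sum_sub_distrib, ← Finset.mul_sum,
    mu_neg (((0 : ℕ) : ℤ) - 1) (by simp)]
  ring

/-! Lipschitz bounds -/

lemma Lip.good {f : ℝ → ℝ} {K : ℝ} (hf : Lip f K) : Good f := by
  have : LipschitzOnWith (Real.toNNReal K) f (Set.Icc 0 1) := by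
    apply LipschitzOnWith.of_dist_le_mul
    intro x hx y hy
    rw [Real.dist_eq, Real.dist_eq]
    refine (hf x hx y hy).trans ?_
    exact mul_le_mul_of_nonneg_right (Real.le_coe_toNNReal K) (abs_nonneg _)
  exact this.continuousOn

lemma Lip.nonneg {f : ℝ → ℝ} {K : ℝ} (hf : Lip f K) : 0 ≤ K := by
  have := hf 0 (by simp) 1 (by simp)
  simp at this
  exact (abs_nonneg _).trans this

lemma Lip.ph {f : ℝ → ℝ} {K : ℝ} (hf : Lip f K) (b a : ℕ) (ha : a < b) :
    Lip (fun x => f (Irw.ph b a x)) (K / b) := by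
  intro x hx y hy
  have := hf _ (ph_mem b a ha x hx) _ (ph_mem b a ha y hy)
  refine this.trans (le_of_eq ?_)
  have e : Irw.ph b a x - Irw.ph b a y = (x - y) / b := by unfold Irw.ph; ring
  rw [e, abs_div, abs_of_nonneg (show (0 : ℝ) ≤ b by positivity)]; ring

/-- `nu k` is bounded by `C` w.r.t. the Lipschitz seminorm -/
def Bd (b d k : ℕ) (C : ℝ) : Prop := ∀ f K, Lip f K → |nu b d k f| ≤ C * K

lemma Bd_crude {b d : ℕ} (h : Ok b d) (k : ℕ) : Bd b d k (2 * b) := by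
  intro f K hf
  have hb := h.pos
  have e : nu b d k f = nu b d k (fun x => f x + (- f 0)) := by
    rw [nu_add h k hf.good (Good.const _), nu_const h]; ring
  have hM : ∀ x ∈ Set.Icc (0 : ℝ) 1, |f x + (- f 0)| ≤ K := by
    intro x hx
    have := hf x hx 0 (by simp)
    rw [sub_zero, abs_of_nonneg hx.1] at this
    rw [← sub_eq_add_neg]
    exact this.trans (mul_le_of_le_one_right hf.nonneg hx.2)
  rw [e]
  unfold nu
  have h1 := mu_abs_le h k hM
  have h2 : |∫ x in (0 : ℝ)..1, (f x + (- f 0))| ≤ K := by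
    have := intervalIntegral.norm_integral_le_of_norm_le_const (a := 0) (b := 1) (C := K)
      (f := fun x => f x + (- f 0)) (by
        intro x hx
        rw [Set.uIoc_of_le zero_le_one] at hx
        exact hM x ⟨hx.1.le, hx.2⟩)
    simpa using this
  calc _ ≤ |mu b d k fun x => f x + (- f 0)| + |(b : ℝ) * ∫ x in (0 : ℝ)..1, (f x + (- f 0))| :=
        abs_sub _ _
    _ ≤ K * b + b * K := by
        rw [abs_mul, abs_of_pos hb]
        gcongr
    _ = _ := by ring

lemma Bd_step {b d : ℕ} (h : Ok b d) (k : ℕ) {C C' : ℝ} (hC : Bd b d (k + 1) C)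
    (hC' : Bd b d k C') : Bd b d (k + 1) ((1 / b + 1 / (b : ℝ) ^ 2) * C + C' / (b : ℝ) ^ 2) := by
  intro f K hf
  have hb := h.pos
  rw [nu_rec h k hf.good]
  have h1 : |∑ a ∈ Finset.range b, nu b d (k + 1 : ℕ) (fun x => f (ph b a x))| ≤ b * (C * (K / b)) := by
    refine (Finset.abs_sum_le_sum_abs _ _).trans ?_
    refine (Finset.sum_le_card_nsmul _ _ (C * (K / b)) ?_).trans (by simp)
    intro a ha
    exact hC _ _ (hf.ph b a (Finset.mem_range.1 ha))
  have h2 := hC _ _ (hf.ph b d h.hdb)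
  have h3 := hC' _ _ (hf.ph b d h.hdb)
  rw [abs_mul, abs_of_nonneg (show (0 : ℝ) ≤ 1 / b by positivity)]
  calc _ ≤ (1 / (b : ℝ)) * (b * (C * (K / b)) + (C' * (K / b) + C * (K / b))) := by
        apply mul_le_mul_of_nonneg_left _ (by positivity)
        refine (abs_add_le _ _).trans (add_le_add h1 ((abs_sub _ _).trans (add_le_add h3 h2)))
    _ = _ := by field_simp; ring

lemma Bd_step0 {b d : ℕ} (h : Ok b d) {C : ℝ} (hC : Bd b d 0 C) :
    Bd b d 0 ((1 / b + 1 / (b : ℝ) ^ 2) * C + (d + 1) / b) := by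
  intro f K hf
  have hb := h.pos
  have hC0 : 0 ≤ C := by
    have := hC (fun x => x) 1 (by intro x _ y _; simp)
    rw [mul_one] at this
    exact (abs_nonneg _).trans this
  rw [nu_rec0 h hf.good]
  have h1 : |∑ a ∈ Finset.range b, nu b d (0 : ℕ) (fun x => f (ph b a x))| ≤ b * (C * (K / b)) := by
    refine (Finset.abs_sum_le_sum_abs _ _).trans ?_
    refine (Finset.sum_le_card_nsmul _ _ (C * (K / b)) ?_).trans (by simp)
    intro a ha
    exact hC _ _ (hf.ph b a (Finset.mem_range.1 ha))
  have e : mu b d (0 : ℕ) (fun x => f (ph b d x)) = f 0 * b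
      + mu b d (0 : ℕ) (fun x => f (ph b d x) + (- f 0)) := by
    rw [mu_add h _ (hf.good.ph b d h.hdb) (Good.const _), mu_const h]; ring
  have h2 : |mu b d (0 : ℕ) (fun x => f (ph b d x) + (- f 0))| ≤ (K * ((d + 1) / b)) * b := by
    apply mu_abs_le h
    intro x hx
    have hp := ph_mem b d h.hdb x hx
    have := hf _ hp 0 (by simp)
    rw [sub_zero, abs_of_nonneg hp.1] at this
    rw [← sub_eq_add_neg]
    refine this.trans (mul_le_mul_of_nonneg_left ?_ hf.nonneg)
    unfold ph
    have := hx.2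
    gcongr
  rw [e]
  have e2 : f 0 + (1 / (b : ℝ)) *
      (∑ a ∈ Finset.range b, nu b d (0 : ℕ) (fun x => f (ph b a x))
      - (f 0 * b + mu b d (0 : ℕ) (fun x => f (ph b d x) + (- f 0))))
      = (1 / (b : ℝ)) * (∑ a ∈ Finset.range b, nu b d (0 : ℕ) (fun x => f (ph b a x))
      - mu b d (0 : ℕ) (fun x => f (ph b d x) + (- f 0))) := by
    field_simp; ring
  rw [e2, abs_mul, abs_of_nonneg (show (0 : ℝ) ≤ 1 / b by positivity)]
  have hK := hf.nonneg
  calc _ ≤ (1 / (b : ℝ)) * (b * (C * (K / b)) + (K * ((d + 1) / b)) * b) := by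
        apply mul_le_mul_of_nonneg_left _ (by positivity)
        exact (abs_sub _ _).trans (add_le_add h1 h2)
    _ = (1 / b * C + (d + 1) / b) * K := by field_simp
    _ ≤ _ := by
        gcongr
        have : 0 ≤ 1 / (b : ℝ) ^ 2 := by positivity
        linarith

lemma Bd_iter {b d k : ℕ} (h : Ok b d) {r : ℝ} (hr : 0 ≤ r)
    (hs : ∀ C, Bd b d k C → Bd b d k ((1 / b + 1 / (b : ℝ) ^ 2) * C + r)) : Bd b d k (4 * r) := by
  have hb := h.pos
  have hb2 := h.two
  set q : ℝ := 1 / b + 1 / (b : ℝ) ^ 2 with hq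
  have hi : 1 / (b : ℝ) ≤ 1 / 2 := one_div_le_one_div_of_le (by norm_num) hb2
  have hq0 : 0 ≤ q := by positivity
  have hq1 : q ≤ 3 / 4 := by
    have : 1 / (b : ℝ) ^ 2 = (1 / (b : ℝ)) ^ 2 := by rw [div_pow, one_pow]
    have h0 : 0 ≤ 1 / (b : ℝ) := by positivity
    rw [hq, this]; nlinarith
  have hmono : ∀ C C', C ≤ C' → Bd b d k C → Bd b d k C' := by
    intro C C' hCC hB f K hf
    exact (hB f K hf).trans (mul_le_mul_of_nonneg_right hCC hf.nonneg)
  have hn : ∀ n : ℕ, Bd b d k (q ^ n * (2 * b) + 4 * r) := by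
    intro n
    induction n with
    | zero => exact hmono _ _ (by simp; linarith) (Bd_crude h k)
    | succ n ih =>
      refine hmono _ _ ?_ (hs _ ih)
      have : q * (4 * r) ≤ 3 / 4 * (4 * r) := mul_le_mul_of_nonneg_right hq1 (by linarith)
      rw [pow_succ]; nlinarith
  intro f K hf
  have ht : Tendsto (fun n : ℕ => (q ^ n * (2 * b) + 4 * r) * K) atTop
      (nhds ((0 * (2 * b) + 4 * r) * K)) :=
    (((tendsto_pow_atTop_nhds_zero_of_lt_one hq0 (by linarith)).mul_const _).add_const _).mul_const _
  rw [zero_mul, zero_add] at ht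
  exact ge_of_tendsto' ht (fun n => hn n f K hf)

lemma Bd_main {b d : ℕ} (h : Ok b d) (k : ℕ) :
    Bd b d k (4 ^ (k + 1) * (d + 1) / (b : ℝ) ^ (2 * k + 1)) := by
  have hb := h.pos
  induction k with
  | zero =>
    have := Bd_iter (k := 0) h (r := (d + 1) / b) (by positivity) (fun C hC => Bd_step0 h hC)
    convert this using 1
    simp; ring
  | succ k ih =>
    have := Bd_iter (k := k + 1) h (r := (4 ^ (k + 1) * (d + 1) / (b : ℝ) ^ (2 * k + 1)) / b ^ 2)
      (by positivity) (fun C hC => Bd_step h k hC ih)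
    convert this using 1
    field_simp
    ring

end Irw


namespace Irw

noncomputable def g (a x : ℝ) : ℝ := 1 / (a + x)

lemma g_good (a : ℝ) (ha : 0 < a) : Good (g a) := by
  unfold Good g
  apply ContinuousOn.div continuousOn_const (by fun_prop)
  intro x hx; have := hx.1; positivity

noncomputable def F (b d k m : ℕ) : ℝ :=
  if 0 < m ∧ (Nat.digits b m).count d = k then (1 : ℝ) / m else 0

noncomputable def G (b d k l : ℕ) : ℝ :=
  ∑ a ∈ Finset.Ico 1 b, A b d l k (g a) + (A b d l ((k : ℤ) - 1) (g d) - A b d l k (g d))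

lemma F_block {b d : ℕ} (h : Ok b d) (k l a : ℕ) (ha1 : 1 ≤ a) (ha : a < b) :
    ∑ r ∈ Finset.range (b ^ l), F b d k (a * b ^ l + r)
      = A b d l (if a = d then (k : ℤ) - 1 else k) (g a) := by
  have hb := h.pos
  unfold A
  rw [Finset.sum_div]
  apply Finset.sum_congr rfl
  intro r hr
  have hc := cnt_add b d l a r h.hb h.hd ha (Finset.mem_range.1 hr)
  have hpos : 0 < a * b ^ l + r := by
    have : 0 < b ^ l := Nat.pow_pos (by have := h.hb; omega)
    have := Nat.mul_pos ha1 this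
    omega
  have e1 : (1 : ℝ) / ((a * b ^ l + r : ℕ) : ℝ) = g a ((r : ℝ) / (b : ℝ) ^ l) / (b : ℝ) ^ l := by
    unfold g
    push_cast
    have : (0 : ℝ) < a := by exact_mod_cast ha1
    field_simp
  have e2 : (0 < a * b ^ l + r ∧ (Nat.digits b (a * b ^ l + r)).count d = k)
      ↔ cnt b d r = (if a = d then (k : ℤ) - 1 else k) := by
    have e3 : (Nat.digits b (a * b ^ l + r)).count d = k ↔ cnt b d (a * b ^ l + r) = k := by
      unfold cnt; exact_mod_cast Iff.rfl
    rw [e3, hc]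
    split_ifs <;> constructor <;> intro h' <;> first | omega | exact ⟨hpos, by omega⟩
  unfold F
  rw [e1]
  by_cases h' : cnt b d r = (if a = d then (k : ℤ) - 1 else k)
  · rw [if_pos (e2.2 h'), if_pos h']
  · rw [if_neg (fun hh => h' (e2.1 hh)), if_neg h', zero_div]

lemma F_partial {b d : ℕ} (h : Ok b d) (k L : ℕ) :
    ∑ m ∈ Finset.range (b ^ L), F b d k m = ∑ l ∈ Finset.range L, G b d k l := by
  induction L with
  | zero => simp [F]
  | succ L ih =>
    rw [Finset.sum_range_succ, ← ih, pow_succ', sum_range_mul', Finset.range_eq_Ico,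
      Finset.sum_eq_sum_Ico_succ_bot (by have := h.hb; omega)]
    simp only [zero_mul, zero_add, Finset.range_eq_Ico]
    congr 1
    have h1 : ∀ a ∈ Finset.Ico 1 b, ∑ r ∈ Finset.Ico 0 (b ^ L), F b d k (a * b ^ L + r)
        = A b d L k (g a) + if a = d then (A b d L ((k : ℤ) - 1) (g d) - A b d L k (g d)) else 0 := by
      intro a ha
      rw [Finset.mem_Ico] at ha
      rw [← Finset.range_eq_Ico, F_block h k L a ha.1 ha.2]
      by_cases hh : a = d
      · subst hh; simp
      · simp [hh]
    rw [Finset.sum_congr rfl h1, Finset.sum_add_distrib, Finset.sum_ite_eq']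
    simp [h.hdb, h.hd, G]

lemma irwin_mu {b d : ℕ} (h : Ok b d) (k : ℕ) :
    irwinSum b d k = ∑ a ∈ Finset.Ico 1 b, mu b d k (g a)
      + (mu b d ((k : ℤ) - 1) (g d) - mu b d k (g d)) := by
  have hdp : (0 : ℝ) < d := by exact_mod_cast h.hd
  have h1 : HasSum (G b d k) (∑ a ∈ Finset.Ico 1 b, mu b d k (g a)
      + (mu b d ((k : ℤ) - 1) (g d) - mu b d k (g d))) := by
    unfold G
    apply HasSum.add
    · apply hasSum_sum
      intro a ha
      rw [Finset.mem_Ico] at ha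
      exact h.sum k (g_good a (by exact_mod_cast ha.1))
    · exact (h.sum _ (g_good d hdp)).sub (h.sum _ (g_good d hdp))
  have h2 := h1.tendsto_sum_nat
  simp only [← F_partial h k] at h2
  have hF : ∀ m, 0 ≤ F b d k m := by
    intro m; unfold F; split_ifs <;> positivity
  have hmono : Monotone (fun n => ∑ m ∈ Finset.range n, F b d k m) := by
    intro n n' hn
    exact Finset.sum_le_sum_of_subset_of_nonneg (Finset.range_mono hn) (fun i _ _ => hF i)
  have h3 := (tendsto_iff_tendsto_subseq_of_monotone hmono
    (tendsto_pow_atTop_atTop_of_one_lt (r := b) (by have := h.hb; omega))).2 h2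
  exact ((hasSum_iff_tendsto_nat_of_nonneg hF _).2 h3).tsum_eq

lemma int_g (a : ℕ) (ha : 1 ≤ a) :
    ∫ x in (0 : ℝ)..1, g a x = Real.log ((a + 1 : ℕ) : ℝ) - Real.log (a : ℕ) := by
  have ha' : (0 : ℝ) < a := by exact_mod_cast ha
  unfold g
  have := intervalIntegral.integral_comp_add_left (a := 0) (b := 1) (fun x : ℝ => 1 / x) (a : ℝ)
  rw [this, integral_one_div_of_pos (by linarith) (by linarith),
    Real.log_div (by linarith) (by linarith)]
  push_cast; simp

lemma irwin_nu {b d : ℕ} (h : Ok b d) (k : ℕ) :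
    irwinSum b d (k + 1) - b * Real.log b = ∑ a ∈ Finset.Ico 1 b, nu b d (k + 1 : ℕ) (g a)
      + (nu b d k (g d) - nu b d (k + 1 : ℕ) (g d)) := by
  rw [irwin_mu h]
  have e : (((k + 1 : ℕ) : ℤ) - 1) = k := by push_cast; ring
  have h1 : ∑ a ∈ Finset.Ico 1 b, ∫ x in (0 : ℝ)..1, g a x = Real.log b := by
    rw [Finset.sum_congr rfl (fun a ha => int_g a (Finset.mem_Ico.1 ha).1),
      Finset.sum_Ico_sub (fun n : ℕ => Real.log (n : ℝ)) (by have := h.hb; omega)]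
    simp
  unfold nu
  rw [e, Finset.sum_sub_distrib, ← Finset.mul_sum, h1]
  ring

end Irw


namespace Irw

lemma taylor_id (a y : ℝ) (ha : 0 < a) (hy : 0 ≤ y) (J : ℕ) :
    1 / (a + y) = ∑ j ∈ Finset.range J, (-1) ^ j / a ^ (j + 1) * y ^ j
      + (-1) ^ J * (y ^ J * (1 / (a ^ J * (a + y)))) := by
  induction J with
  | zero => simp
  | succ J ih =>
    rw [Finset.sum_range_succ, ih, add_assoc]
    congr 1
    have : 0 < a + y := by linarith
    field_simp
    ring

lemma pow_diff (J : ℕ) (M x y : ℝ) (hx : 0 ≤ x) (hy : 0 ≤ y) (hxM : x ≤ M) (hyM : y ≤ M) :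
    |x ^ J - y ^ J| ≤ J * M ^ (J - 1) * |x - y| := by
  refine (abs_pow_sub_pow_le x y J).trans ?_
  rw [abs_of_nonneg hx, abs_of_nonneg hy]
  have : max x y ^ (J - 1) ≤ M ^ (J - 1) :=
    pow_le_pow_left₀ (le_max_of_le_left hx) (max_le hxM hyM) _
  calc |x - y| * J * max x y ^ (J - 1) ≤ |x - y| * J * M ^ (J - 1) := by gcongr
    _ = _ := by ring

lemma Lip_rem (a c t : ℝ) (ha : 1 ≤ a) (hc : 0 ≤ c) (ht : 0 ≤ t) (ht1 : t ≤ 1) (J : ℕ) :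
    Lip (fun x => ((c + x) * t) ^ J * (1 / (a ^ J * (a + (c + x) * t))))
      ((J + 1) * ((c + 1) ^ J * t ^ J / a ^ (J + 1))) := by
  intro x hx y hy
  have ha0 : 0 < a := by linarith
  have hx0 := hx.1
  have hy0 := hy.1
  have hx1 := hx.2
  have hy1 := hy.2
  have key : ∀ z : ℝ, 0 ≤ z → z ≤ 1 → 0 ≤ (c + z) * t ∧ (c + z) * t ≤ (c + 1) * t := by
    intro z h0 h1
    exact ⟨by positivity, by gcongr⟩
  obtain ⟨u0, u1⟩ := key x hx0 hx1
  obtain ⟨v0, v1⟩ := key y hy0 hy1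
  have huv : |(c + x) * t - (c + y) * t| = t * |x - y| := by
    rw [show (c + x) * t - (c + y) * t = t * (x - y) by ring, abs_mul, abs_of_nonneg ht]
  simp only
  set u := (c + x) * t
  set v := (c + y) * t
  have hp : |u ^ J - v ^ J| ≤ J * ((c + 1) ^ J * t ^ J) * |x - y| := by
    refine (pow_diff J ((c + 1) * t) u v u0 v0 u1 v1).trans ?_
    rw [huv]
    rcases Nat.eq_zero_or_pos J with h | h
    · subst h; simp
    · obtain ⟨j, rfl⟩ : ∃ j, J = j + 1 := ⟨J - 1, by omega⟩
      simp only [Nat.add_sub_cancel]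
      have : (c + 1) ^ j ≤ (c + 1) ^ (j + 1) := pow_le_pow_right₀ (by linarith) (by omega)
      calc ((j + 1 : ℕ) : ℝ) * ((c + 1) * t) ^ j * (t * |x - y|)
          = ((j + 1 : ℕ) : ℝ) * ((c + 1) ^ j * t ^ (j + 1)) * |x - y| := by rw [mul_pow]; ring
        _ ≤ _ := by gcongr
  have hw1 : 1 / (a ^ J * (a + u)) ≤ 1 / a ^ (J + 1) := by
    apply one_div_le_one_div_of_le (by positivity)
    rw [pow_succ]; gcongr; linarith
  have hw0 : 0 ≤ 1 / (a ^ J * (a + u)) := by positivity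
  have hw : |1 / (a ^ J * (a + u)) - 1 / (a ^ J * (a + v))| ≤ 1 / a ^ (J + 1) * |x - y| := by
    have e : 1 / (a ^ J * (a + u)) - 1 / (a ^ J * (a + v))
        = (v - u) * (1 / (a ^ J * (a + u) * (a + v))) := by
      have : 0 < a + u := by linarith
      have : 0 < a + v := by linarith
      field_simp
      ring
    rw [e, abs_mul, abs_sub_comm v u, huv,
      abs_of_nonneg (show 0 ≤ 1 / (a ^ J * (a + u) * (a + v)) by positivity)]
    have : 1 / (a ^ J * (a + u) * (a + v)) ≤ 1 / a ^ (J + 1) := by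
      apply one_div_le_one_div_of_le (by positivity)
      calc a ^ (J + 1) = a ^ J * a * 1 := by ring
        _ ≤ _ := by gcongr <;> linarith
    calc t * |x - y| * (1 / (a ^ J * (a + u) * (a + v))) ≤ 1 * |x - y| * (1 / a ^ (J + 1)) := by
          gcongr
      _ = _ := by ring
  have hv : v ^ J ≤ (c + 1) ^ J * t ^ J := by
    rw [← mul_pow]; gcongr
  have hv' : 0 ≤ v ^ J := by positivity
  calc |u ^ J * (1 / (a ^ J * (a + u))) - v ^ J * (1 / (a ^ J * (a + v)))|
      = |(u ^ J - v ^ J) * (1 / (a ^ J * (a + u)))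
          + v ^ J * (1 / (a ^ J * (a + u)) - 1 / (a ^ J * (a + v)))| := by congr 1; ring
    _ ≤ |u ^ J - v ^ J| * (1 / (a ^ J * (a + u)))
          + v ^ J * |1 / (a ^ J * (a + u)) - 1 / (a ^ J * (a + v))| := by
        refine (abs_add_le _ _).trans ?_
        rw [abs_mul, abs_mul, abs_of_nonneg hw0, abs_of_nonneg hv']
    _ ≤ (J * ((c + 1) ^ J * t ^ J) * |x - y|) * (1 / a ^ (J + 1))
          + ((c + 1) ^ J * t ^ J) * (1 / a ^ (J + 1) * |x - y|) := by
        gcongr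
    _ = _ := by ring

/-- shifted moments -/
noncomputable def W (b d k j : ℕ) (c : ℝ) : ℝ := nu b d k (fun x => (c + x) ^ j)

noncomputable def vm (b d k j : ℕ) : ℝ := nu b d k (fun x => x ^ j)

lemma good_pow (c : ℝ) (j : ℕ) : Good (fun x => (c + x) ^ j) := by
  unfold Good; fun_prop

lemma good_xpow (j : ℕ) : Good (fun x => x ^ j) := by
  unfold Good; fun_prop

lemma core {b d : ℕ} (h : Ok b d) (k : ℕ) (N : ℝ) (hN : Bd b d k N) (a c t : ℝ) (ha : 1 ≤ a)
    (hc : 0 ≤ c) (ht : 0 ≤ t) (ht1 : t ≤ 1) (J : ℕ) :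
    |nu b d k (fun x => 1 / (a + (c + x) * t))
      - ∑ j ∈ Finset.range J, (-1) ^ j / a ^ (j + 1) * t ^ j * W b d k j c|
      ≤ N * ((J + 1) * ((c + 1) ^ J * t ^ J / a ^ (J + 1))) := by
  have hL := Lip_rem a c t ha hc ht ht1 J
  have e : nu b d k (fun x => 1 / (a + (c + x) * t))
      = ∑ j ∈ Finset.range J, (-1) ^ j / a ^ (j + 1) * t ^ j * W b d k j c
        + (-1) ^ J * nu b d k (fun x => ((c + x) * t) ^ J * (1 / (a ^ J * (a + (c + x) * t)))) := by
    rw [← nu_smul]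
    have e1 : ∀ j ∈ Finset.range J, (-1) ^ j / a ^ (j + 1) * t ^ j * W b d k j c
        = nu b d k (fun x => (-1) ^ j / a ^ (j + 1) * t ^ j * (c + x) ^ j) := by
      intro j _; rw [nu_smul]; rfl
    rw [Finset.sum_congr rfl e1, ← nu_sum h k (Finset.range J)
      (fun j x => (-1) ^ j / a ^ (j + 1) * t ^ j * (c + x) ^ j)
      (fun j _ => (good_pow c j).smul _), ← nu_add h k
      (Good.sum _ _ (fun j _ => (good_pow c j).smul _)) (hL.good.smul _)]
    apply nu_congr
    intro x hx
    have := hx.1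
    rw [taylor_id a ((c + x) * t) (by linarith) (by positivity) J]
    congr 1
    apply Finset.sum_congr rfl
    intro j _
    rw [mul_pow]; ring
  rw [e, add_sub_cancel_left, abs_mul, abs_pow, abs_neg, abs_one, one_pow, one_mul]
  exact hN _ _ hL

/-- `Σ_{c<b} 1/(ab+c)^i` -/
noncomputable def s (b i : ℕ) (a : ℝ) : ℝ := ∑ c ∈ Finset.range b, 1 / (a * b + c) ^ i

noncomputable def qf (b d : ℕ) (a x : ℝ) : ℝ := 1 / (a + ((d : ℝ) + x) * (b : ℝ)⁻¹)

lemma master {b d : ℕ} (h : Ok b d) (k : ℕ) (a : ℝ) (ha : 1 ≤ a) :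
    nu b d (k + 1 : ℕ) (g a) = ∑ c ∈ Finset.range b, nu b d (k + 1 : ℕ) (g (a * b + c))
      + (b : ℝ)⁻¹ * (nu b d k (qf b d a) - nu b d (k + 1 : ℕ) (qf b d a)) := by
  have hb := h.pos
  rw [nu_rec h k (g_good a (by linarith))]
  have e1 : ∀ c ∈ Finset.range b, nu b d (k + 1 : ℕ) (fun x => g a (ph b c x))
      = b * nu b d (k + 1 : ℕ) (g (a * b + c)) := by
    intro c _
    rw [← nu_smul]
    apply nu_congr
    intro x hx
    have := hx.1
    have h1 : 0 < a * b + c + x := by positivity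
    unfold g ph
    field_simp
    ring
  have e2 : (fun x => g a (ph b d x)) = qf b d a := by
    funext x; unfold g ph qf; rw [div_eq_mul_inv (_ + x)]
  rw [Finset.sum_congr rfl e1, ← Finset.mul_sum, e2]
  field_simp

lemma W_zero (b d k j : ℕ) : W b d k j 0 = vm b d k j := by
  unfold W vm; simp

lemma Tpart {b d : ℕ} (h : Ok b d) (k : ℕ) (N : ℝ) (hN : Bd b d k N) (hN0 : 0 ≤ N)
    (a : ℝ) (ha : 1 ≤ a) (J : ℕ) :
    |∑ c ∈ Finset.range b, nu b d k (g (a * b + c))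
      - ∑ j ∈ Finset.range J, (-1) ^ j * vm b d k j * s b (j + 1) a|
      ≤ N * (J + 1) * ((b : ℝ)⁻¹ ^ J / a ^ (J + 1)) := by
  have hb := h.pos
  have e : ∑ j ∈ Finset.range J, (-1) ^ j * vm b d k j * s b (j + 1) a
      = ∑ c ∈ Finset.range b, ∑ j ∈ Finset.range J,
        (-1) ^ j / (a * b + (c : ℝ)) ^ (j + 1) * 1 ^ j * W b d k j 0 := by
    rw [Finset.sum_comm]
    apply Finset.sum_congr rfl
    intro j _
    unfold s
    rw [Finset.mul_sum]
    apply Finset.sum_congr rfl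
    intro c _
    rw [W_zero]; ring
  rw [e, ← Finset.sum_sub_distrib]
  refine (Finset.abs_sum_le_sum_abs _ _).trans ?_
  refine (Finset.sum_le_card_nsmul _ _ (N * ((J + 1) * (1 / (a * b) ^ (J + 1)))) ?_).trans
    (le_of_eq ?_)
  · intro c _
    have h2 := h.two
    have hab : 1 ≤ a * b := by nlinarith
    have h1 : 1 ≤ a * b + c := by
      have : (0 : ℝ) ≤ c := by positivity
      linarith
    have := core h k N hN (a * b + c) 0 1 h1 le_rfl zero_le_one le_rfl J
    have e3 : (fun x => 1 / (a * b + (c : ℝ) + (0 + x) * 1)) = g (a * b + c) := by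
      funext x; unfold g; simp
    rw [e3] at this
    refine this.trans ?_
    have h4 : 1 / (a * b + (c : ℝ)) ^ (J + 1) ≤ 1 / (a * b) ^ (J + 1) := by
      apply one_div_le_one_div_of_le (by positivity)
      gcongr
      have : (0 : ℝ) ≤ c := by positivity
      linarith
    simp only [zero_add, one_pow, mul_one]
    gcongr
  · simp only [Finset.card_range, nsmul_eq_mul]
    rw [inv_pow]
    field_simp
    rw [mul_pow]; ring

lemma Qpart {b d : ℕ} (h : Ok b d) (k : ℕ) (N : ℝ) (hN : Bd b d k N)
    (a : ℝ) (ha : 1 ≤ a) (J : ℕ) :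
    |nu b d k (qf b d a)
      - ∑ j ∈ Finset.range J, (-1) ^ j / a ^ (j + 1) * (b : ℝ)⁻¹ ^ j * W b d k j d|
      ≤ N * ((J + 1) * ((d + 1 : ℝ) ^ J * (b : ℝ)⁻¹ ^ J / a ^ (J + 1))) :=
  core h k N hN a d (b : ℝ)⁻¹ ha (by positivity) (by have := h.pos; positivity)
    (inv_le_one_of_one_le₀ (by have := h.two; linarith)) J

lemma vm0 {b d : ℕ} (h : Ok b d) (k : ℕ) : vm b d k 0 = 0 := by
  unfold vm; simpa using nu_const h k 1

lemma W0 {b d : ℕ} (h : Ok b d) (k : ℕ) (c : ℝ) : W b d k 0 c = 0 := by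
  unfold W; simpa using nu_const h k 1

lemma W_gen {b d : ℕ} (h : Ok b d) (k : ℕ) (c : ℝ) (j : ℕ) :
    W b d k j c = ∑ i ∈ Finset.range (j + 1), (c ^ (j - i) * (j.choose i : ℝ)) * vm b d k i := by
  unfold W vm
  have e1 : ∀ i ∈ Finset.range (j + 1),
      (c ^ (j - i) * (j.choose i : ℝ)) * nu b d k (fun x => x ^ i)
        = nu b d k (fun x => (c ^ (j - i) * (j.choose i : ℝ)) * x ^ i) := by
    intro i _; rw [nu_smul]
  rw [Finset.sum_congr rfl e1, ← nu_sum h k (Finset.range (j + 1))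
      (fun i x => (c ^ (j - i) * (j.choose i : ℝ)) * x ^ i) (fun i _ => (good_xpow i).smul _)]
  congr 1
  funext x
  rw [add_comm, add_pow]
  apply Finset.sum_congr rfl
  intro i _; ring

lemma W1 {b d : ℕ} (h : Ok b d) (k : ℕ) (c : ℝ) : W b d k 1 c = vm b d k 1 := by
  rw [W_gen h]; simp [Finset.sum_range_succ, vm0 h]

lemma W2 {b d : ℕ} (h : Ok b d) (k : ℕ) (c : ℝ) :
    W b d k 2 c = 2 * c * vm b d k 1 + vm b d k 2 := by
  rw [W_gen h]; norm_num [Finset.sum_range_succ, vm0 h, Nat.choose]; left; ring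

lemma W3 {b d : ℕ} (h : Ok b d) (k : ℕ) (c : ℝ) :
    W b d k 3 c = 3 * c ^ 2 * vm b d k 1 + 3 * c * vm b d k 2 + vm b d k 3 := by
  rw [W_gen h]; norm_num [Finset.sum_range_succ, vm0 h, Nat.choose]; ring

lemma W4 {b d : ℕ} (h : Ok b d) (k : ℕ) (c : ℝ) :
    W b d k 4 c = 4 * c ^ 3 * vm b d k 1 + 6 * c ^ 2 * vm b d k 2 + 4 * c * vm b d k 3
      + vm b d k 4 := by
  rw [W_gen h]; norm_num [Finset.sum_range_succ, vm0 h, Nat.choose]; ring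

lemma vm_rec {b d : ℕ} (h : Ok b d) (k j : ℕ) :
    vm b d (k + 1) j = (b : ℝ)⁻¹ ^ (j + 1) * (∑ c ∈ Finset.range b, W b d (k + 1) j c
      + (W b d k j d - W b d (k + 1) j d)) := by
  have hb := h.pos
  have e : ∀ (k' : ℕ) (a : ℕ), nu b d k' (fun x => (ph b a x) ^ j) = (b : ℝ)⁻¹ ^ j * W b d k' j a := by
    intro k' a
    unfold W
    rw [← nu_smul]
    congr 1
    funext x
    unfold ph
    rw [div_eq_mul_inv, mul_pow]; ring
  unfold vm
  rw [nu_rec h k (good_xpow j)]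
  simp only [e]
  rw [← Finset.mul_sum, pow_succ]
  ring

lemma vm_rec0 {b d : ℕ} (h : Ok b d) (j : ℕ) (hj : j ≠ 0) :
    vm b d 0 j = (b : ℝ)⁻¹ ^ (j + 1) * (∑ c ∈ Finset.range b, W b d 0 j c
      - (W b d 0 j d + b * ∫ x in (0 : ℝ)..1, ((d : ℝ) + x) ^ j)) := by
  have hb := h.pos
  have e : ∀ (a : ℕ), nu b d (0 : ℕ) (fun x => (ph b a x) ^ j) = (b : ℝ)⁻¹ ^ j * W b d 0 j a := by
    intro a
    unfold W
    rw [← nu_smul]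
    congr 1
    funext x
    unfold ph
    rw [div_eq_mul_inv, mul_pow]; ring
  have e' : mu b d (0 : ℕ) (fun x => (ph b d x) ^ j) = (b : ℝ)⁻¹ ^ j *
      (W b d 0 j d + b * ∫ x in (0 : ℝ)..1, ((d : ℝ) + x) ^ j) := by
    unfold W nu
    rw [sub_add_cancel, ← mu_smul]
    congr 1
    funext x
    unfold ph
    rw [div_eq_mul_inv, mul_pow]; ring
  unfold vm
  rw [nu_rec0 h (good_xpow j)]
  simp only [e, e', zero_pow hj]
  rw [← Finset.mul_sum, pow_succ]
  ring

lemma vm_bound {b d : ℕ} (h : Ok b d) (k j : ℕ) :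
    |vm b d k j| ≤ (4 ^ (k + 1) * (d + 1) / (b : ℝ) ^ (2 * k + 1)) * j := by
  apply Bd_main h k
  intro x hx y hy
  have := pow_diff j 1 x y hx.1 hy.1 hx.2 hy.2
  simpa using this

lemma p1 (b : ℕ) : ∑ c ∈ Finset.range b, (c : ℝ) = b * (b - 1) / 2 := by
  induction b with
  | zero => simp
  | succ b ih => rw [Finset.sum_range_succ, ih]; push_cast; ring

lemma p2 (b : ℕ) : ∑ c ∈ Finset.range b, (c : ℝ) ^ 2 = b * (b - 1) * (2 * b - 1) / 6 := by
  induction b with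
  | zero => simp
  | succ b ih => rw [Finset.sum_range_succ, ih]; push_cast; ring

lemma p3 (b : ℕ) : ∑ c ∈ Finset.range b, (c : ℝ) ^ 3 = (b * (b - 1) / 2) ^ 2 := by
  induction b with
  | zero => simp
  | succ b ih => rw [Finset.sum_range_succ, ih]; push_cast; ring

lemma E01 {b d : ℕ} (h : Ok b d) (x : ℝ) (hx : x = (b : ℝ)⁻¹) :
    vm b d 0 1 * (1 - x + x ^ 2) = - (d + 1 / 2) * x := by
  have hb := h.pos
  have hbx : (b : ℝ) * x = 1 := by rw [hx]; field_simp
  have hi : ∫ y in (0 : ℝ)..1, ((d : ℝ) + y) ^ 1 = d + 1 / 2 := by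
    simp only [pow_one]
    rw [intervalIntegral.integral_add (by simp) (by simp)]; simp
  have := vm_rec0 h 1 one_ne_zero
  simp only [W1 h, hi, Finset.sum_const, Finset.card_range, nsmul_eq_mul, ← hx] at this
  linear_combination this + (x * vm b d 0 1 - (d + 1 / 2) * x) * hbx

lemma Ek1 {b d : ℕ} (h : Ok b d) (k : ℕ) (x : ℝ) (hx : x = (b : ℝ)⁻¹) :
    vm b d (k + 1) 1 * (1 - x + x ^ 2) = x ^ 2 * vm b d k 1 := by
  have hb := h.pos
  have hbx : (b : ℝ) * x = 1 := by rw [hx]; field_simp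
  have := vm_rec h k 1
  simp only [W1 h, Finset.sum_const, Finset.card_range, nsmul_eq_mul, ← hx] at this
  linear_combination this + (x * vm b d (k + 1) 1) * hbx

lemma E02 {b d : ℕ} (h : Ok b d) (x : ℝ) (hx : x = (b : ℝ)⁻¹) :
    vm b d 0 2 = (x - x ^ 2) * vm b d 0 1 + x ^ 2 * vm b d 0 2
      - x ^ 3 * (2 * d * vm b d 0 1 + vm b d 0 2) - x ^ 2 * (d ^ 2 + d + 1 / 3) := by
  have hb := h.pos
  have hi : ∫ y in (0 : ℝ)..1, ((d : ℝ) + y) ^ 2 = d ^ 2 + d + 1 / 3 := by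
    have := intervalIntegral.integral_comp_add_left (a := 0) (b := 1) (fun x : ℝ => x ^ 2) (d : ℝ)
    rw [this, integral_pow]; push_cast; ring
  have := vm_rec0 h 2 two_ne_zero
  simp only [W2 h, hi, Finset.sum_add_distrib, ← Finset.sum_mul, ← Finset.mul_sum, p1,
    Finset.sum_const, Finset.card_range, nsmul_eq_mul] at this
  refine this.trans ?_
  rw [hx]
  simp only [inv_pow]
  field_simp
  ring

lemma Ek2 {b d : ℕ} (h : Ok b d) (k : ℕ) (x : ℝ) (hx : x = (b : ℝ)⁻¹) :
    vm b d (k + 1) 2 = (x - x ^ 2) * vm b d (k + 1) 1 + x ^ 2 * vm b d (k + 1) 2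
      + x ^ 3 * (2 * d * vm b d k 1 + vm b d k 2 - 2 * d * vm b d (k + 1) 1
        - vm b d (k + 1) 2) := by
  have hb := h.pos
  have := vm_rec h k 2
  simp only [W2 h, Finset.sum_add_distrib, ← Finset.sum_mul, ← Finset.mul_sum, p1,
    Finset.sum_const, Finset.card_range, nsmul_eq_mul] at this
  refine this.trans ?_
  rw [hx]
  simp only [inv_pow]
  field_simp
  ring

lemma Ek3 {b d : ℕ} (h : Ok b d) (k : ℕ) (x : ℝ) (hx : x = (b : ℝ)⁻¹) :
    vm b d (k + 1) 3 = (x - 3 / 2 * x ^ 2 + x ^ 3 / 2) * vm b d (k + 1) 1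
      + 3 / 2 * (x ^ 2 - x ^ 3) * vm b d (k + 1) 2 + x ^ 3 * vm b d (k + 1) 3
      + x ^ 4 * (W b d k 3 d - W b d (k + 1) 3 d) := by
  have hb := h.pos
  have := vm_rec h k 3
  have e : ∑ c ∈ Finset.range b, W b d (k + 1) 3 c = b * (b - 1) * (2 * b - 1) / 2 * vm b d (k + 1) 1
      + 3 * (b * (b - 1) / 2) * vm b d (k + 1) 2 + b * vm b d (k + 1) 3 := by
    simp only [W3 h, Finset.sum_add_distrib, ← Finset.sum_mul, ← Finset.mul_sum, p1, p2,
      Finset.sum_const, Finset.card_range, nsmul_eq_mul]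
    ring
  rw [e] at this
  refine this.trans ?_
  rw [hx]
  simp only [inv_pow]
  field_simp
  ring

lemma Ek4 {b d : ℕ} (h : Ok b d) (k : ℕ) (x : ℝ) (hx : x = (b : ℝ)⁻¹) :
    vm b d (k + 1) 4 = (x - 2 * x ^ 2 + x ^ 3) * vm b d (k + 1) 1
      + (2 * x ^ 2 - 3 * x ^ 3 + x ^ 4) * vm b d (k + 1) 2 + 2 * (x ^ 3 - x ^ 4) * vm b d (k + 1) 3
      + x ^ 4 * vm b d (k + 1) 4
      + x ^ 5 * (W b d k 4 d - W b d (k + 1) 4 d) := by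
  have hb := h.pos
  have := vm_rec h k 4
  have e : ∑ c ∈ Finset.range b, W b d (k + 1) 4 c = 4 * (b * (b - 1) / 2) ^ 2 * vm b d (k + 1) 1
      + b * (b - 1) * (2 * b - 1) * vm b d (k + 1) 2
      + 4 * (b * (b - 1) / 2) * vm b d (k + 1) 3 + b * vm b d (k + 1) 4 := by
    simp only [W4 h, Finset.sum_add_distrib, ← Finset.sum_mul, ← Finset.mul_sum, p1, p2, p3,
      Finset.sum_const, Finset.card_range, nsmul_eq_mul]
    ring
  rw [e] at this
  refine this.trans ?_
  rw [hx]
  simp only [inv_pow]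
  field_simp
  ring

end Irw


namespace Irw

noncomputable def X (b : ℕ) : ℝ := (b : ℝ)⁻¹

def Oh (n : ℕ) (f : ℕ → ℝ) : Prop := f =O[atTop] fun b : ℕ => X b ^ n

lemma X_ev : ∀ᶠ b : ℕ in atTop, 0 < X b ∧ X b ≤ 1 := by
  filter_upwards [eventually_ge_atTop 1] with b hb
  have : (1 : ℝ) ≤ b := by exact_mod_cast hb
  unfold X
  exact ⟨by positivity, inv_le_one_of_one_le₀ this⟩

lemma Oh.mono {n m : ℕ} {f : ℕ → ℝ} (hf : Oh n f) (h : m ≤ n) : Oh m f := by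
  refine hf.trans ?_
  apply IsBigO.of_bound 1
  filter_upwards [X_ev] with b hb
  rw [one_mul, Real.norm_of_nonneg (pow_nonneg hb.1.le _), Real.norm_of_nonneg (pow_nonneg hb.1.le _)]
  exact pow_le_pow_of_le_one hb.1.le hb.2 h

lemma Oh.add {n : ℕ} {f g : ℕ → ℝ} (hf : Oh n f) (hg : Oh n g) : Oh n (fun b => f b + g b) :=
  IsBigO.add hf hg

lemma Oh.mul {n m : ℕ} {f g : ℕ → ℝ} (hf : Oh n f) (hg : Oh m g) :
    Oh (n + m) (fun b => f b * g b) := by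
  have := IsBigO.mul hf hg
  simp only [← pow_add] at this
  exact this

lemma Oh.of_eq {n : ℕ} {f g : ℕ → ℝ} (hf : Oh n f) (h : ∀ᶠ b in atTop, g b = f b) : Oh n g :=
  (EventuallyEq.trans_isBigO h hf)

lemma oX (n : ℕ) : Oh n (fun b => X b ^ n) := isBigO_refl _ _

lemma Oh.of_le {n : ℕ} {f : ℕ → ℝ} (C : ℝ) (h : ∀ᶠ b in atTop, |f b| ≤ C * X b ^ n) : Oh n f := by
  apply IsBigO.of_bound C
  filter_upwards [h, X_ev] with b hb hx
  rw [Real.norm_of_nonneg (pow_nonneg hx.1.le _)]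
  exact hb

lemma oc (r : ℝ) : Oh 0 (fun _ => r) := Oh.of_le |r| (by simp)

/-- term `r * X^p * f` -/
lemma Oh.t {n : ℕ} {f : ℕ → ℝ} (hf : Oh n f) (N p : ℕ) (r : ℝ) (h : N ≤ p + n := by omega) :
    Oh N (fun b => r * X b ^ p * f b) := by
  have := ((oc r).mul (oX p)).mul hf
  exact this.mono (by omega)

lemma Oh.m {n m : ℕ} {f g : ℕ → ℝ} (hf : Oh n f) (hg : Oh m g) (N : ℕ) (h : N ≤ n + m := by omega) :
    Oh N (fun b => f b * g b) := (hf.mul hg).mono h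

lemma Ok_ev (d : ℕ) (hd : 1 ≤ d) : ∀ᶠ b in atTop, Ok b d := by
  filter_upwards [eventually_ge_atTop (d + 2)] with b hb
  exact ⟨by omega, hd, by omega⟩

noncomputable def V (d k j : ℕ) (b : ℕ) : ℝ := vm b d k j


lemma oV (d : ℕ) (hd : 1 ≤ d) (k j : ℕ) : Oh (2 * k + 1) (V d k j) := by
  apply Oh.of_le (4 ^ (k + 1) * (d + 1) * j)
  filter_upwards [Ok_ev d hd] with b h
  refine (vm_bound h k j).trans (le_of_eq ?_)
  unfold X
  rw [inv_pow]; ring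

lemma V01a (d : ℕ) (hd : 1 ≤ d) : Oh 4 (fun b => V d 0 1 b - (-(d + 1 / 2)) * (X b + X b ^ 2)) := by
  refine ((oV d hd 0 1).t 4 3 (-1)).of_eq ((Ok_ev d hd).mono fun b h => ?_)
  have := E01 h (X b) rfl
  unfold V
  linear_combination (1 + X b) * this

lemma V01b (d : ℕ) (hd : 1 ≤ d) : Oh 5 (fun b => V d 0 1 b - (-(d + 1 / 2)) * (X b + X b ^ 2 - X b ^ 4)) := by
  refine (((V01a d hd).t 5 3 (-1)).add ((oX 2).t 5 3 (d + 1 / 2))).of_eq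
    ((Ok_ev d hd).mono fun b h => ?_)
  have := E01 h (X b) rfl
  unfold V
  linear_combination (1 + X b) * this

lemma V11_rel (d : ℕ) (hd : 1 ≤ d) : ∀ᶠ b in atTop, V d 1 1 b = X b ^ 2 * (1 + X b) * V d 0 1 b - X b ^ 3 * V d 1 1 b := by
  refine (Ok_ev d hd).mono fun b h => ?_
  have := Ek1 h 0 (X b) rfl
  unfold V
  linear_combination (1 + X b) * this

lemma V21_rel (d : ℕ) (hd : 1 ≤ d) : ∀ᶠ b in atTop, V d 2 1 b = X b ^ 2 * (1 + X b) * V d 1 1 b - X b ^ 3 * V d 2 1 b := by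
  refine (Ok_ev d hd).mono fun b h => ?_
  have := Ek1 h 1 (X b) rfl
  unfold V
  linear_combination (1 + X b) * this

lemma V31_rel (d : ℕ) (hd : 1 ≤ d) : ∀ᶠ b in atTop, V d 3 1 b = X b ^ 2 * (1 + X b) * V d 2 1 b - X b ^ 3 * V d 3 1 b := by
  refine (Ok_ev d hd).mono fun b h => ?_
  have := Ek1 h 2 (X b) rfl
  unfold V
  linear_combination (1 + X b) * this

lemma V11a (d : ℕ) (hd : 1 ≤ d) : Oh 4 (fun b => V d 1 1 b - (-(d + 1 / 2)) * X b ^ 3) := by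
  refine (((((V01a d hd).t 4 2 1).add ((V01a d hd).t 4 3 1)).add ((oX 0).t 4 4 (-(d + 1 / 2) * 2))).add
    (((oX 0).t 4 5 (-(d + 1 / 2))).add ((oV d hd 1 1).t 4 3 (-1)))).of_eq
    ((V11_rel d hd).mono fun b h => ?_)
  linear_combination h

lemma V11b (d : ℕ) (hd : 1 ≤ d) : Oh 7 (fun b => V d 1 1 b
    - (-(d + 1 / 2)) * (X b ^ 3 + 2 * X b ^ 4 + X b ^ 5 - 2 * X b ^ 6)) := by
  refine ((((V01b d hd).t 7 2 1).add ((V01b d hd).t 7 3 1)).add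
    (((oX 0).t 7 7 (d + 1 / 2)).add ((V11a d hd).t 7 3 (-1)))).of_eq
    ((V11_rel d hd).mono fun b h => ?_)
  linear_combination h

lemma V21b (d : ℕ) (hd : 1 ≤ d) : Oh 8 (fun b => V d 2 1 b
    - (-(d + 1 / 2)) * (X b ^ 5 + 3 * X b ^ 6 + 3 * X b ^ 7)) := by
  refine ((((V11b d hd).t 8 2 1).add ((V11b d hd).t 8 3 1)).add
    ((((oX 0).t 8 8 (d + 1 / 2)).add ((oX 0).t 8 9 (2 * (d + 1 / 2)))).add
      ((oV d hd 2 1).t 8 3 (-1)))).of_eq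
    ((V21_rel d hd).mono fun b h => ?_)
  linear_combination h

lemma V31b (d : ℕ) (hd : 1 ≤ d) : Oh 8 (fun b => V d 3 1 b - (-(d + 1 / 2)) * X b ^ 7) := by
  refine ((((V21b d hd).t 8 2 1).add ((V21b d hd).t 8 3 1)).add
    ((((oX 0).t 8 8 (-4 * (d + 1 / 2))).add (((oX 0).t 8 9 (-6 * (d + 1 / 2))).add
      ((oX 0).t 8 10 (-3 * (d + 1 / 2))))).add
      ((oV d hd 3 1).t 8 3 (-1)))).of_eq
    ((V31_rel d hd).mono fun b h => ?_)
  linear_combination h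

lemma V02b (d : ℕ) (hd : 1 ≤ d) : Oh 3 (fun b => V d 0 2 b - (-(d + 1 / 2) - (d ^ 2 + d + 1 / 3)) * X b ^ 2) := by
  refine ((((V01a d hd).t 3 1 1).add ((oX 0).t 3 3 (-(d + 1 / 2)))).add
    ((((oV d hd 0 1).t 3 2 (-1)).add ((oV d hd 0 2).t 3 2 1)).add
    (((oV d hd 0 1).t 3 3 (-2 * d)).add ((oV d hd 0 2).t 3 3 (-1))))).of_eq
    ((Ok_ev d hd).mono fun b h => ?_)
  have := E02 h (X b) rfl
  unfold V
  linear_combination this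

lemma V12a (d : ℕ) (hd : 1 ≤ d) : Oh 4 (V d 1 2) := by
  refine ((((oV d hd 1 1).t 4 1 1).add ((oV d hd 1 1).t 4 2 (-1))).add
    ((((oV d hd 1 2).t 4 2 1).add ((oV d hd 0 1).t 4 3 (2 * d))).add
    (((oV d hd 0 2).t 4 3 1).add (((oV d hd 1 1).t 4 3 (-2 * d)).add ((oV d hd 1 2).t 4 3 (-1)))))).of_eq
    ((Ok_ev d hd).mono fun b h => ?_)
  have := Ek2 h 0 (X b) rfl
  unfold V
  linear_combination this

lemma V12b (d : ℕ) (hd : 1 ≤ d) : Oh 6 (fun b => V d 1 2 b - ((-(d + 1 / 2)) * (X b ^ 4 + X b ^ 5)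
    + 2 * d * (-(d + 1 / 2)) * (X b ^ 4 + X b ^ 5)
    + (-(d + 1 / 2) - (d ^ 2 + d + 1 / 3)) * X b ^ 5)) := by
  refine (((((V11b d hd).t 6 1 1).add ((V11b d hd).t 6 2 (-1))).add
    (((V12a d hd).t 6 2 1).add ((V01a d hd).t 6 3 (2 * d)))).add
    ((((V02b d hd).t 6 3 1).add (((oV d hd 1 1).t 6 3 (-2 * d)).add ((oV d hd 1 2).t 6 3 (-1)))).add
    (((oX 0).t 6 6 (d + 1 / 2)).add (((oX 0).t 6 7 (3 * (d + 1 / 2))).add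
      ((oX 0).t 6 8 (-2 * (d + 1 / 2))))))).of_eq
    ((Ok_ev d hd).mono fun b h => ?_)
  have := Ek2 h 0 (X b) rfl
  unfold V
  linear_combination this

lemma V13b (d : ℕ) (hd : 1 ≤ d) : Oh 5 (fun b => V d 1 3 b - (-(d + 1 / 2)) * X b ^ 4) := by
  refine (((((V11a d hd).t 5 1 1).add ((oV d hd 1 1).t 5 2 (-3 / 2))).add
    (((oV d hd 1 1).t 5 3 (1 / 2)).add ((V12a d hd).t 5 2 (3 / 2)))).add
    ((((V12a d hd).t 5 3 (-3 / 2)).add ((oV d hd 1 3).t 5 3 1)).add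
    ((((oV d hd 0 1).t 5 4 (3 * d ^ 2)).add (((oV d hd 0 2).t 5 4 (3 * d)).add
      ((oV d hd 0 3).t 5 4 1))).add
    (((oV d hd 1 1).t 5 4 (-3 * d ^ 2)).add (((oV d hd 1 2).t 5 4 (-3 * d)).add
      ((oV d hd 1 3).t 5 4 (-1))))))).of_eq
    ((Ok_ev d hd).mono fun b h => ?_)
  have := Ek3 h 0 (X b) rfl
  rw [W3 h, W3 h] at this
  unfold V
  linear_combination this

lemma V14b (d : ℕ) (hd : 1 ≤ d) : Oh 4 (V d 1 4) := by
  refine (((((oV d hd 1 1).t 4 1 1).add ((oV d hd 1 1).t 4 2 (-2))).add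
    (((oV d hd 1 1).t 4 3 1).add (((oV d hd 1 2).t 4 2 2).add (((oV d hd 1 2).t 4 3 (-3)).add
      ((oV d hd 1 2).t 4 4 1))))).add
    ((((oV d hd 1 3).t 4 3 2).add (((oV d hd 1 3).t 4 4 (-2)).add ((oV d hd 1 4).t 4 4 1))).add
    ((((oV d hd 0 1).t 4 5 (4 * d ^ 3)).add (((oV d hd 0 2).t 4 5 (6 * d ^ 2)).add
      (((oV d hd 0 3).t 4 5 (4 * d)).add ((oV d hd 0 4).t 4 5 1)))).add
    (((oV d hd 1 1).t 4 5 (-4 * d ^ 3)).add (((oV d hd 1 2).t 4 5 (-6 * d ^ 2)).add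
      (((oV d hd 1 3).t 4 5 (-4 * d)).add ((oV d hd 1 4).t 4 5 (-1)))))))).of_eq
    ((Ok_ev d hd).mono fun b h => ?_)
  have := Ek4 h 0 (X b) rfl
  rw [W4 h, W4 h] at this
  unfold V
  linear_combination this

lemma V22b (d : ℕ) (hd : 1 ≤ d) : Oh 7 (fun b => V d 2 2 b - (1 + 2 * d) * (-(d + 1 / 2)) * X b ^ 6) := by
  refine (((((V21b d hd).t 7 1 1).add ((oX 0).t 7 7 (-3 * (d + 1 / 2)))).add
    (((oX 0).t 7 8 (-3 * (d + 1 / 2))).add ((oV d hd 2 1).t 7 2 (-1)))).add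
    ((((oV d hd 2 2).t 7 2 1).add ((V11a d hd).t 7 3 (2 * d))).add
    (((V12a d hd).t 7 3 1).add (((oV d hd 2 1).t 7 3 (-2 * d)).add ((oV d hd 2 2).t 7 3 (-1)))))).of_eq
    ((Ok_ev d hd).mono fun b h => ?_)
  have := Ek2 h 1 (X b) rfl
  unfold V
  linear_combination this

lemma V22a (d : ℕ) (hd : 1 ≤ d) : Oh 6 (V d 2 2) := by
  refine (((V22b d hd).t 6 0 1).add ((oX 6).t 6 0 ((1 + 2 * d) * (-(d + 1 / 2))))).of_eq
    (Eventually.of_forall fun b => ?_)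
  ring

lemma V23b (d : ℕ) (hd : 1 ≤ d) : Oh 6 (V d 2 3) := by
  refine (((((oV d hd 2 1).t 6 1 1).add ((oV d hd 2 1).t 6 2 (-3 / 2))).add
    (((oV d hd 2 1).t 6 3 (1 / 2)).add ((V22a d hd).t 6 2 (3 / 2)))).add
    ((((V22a d hd).t 6 3 (-3 / 2)).add ((oV d hd 2 3).t 6 3 1)).add
    ((((oV d hd 1 1).t 6 4 (3 * d ^ 2)).add (((oV d hd 1 2).t 6 4 (3 * d)).add
      ((oV d hd 1 3).t 6 4 1))).add
    (((oV d hd 2 1).t 6 4 (-3 * d ^ 2)).add (((oV d hd 2 2).t 6 4 (-3 * d)).add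
      ((oV d hd 2 3).t 6 4 (-1))))))).of_eq
    ((Ok_ev d hd).mono fun b h => ?_)
  have := Ek3 h 1 (X b) rfl
  rw [W3 h, W3 h] at this
  unfold V
  linear_combination this

end Irw


namespace Irw

lemma tele_bound (b : ℕ) (f Φ : ℕ → ℝ) (E : ℝ)
    (h : ∀ c < b, |f c - (Φ c - Φ (c + 1))| ≤ E) :
    |∑ c ∈ Finset.range b, f c - (Φ 0 - Φ b)| ≤ b * E := by
  rw [← Finset.sum_range_sub' Φ b, ← Finset.sum_sub_distrib]
  refine (Finset.abs_sum_le_sum_abs _ _).trans ?_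
  refine (Finset.sum_le_sum fun c hc => h c (Finset.mem_range.1 hc)).trans ?_
  simp

lemma s2_fine (b : ℕ) (hb : 1 ≤ b) (a : ℝ) (ha : 1 ≤ a) :
    |s b 2 a - (X b * (1 / a - 1 / (a + 1)) + X b ^ 2 / 2 * (1 / a ^ 2 - 1 / (a + 1) ^ 2)
      + X b ^ 3 / 6 * (1 / a ^ 3 - 1 / (a + 1) ^ 3))| ≤ 1 * X b ^ 4 := by
  have hb' : (1 : ℝ) ≤ b := by exact_mod_cast hb
  have := tele_bound b (fun c => 1 / (a * b + c) ^ 2)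
    (fun c => 1 / (a * b + c) + 1 / (2 * (a * b + c) ^ 2) + 1 / (6 * (a * b + c) ^ 3))
    (X b ^ 6) (by
      intro c _
      have hn : (b : ℝ) ≤ a * b + c := by
        have : (0:ℝ) ≤ c := Nat.cast_nonneg c
        nlinarith
      push_cast
      rw [← add_assoc]
      generalize a * b + (c : ℝ) = n at hn
      have hn1 : 1 ≤ n := hb'.trans hn
      have e : 1 / n ^ 2 - (1 / n + 1 / (2 * n ^ 2) + 1 / (6 * n ^ 3) -
        (1 / (n + 1) + 1 / (2 * (n + 1) ^ 2) + 1 / (6 * (n + 1) ^ 3))) = - (1 / (6 * n ^ 3 * (n + 1) ^ 3)) := by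
        have : n ≠ 0 := by positivity
        have : n + 1 ≠ 0 := by positivity
        field_simp; ring
      rw [e, abs_neg, abs_of_nonneg (by positivity)]
      unfold X
      rw [inv_pow, ← one_div]
      apply one_div_le_one_div_of_le (by positivity)
      calc (b : ℝ) ^ 6 = b ^ 3 * b ^ 3 := by ring
        _ ≤ (6 * n ^ 3) * (n + 1) ^ 3 := by
          have h1 : (b : ℝ) ^ 3 ≤ n ^ 3 := by gcongr
          have h2 : (b : ℝ) ^ 3 ≤ (n + 1) ^ 3 := by gcongr; linarith
          have : 0 < n ^ 3 := by positivity
          apply mul_le_mul _ h2 (by positivity) (by positivity)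
          linarith)
  have e2 : (b : ℝ) * X b ^ 6 ≤ 1 * X b ^ 4 := by
    have : (b : ℝ) * X b = 1 := by unfold X; field_simp
    have hX : X b ≤ 1 := by unfold X; exact inv_le_one_of_one_le₀ hb'
    have hX0 : 0 ≤ X b := by unfold X; positivity
    calc (b : ℝ) * X b ^ 6 = (b * X b) * (X b * X b ^ 4) := by ring
      _ ≤ 1 * X b ^ 4 := by
        rw [this, one_mul]; gcongr
  refine le_trans (le_of_eq ?_) (this.trans e2)
  unfold s
  congr 2
  unfold X
  have : (b : ℝ) ≠ 0 := by positivity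
  have : a * b + (b : ℝ) = (a + 1) * b := by ring
  rw [this]
  have : a + 1 ≠ 0 := by positivity
  simp only [Nat.cast_zero, add_zero]
  field_simp; ring

lemma s3_fine (b : ℕ) (hb : 1 ≤ b) (a : ℝ) (ha : 1 ≤ a) :
    |s b 3 a - (X b ^ 2 / 2 * (1 / a ^ 2 - 1 / (a + 1) ^ 2))| ≤ 2 * X b ^ 3 := by
  have hb' : (1 : ℝ) ≤ b := by exact_mod_cast hb
  have := tele_bound b (fun c => 1 / (a * b + c) ^ 3)
    (fun c => 1 / (2 * (a * b + c) ^ 2))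
    (2 * X b ^ 4) (by
      intro c _
      have hn : (b : ℝ) ≤ a * b + c := by
        have : (0:ℝ) ≤ c := Nat.cast_nonneg c
        nlinarith
      push_cast
      rw [← add_assoc]
      generalize a * b + (c : ℝ) = n at hn
      have hn1 : 1 ≤ n := hb'.trans hn
      have e : 1 / n ^ 3 - (1 / (2 * n ^ 2) - 1 / (2 * (n + 1) ^ 2))
         = (3 * n + 2) / (2 * n ^ 3 * (n + 1) ^ 2) := by
        have : n ≠ 0 := by positivity
        have : n + 1 ≠ 0 := by positivity
        field_simp; ring
      rw [e, abs_of_nonneg (by positivity)]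
      calc (3 * n + 2) / (2 * n ^ 3 * (n + 1) ^ 2) ≤ 2 / n ^ 4 := by
            rw [div_le_div_iff₀ (by positivity) (by positivity)]
            have : 0 < n ^ 3 := by positivity
            have : 0 < n ^ 4 := by positivity
            nlinarith
        _ ≤ 2 * X b ^ 4 := by
          unfold X
          rw [inv_pow, ← div_eq_mul_inv]
          gcongr)
  have e2 : (b : ℝ) * (2 * X b ^ 4) = 2 * X b ^ 3 := by
    have : (b : ℝ) * X b = 1 := by unfold X; field_simp
    linear_combination 2 * X b ^ 3 * this
  rw [e2] at this
  refine le_trans (le_of_eq ?_) this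
  unfold s
  congr 2
  unfold X
  have : (b : ℝ) ≠ 0 := by positivity
  have : a * b + (b : ℝ) = (a + 1) * b := by ring
  rw [this]
  have : a + 1 ≠ 0 := by positivity
  simp only [Nat.cast_zero, add_zero]
  field_simp

lemma s4_fine (b : ℕ) (hb : 1 ≤ b) (a : ℝ) (ha : 1 ≤ a) :
    |s b 4 a| ≤ 1 * X b ^ 3 := by
  have hb' : (1 : ℝ) ≤ b := by exact_mod_cast hb
  have := tele_bound b (fun c => 1 / (a * b + c) ^ 4)
    (fun c => 0) (X b ^ 4) (by
      intro c _
      have hn : (b : ℝ) ≤ a * b + c := by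
        have : (0:ℝ) ≤ c := Nat.cast_nonneg c
        nlinarith
      generalize a * b + (c : ℝ) = n at hn
      have hn1 : 1 ≤ n := hb'.trans hn
      simp only [sub_zero]
      rw [abs_of_nonneg (by positivity)]
      unfold X
      rw [inv_pow, ← one_div]
      gcongr)
  have e2 : (b : ℝ) * (X b ^ 4) = 1 * X b ^ 3 := by
    have : (b : ℝ) * X b = 1 := by unfold X; field_simp
    linear_combination X b ^ 3 * this
  rw [e2] at this
  simpa [s] using this

lemma s2_coarse (b : ℕ) (hb : 1 ≤ b) (a : ℝ) (ha : 1 ≤ a) :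
    |s b 2 a - (X b * (1 / a - 1 / (a + 1)))| ≤ X b ^ 2 / a ^ 2 := by
  have hb' : (1 : ℝ) ≤ b := by exact_mod_cast hb
  have := tele_bound b (fun c => 1 / (a * b + c) ^ 2)
    (fun c => 1 / (a * b + c))
    (X b ^ 3 / a ^ 2) (by
      intro c _
      have hn : a * (b : ℝ) ≤ a * b + c := by
        have : (0:ℝ) ≤ c := Nat.cast_nonneg c
        linarith
      push_cast
      rw [← add_assoc]
      generalize a * b + (c : ℝ) = n at hn
      have hab : (b : ℝ) ≤ a * b := by nlinarith
      have hn1 : 1 ≤ n := by linarith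
      have e : 1 / n ^ 2 - (1 / n - 1 / (n + 1))
         = 1 / (n ^ 2 * (n + 1)) := by
        have : n ≠ 0 := by positivity
        have : n + 1 ≠ 0 := by positivity
        field_simp; ring
      rw [e, abs_of_nonneg (by positivity)]
      calc 1 / (n ^ 2 * (n + 1)) ≤ 1 / ((a * b) ^ 2 * b) := by
            gcongr; linarith
        _ = X b ^ 3 / a ^ 2 := by
          unfold X
          field_simp)
  have e2 : (b : ℝ) * (X b ^ 3 / a ^ 2) = X b ^ 2 / a ^ 2 := by
    have : (b : ℝ) * X b = 1 := by unfold X; field_simp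
    linear_combination X b ^ 2 / a ^ 2 * this
  rw [e2] at this
  refine le_trans (le_of_eq ?_) this
  unfold s
  congr 2
  unfold X
  have : (b : ℝ) ≠ 0 := by positivity
  have : a * b + (b : ℝ) = (a + 1) * b := by ring
  rw [this]
  have : a + 1 ≠ 0 := by positivity
  simp only [Nat.cast_zero, add_zero]
  field_simp

noncomputable def Z (i b : ℕ) : ℝ := ∑ a ∈ Finset.Ico 1 b, 1 / (a : ℝ) ^ i

lemma Z_succ (i b : ℕ) (hb : 1 ≤ b) : Z i (b + 1) = Z i b + 1 / (b : ℝ) ^ i := by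
  unfold Z; rw [Finset.sum_Ico_succ_top hb]

lemma Z_tendsto (i : ℕ) (hi : 2 ≤ i) : Tendsto (Z i) atTop (nhds (zetaR i)) := by
  have hs : Summable (fun n : ℕ => 1 / ((n : ℝ) + 1) ^ i) := by
    have := (summable_nat_add_iff 1).2 (Real.summable_one_div_nat_pow.2 (by omega : 1 < i))
    simpa using this
  have h := hs.hasSum.tendsto_sum_nat
  rw [← tendsto_add_atTop_iff_nat 1]
  refine h.congr fun n => ?_
  unfold Z
  rw [Finset.sum_Ico_eq_sum_range]
  simp only [Nat.add_sub_cancel]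
  apply Finset.sum_congr rfl
  intro c _
  push_cast
  rw [add_comm]

lemma X_tendsto : Tendsto X atTop (nhds 0) := tendsto_inv_atTop_nhds_zero_nat

lemma squeeze_lem (D U : ℕ → ℝ) (hD : Tendsto D atTop (nhds 0)) (hU : Tendsto U atTop (nhds 0))
    (h : ∀ n, 1 ≤ n → 0 ≤ D n - D (n + 1) ∧ D n - D (n + 1) ≤ U n - U (n + 1)) (n : ℕ) (hn : 1 ≤ n) :
    |D n| ≤ U n := by
  have hD' : Tendsto (fun m => D (m + n)) atTop (nhds 0) := (tendsto_add_atTop_iff_nat n).2 hD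
  have hU' : Tendsto (fun m => U (m + n) - D (m + n)) atTop (nhds 0) := by
    simpa using ((tendsto_add_atTop_iff_nat n).2 hU).sub hD'
  have a1 : Antitone (fun m => D (m + n)) := by
    apply antitone_nat_of_succ_le
    intro m
    have := (h (m + n) (by omega)).1
    rw [show m + 1 + n = m + n + 1 by ring]; linarith
  have a2 : Antitone (fun m => U (m + n) - D (m + n)) := by
    apply antitone_nat_of_succ_le
    intro m
    have := (h (m + n) (by omega)).2
    rw [show m + 1 + n = m + n + 1 by ring]; linarith
  have b1 := a1.le_of_tendsto hD' 0
  have b2 := a2.le_of_tendsto hU' 0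
  simp only [zero_add] at b1 b2
  rw [abs_of_nonneg b1]; linarith

lemma Z2b : Oh 2 (fun b => Z 2 b - (zetaR 2 - X b)) := by
  apply Oh.of_le 1
  filter_upwards [eventually_ge_atTop 1] with b hb
  have := squeeze_lem (fun b => zetaR 2 - Z 2 b - X b) (fun b => X b ^ 2)
    (by simpa using ((tendsto_const_nhds (x := zetaR 2)).sub (Z_tendsto 2 le_rfl)).sub X_tendsto)
    (by simpa using X_tendsto.pow 2) (by
      intro n hn
      have hn' : (1 : ℝ) ≤ n := by exact_mod_cast hn
      simp only [Z_succ 2 n hn]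
      have e : zetaR 2 - Z 2 n - X n - (zetaR 2 - (Z 2 n + 1 / (n : ℝ) ^ 2) - X (n + 1))
        = 1 / ((n : ℝ) ^ 2 * (n + 1)) := by
        unfold X; push_cast; field_simp; ring
      have e2 : X n ^ 2 - X (n + 1) ^ 2 = (2 * n + 1) / ((n : ℝ) ^ 2 * (n + 1) ^ 2) := by
        unfold X; push_cast; field_simp; ring
      rw [e, e2]
      refine ⟨by positivity, ?_⟩
      rw [div_le_div_iff₀ (by positivity) (by positivity)]
      have : 0 ≤ (n : ℝ) ^ 2 * (n + 1) * n := by positivity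
      linarith) b hb
  rw [one_mul]
  refine le_trans (le_of_eq ?_) this
  rw [← abs_neg]; congr 1; ring

lemma Z3b : Oh 1 (fun b => Z 3 b - zetaR 3) := by
  apply Oh.of_le 2
  filter_upwards [eventually_ge_atTop 1] with b hb
  have := squeeze_lem (fun b => zetaR 3 - Z 3 b) (fun b => 2 * X b)
    (by simpa using ((tendsto_const_nhds (x := zetaR 3)).sub (Z_tendsto 3 (by norm_num))))
    (by simpa using X_tendsto.const_mul 2) (by
      intro n hn
      have hn' : (1 : ℝ) ≤ n := by exact_mod_cast hn
      simp only [Z_succ 3 n hn]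
      have e : zetaR 3 - Z 3 n - (zetaR 3 - (Z 3 n + 1 / (n : ℝ) ^ 3))
        = 1 / ((n : ℝ) ^ 3) := by ring
      have e2 : 2 * X n - 2 * X (n + 1) = 2 / ((n : ℝ) * (n + 1)) := by
        unfold X; push_cast; field_simp; ring
      rw [e, e2]
      refine ⟨by positivity, ?_⟩
      rw [div_le_div_iff₀ (by positivity) (by positivity)]
      have : (n : ℝ) * (n * n - 1) ≥ 0 := by
        apply mul_nonneg <;> nlinarith
      nlinarith) b hb
  rw [pow_one]
  refine le_trans (le_of_eq ?_) this
  rw [← abs_neg]; congr 1; ring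

lemma oZ2 : Oh 0 (Z 2) := by
  refine ((Z2b.t 0 0 1).add (((oc (zetaR 2)).t 0 0 1).add ((oX 1).t 0 0 (-1)))).of_eq
    (Eventually.of_forall fun b => ?_)
  ring

noncomputable def Hs (b : ℕ) : ℝ := ∑ a ∈ Finset.Ico 1 b, s b 2 a

lemma Hsb : Oh 2 (fun b => Hs b - X b) := by
  have h1 : Oh 2 (fun b => Hs b - (X b - X b ^ 2)) := by
    have : Oh 2 (fun b => X b ^ 2 * Z 2 b) := (oX 2).m oZ2 2
    refine IsBigO.trans ?_ this
    apply IsBigO.of_bound 1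
    filter_upwards [eventually_ge_atTop 1] with b hb
    have hb' : (1 : ℝ) ≤ b := by exact_mod_cast hb
    have e : X b - X b ^ 2 = ∑ a ∈ Finset.Ico 1 b, X b * (1 / (a : ℝ) - 1 / ((a : ℝ) + 1)) := by
      rw [← Finset.mul_sum]
      have := Finset.sum_Ico_sub (fun a : ℕ => -(1 / (a : ℝ))) hb
      have e3 : ∀ a ∈ Finset.Ico 1 b, (1 / (a : ℝ) - 1 / ((a : ℝ) + 1))
        = -(1 / ((a + 1 : ℕ) : ℝ)) - -(1 / (a : ℝ)) := by
        intro a _; push_cast; ring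
      rw [Finset.sum_congr rfl e3, this]
      unfold X; simp; ring
    rw [one_mul, Real.norm_eq_abs, Real.norm_eq_abs, e]
    unfold Hs
    rw [← Finset.sum_sub_distrib]
    refine (Finset.abs_sum_le_sum_abs _ _).trans ?_
    refine le_trans (Finset.sum_le_sum fun a ha => s2_coarse b hb a ?_) ?_
    · have := (Finset.mem_Ico.1 ha).1; exact_mod_cast this
    · refine le_trans (le_of_eq ?_) (le_abs_self _)
      unfold Z
      rw [Finset.mul_sum]
      apply Finset.sum_congr rfl; intro a _; ring
  refine ((h1.t 2 0 1).add ((oX 0).t 2 2 (-1))).of_eq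
    (Eventually.of_forall fun b => ?_)
  ring

end Irw


namespace Irw

lemma Bd_X {b d : ℕ} (h : Ok b d) (k : ℕ) :
    Bd b d k (4 ^ (k + 1) * (d + 1) * X b ^ (2 * k + 1)) := by
  have := Bd_main h k
  rwa [div_eq_mul_inv, ← inv_pow] at this

lemma comb3 {A A' B B' C C' x α β γ δ : ℝ} (hx : 0 ≤ x) (h1 : |A - A'| ≤ α) (h2 : |B - B'| ≤ β)
    (h3 : |C - C'| ≤ γ) (hd : α + x * (β + γ) ≤ δ) : |A + x * (B - C) - (A' + x * (B' - C'))| ≤ δ := by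
  rw [abs_le] at *
  constructor
  · nlinarith [mul_le_mul_of_nonneg_left h2.1 hx, mul_le_mul_of_nonneg_left h3.2 hx]
  · nlinarith [mul_le_mul_of_nonneg_left h2.2 hx, mul_le_mul_of_nonneg_left h3.1 hx]

lemma inv_pow_le {a : ℝ} (ha : 1 ≤ a) {m n : ℕ} (h : m ≤ n) : 1 / a ^ n ≤ 1 / a ^ m := by
  have : 0 < a := by linarith
  apply one_div_le_one_div_of_le (by positivity)
  exact pow_le_pow_right₀ ha h

lemma nu3_approx {b d : ℕ} (h : Ok b d) (a : ℝ) (ha : 1 ≤ a) :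
    |nu b d (3 : ℕ) (g a) - (-(V d 3 1 b) * s b 2 a - V d 2 1 b * X b ^ 2 * (1 / a ^ 2)
      + (2 * d * V d 2 1 b + V d 2 2 b) * X b ^ 3 * (1 / a ^ 3))|
      ≤ (d + 1) * (768 + 256 * (d + 1) ^ 3 + 512 * (d + 1)) * X b ^ 9 * (1 / a ^ 2) := by
  have hb := h.pos
  have ha0 : 0 < a := by linarith
  have hx0 : 0 < X b := by unfold X; positivity
  have m := master h 2 a ha
  have t1 := Tpart h 3 _ (Bd_X h 3) (by positivity) a ha 2
  have t2 := Qpart h 2 _ (Bd_X h 2) a ha 3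
  have t3 := Qpart h 3 _ (Bd_X h 3) a ha 1
  have key := comb3 hx0.le t1 t2 t3 (δ := (d + 1) * (768 + 256 * (d + 1) ^ 3 + 512 * (d + 1)) * X b ^ 9 * (1 / a ^ 2)) (by
    change _ * ((X b) ^ 2 / _) + X b * (_ * (_ * (_ * X b ^ 3 / _)) + _ * (_ * (_ * X b ^ 1 / _))) ≤ _
    have i1 := inv_pow_le ha (show 2 ≤ 3 by norm_num)
    have i2 := inv_pow_le ha (show 2 ≤ 4 by norm_num)
    have c1 : 0 ≤ (d + 1) * 768 * X b ^ 9 := by positivity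
    have c2 : 0 ≤ (d + 1) * (256 * (d + 1 : ℝ) ^ 3) * X b ^ 9 := by positivity
    have j1 := mul_le_mul_of_nonneg_left i1 c1
    have j2 := mul_le_mul_of_nonneg_left i2 c2
    norm_num
    norm_num at j1 j2
    ring_nf at j1 j2 ⊢
    linarith)
  rw [show X b = (b : ℝ)⁻¹ from rfl] at key ⊢
  rw [m]
  refine le_trans (le_of_eq ?_) key
  congr 2
  simp only [Finset.sum_range_succ, Finset.sum_range_zero, vm0 h, W0 h, W1 h, W2 h, V]
  norm_num
  ring

lemma nu2_approx {b d : ℕ} (h : Ok b d) (a : ℝ) (ha : 1 ≤ a) :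
    |nu b d (2 : ℕ) (g a) - ((-(V d 2 1 b) * s b 2 a + V d 2 2 b * s b 3 a - V d 2 3 b * s b 4 a)
      + X b * ((-(V d 1 1 b) * X b / a ^ 2 + (2 * d * V d 1 1 b + V d 1 2 b) * X b ^ 2 / a ^ 3
        - (3 * d ^ 2 * V d 1 1 b + 3 * d * V d 1 2 b + V d 1 3 b) * X b ^ 3 / a ^ 4
        + (4 * d ^ 3 * V d 1 1 b + 6 * d ^ 2 * V d 1 2 b + 4 * d * V d 1 3 b + V d 1 4 b)
          * X b ^ 4 / a ^ 5) - (-(V d 2 1 b) * X b / a ^ 2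
            + (2 * d * V d 2 1 b + V d 2 2 b) * X b ^ 2 / a ^ 3)))|
      ≤ (d + 1) * (320 + 96 * (d + 1) ^ 5 + 256 * (d + 1) ^ 3) * X b ^ 9 := by
  have hb := h.pos
  have ha0 : 0 < a := by linarith
  have hx0 : 0 < X b := by unfold X; positivity
  have m := master h 1 a ha
  have t1 := Tpart h 2 _ (Bd_X h 2) (by positivity) a ha 4
  have t2 := Qpart h 1 _ (Bd_X h 1) a ha 5
  have t3 := Qpart h 2 _ (Bd_X h 2) a ha 3
  have key := comb3 hx0.le t1 t2 t3 (δ := (d + 1) * (320 + 96 * (d + 1) ^ 5 + 256 * (d + 1) ^ 3) * X b ^ 9) (by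
    change _ * ((X b) ^ 4 / _) + X b * (_ * (_ * (_ * X b ^ 5 / _)) + _ * (_ * (_ * X b ^ 3 / _))) ≤ _
    have i1 := inv_pow_le ha (show 0 ≤ 5 by norm_num)
    have i2 := inv_pow_le ha (show 0 ≤ 6 by norm_num)
    have i3 := inv_pow_le ha (show 0 ≤ 4 by norm_num)
    have c1 : 0 ≤ (d + 1) * 320 * X b ^ 9 := by positivity
    have c2 : 0 ≤ (d + 1) * (96 * (d + 1 : ℝ) ^ 5) * X b ^ 9 := by positivity
    have c3 : 0 ≤ (d + 1) * (256 * (d + 1 : ℝ) ^ 3) * X b ^ 9 := by positivity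
    have j1 := mul_le_mul_of_nonneg_left i1 c1
    have j2 := mul_le_mul_of_nonneg_left i2 c2
    have j3 := mul_le_mul_of_nonneg_left i3 c3
    norm_num
    norm_num at j1 j2 j3
    ring_nf at j1 j2 j3 ⊢
    linarith)
  rw [show X b = (b : ℝ)⁻¹ from rfl] at key ⊢
  rw [m]
  refine le_trans (le_of_eq ?_) key
  congr 2
  simp only [Finset.sum_range_succ, Finset.sum_range_zero, vm0 h, W0 h, W1 h, W2 h, W3 h, W4 h, V]
  norm_num
  ring

lemma nu3_sum (d : ℕ) (hd : 1 ≤ d) : Oh 9 (fun b => ∑ a ∈ Finset.Ico 1 b, nu b d (3 : ℕ) (g a)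
    - (-(V d 3 1 b) * Hs b - V d 2 1 b * X b ^ 2 * Z 2 b
      + (2 * d * V d 2 1 b + V d 2 2 b) * X b ^ 3 * Z 3 b)) := by
  have hK : Oh 9 (fun b => (d + 1) * (768 + 256 * (d + 1) ^ 3 + 512 * (d + 1)) * X b ^ 9 * Z 2 b) :=
    oZ2.t 9 9 _
  refine IsBigO.trans ?_ hK
  apply IsBigO.of_bound 1
  filter_upwards [Ok_ev d hd] with b h
  rw [one_mul, Real.norm_eq_abs, Real.norm_eq_abs]
  refine le_trans ?_ (le_abs_self _)
  unfold Z Hs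
  simp only [Finset.mul_sum]
  rw [← Finset.sum_sub_distrib, ← Finset.sum_add_distrib, ← Finset.sum_sub_distrib]
  refine (Finset.abs_sum_le_sum_abs _ _).trans ?_
  refine Finset.sum_le_sum fun a ha => nu3_approx h a ?_
  have := (Finset.mem_Ico.1 ha).1; exact_mod_cast this

lemma nu3_d (d : ℕ) (hd : 1 ≤ d) : Oh 9 (fun b => nu b d (3 : ℕ) (g d)
    - (-(V d 3 1 b) * s b 2 d - V d 2 1 b * X b ^ 2 * (1 / d ^ 2)
      + (2 * d * V d 2 1 b + V d 2 2 b) * X b ^ 3 * (1 / d ^ 3))) := by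
  apply Oh.of_le ((d + 1) * (768 + 256 * (d + 1) ^ 3 + 512 * (d + 1)) * (1 / d ^ 2))
  filter_upwards [Ok_ev d hd] with b h
  have := nu3_approx h d (by exact_mod_cast hd)
  refine this.trans (le_of_eq ?_)
  ring

lemma nu2_d (d : ℕ) (hd : 1 ≤ d) : Oh 9 (fun b => nu b d (2 : ℕ) (g d)
    - ((-(V d 2 1 b) * s b 2 d + V d 2 2 b * s b 3 d - V d 2 3 b * s b 4 d)
      + X b * ((-(V d 1 1 b) * X b / d ^ 2 + (2 * d * V d 1 1 b + V d 1 2 b) * X b ^ 2 / d ^ 3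
        - (3 * d ^ 2 * V d 1 1 b + 3 * d * V d 1 2 b + V d 1 3 b) * X b ^ 3 / d ^ 4
        + (4 * d ^ 3 * V d 1 1 b + 6 * d ^ 2 * V d 1 2 b + 4 * d * V d 1 3 b + V d 1 4 b)
          * X b ^ 4 / d ^ 5) - (-(V d 2 1 b) * X b / d ^ 2
            + (2 * d * V d 2 1 b + V d 2 2 b) * X b ^ 2 / d ^ 3)))) := by
  apply Oh.of_le _
  filter_upwards [Ok_ev d hd] with b h
  exact nu2_approx h d (by exact_mod_cast hd)

lemma s2d (d : ℕ) (hd : 1 ≤ d) : Oh 4 (fun b => s b 2 d - (X b * (1 / d - 1 / (d + 1))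
    + X b ^ 2 / 2 * (1 / d ^ 2 - 1 / (d + 1) ^ 2) + X b ^ 3 / 6 * (1 / d ^ 3 - 1 / (d + 1) ^ 3))) := by
  apply Oh.of_le 1
  filter_upwards [eventually_ge_atTop 1] with b hb
  exact s2_fine b hb d (by exact_mod_cast hd)

lemma s3d (d : ℕ) (hd : 1 ≤ d) : Oh 3 (fun b => s b 3 d -
    X b ^ 2 / 2 * (1 / d ^ 2 - 1 / (d + 1) ^ 2)) := by
  apply Oh.of_le 2
  filter_upwards [eventually_ge_atTop 1] with b hb
  exact s3_fine b hb d (by exact_mod_cast hd)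

lemma s4d (d : ℕ) (hd : 1 ≤ d) : Oh 3 (fun b => s b 4 d) := by
  apply Oh.of_le 1
  filter_upwards [eventually_ge_atTop 1] with b hb
  exact s4_fine b hb d (by exact_mod_cast hd)

end Irw


namespace Irw

lemma V11c (d : ℕ) (hd : 1 ≤ d) :
    Oh 6 (fun b => V d 1 1 b - (-(d + 1 / 2)) * (X b ^ 3 + 2 * X b ^ 4 + X b ^ 5)) := by
  refine (((V11b d hd).t 6 0 1).add ((oX 0).t 6 6 (2 * (d + 1 / 2)))).of_eq
    (Eventually.of_forall fun b => ?_)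
  ring

lemma V11d (d : ℕ) (hd : 1 ≤ d) :
    Oh 5 (fun b => V d 1 1 b - (-(d + 1 / 2)) * (X b ^ 3 + 2 * X b ^ 4)) := by
  refine (((V11c d hd).t 5 0 1).add ((oX 0).t 5 5 (-(d + 1 / 2)))).of_eq
    (Eventually.of_forall fun b => ?_)
  ring

lemma V12c (d : ℕ) (hd : 1 ≤ d) : Oh 5 (fun b => V d 1 2 b - ((-(d + 1 / 2)) * X b ^ 4
    + 2 * d * (-(d + 1 / 2)) * X b ^ 4)) := by
  refine (((V12b d hd).t 5 0 1).add ((oX 0).t 5 5 (-(d + 1 / 2) + 2 * d * (-(d + 1 / 2))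
    + (-(d + 1 / 2) - (d ^ 2 + d + 1 / 3))))).of_eq
    (Eventually.of_forall fun b => ?_)
  ring

lemma V13a (d : ℕ) (hd : 1 ≤ d) : Oh 4 (V d 1 3) := by
  refine (((V13b d hd).t 4 0 1).add ((oX 0).t 4 4 (-(d + 1 / 2)))).of_eq
    (Eventually.of_forall fun b => ?_)
  ring

lemma V21c (d : ℕ) (hd : 1 ≤ d) :
    Oh 7 (fun b => V d 2 1 b - (-(d + 1 / 2)) * (X b ^ 5 + 3 * X b ^ 6)) := by
  refine (((V21b d hd).t 7 0 1).add ((oX 0).t 7 7 (-3 * (d + 1 / 2)))).of_eq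
    (Eventually.of_forall fun b => ?_)
  ring

lemma V21d (d : ℕ) (hd : 1 ≤ d) :
    Oh 6 (fun b => V d 2 1 b - (-(d + 1 / 2)) * X b ^ 5) := by
  refine (((V21c d hd).t 6 0 1).add ((oX 0).t 6 6 (-3 * (d + 1 / 2)))).of_eq
    (Eventually.of_forall fun b => ?_)
  ring

lemma oHs : Oh 1 Hs := by
  refine ((Hsb.t 1 0 1).add ((oX 1).t 1 0 1)).of_eq
    (Eventually.of_forall fun b => ?_)
  ring

lemma oZ3 : Oh 0 (Z 3) := by
  refine ((Z3b.t 0 0 1).add ((oc (zetaR 3)).t 0 0 1)).of_eq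
    (Eventually.of_forall fun b => ?_)
  ring

lemma s2e (d : ℕ) (hd : 1 ≤ d) : Oh 2 (fun b => s b 2 d - X b * (1 / d - 1 / (d + 1))) := by
  refine (((s2d d hd).t 2 0 1).add (((oX 0).t 2 2 (1 / 2 * (1 / d ^ 2 - 1 / (d + 1) ^ 2))).add
    ((oX 0).t 2 3 (1 / 6 * (1 / d ^ 3 - 1 / (d + 1) ^ 3))))).of_eq
    (Eventually.of_forall fun b => ?_)
  ring

lemma os2 (d : ℕ) (hd : 1 ≤ d) : Oh 1 (fun b => s b 2 d) := by
  refine (((s2e d hd).t 1 0 1).add ((oX 0).t 1 1 (1 / d - 1 / (d + 1)))).of_eq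
    (Eventually.of_forall fun b => ?_)
  ring

lemma os3 (d : ℕ) (hd : 1 ≤ d) : Oh 2 (fun b => s b 3 d) := by
  refine (((s3d d hd).t 2 0 1).add ((oX 0).t 2 2 (1 / 2 * (1 / d ^ 2 - 1 / (d + 1) ^ 2)))).of_eq
    (Eventually.of_forall fun b => ?_)
  ring

lemma R1 (d : ℕ) (hd : 1 ≤ d) : Oh 9 (fun b => V d 3 1 b * Hs b - (-(d + 1 / 2)) * X b ^ 8) := by
  refine (((V31b d hd).m oHs 9).add (Hsb.t 9 7 (-(d + 1 / 2)))).of_eq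
    (Eventually.of_forall fun b => ?_)
  ring

lemma R2 (d : ℕ) (hd : 1 ≤ d) : Oh 9 (fun b => V d 3 1 b * s b 2 d
    - (-(d + 1 / 2)) * (1 / d - 1 / (d + 1)) * X b ^ 8) := by
  refine (((V31b d hd).m (os2 d hd) 9).add ((s2e d hd).t 9 7 (-(d + 1 / 2)))).of_eq
    (Eventually.of_forall fun b => ?_)
  ring

lemma R3 (d : ℕ) (hd : 1 ≤ d) : Oh 9 (fun b => V d 2 1 b * X b ^ 2 * Z 2 b
    - (-(d + 1 / 2)) * (zetaR 2 * X b ^ 7 + (3 * zetaR 2 - 1) * X b ^ 8)) := by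
  refine ((((V21c d hd).m oZ2 7).t 9 2 1).add ((Z2b.t 9 7 (-(d + 1 / 2))).add
    ((Z2b.t 9 8 (-3 * (d + 1 / 2))).add ((oX 0).t 9 9 (3 * (d + 1 / 2)))))).of_eq
    (Eventually.of_forall fun b => ?_)
  ring

lemma R4 (d : ℕ) (hd : 1 ≤ d) : Oh 9 (fun b => V d 2 1 b * X b ^ 3 * Z 3 b
    - (-(d + 1 / 2)) * zetaR 3 * X b ^ 8) := by
  refine ((((V21d d hd).m oZ3 6).t 9 3 1).add (Z3b.t 9 8 (-(d + 1 / 2)))).of_eq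
    (Eventually.of_forall fun b => ?_)
  ring

lemma R5 (d : ℕ) (hd : 1 ≤ d) : Oh 9 (fun b => V d 2 2 b * X b ^ 3 * Z 3 b) := by
  refine ((((V22a d hd).m oZ3 6).t 9 3 1)).of_eq
    (Eventually.of_forall fun b => ?_)
  ring

lemma R6 (d : ℕ) (hd : 1 ≤ d) : Oh 9 (fun b => V d 2 1 b * s b 2 d
    - (-(d + 1 / 2)) * ((1 / d - 1 / (d + 1)) * X b ^ 6
      + ((1 / d ^ 2 - 1 / (d + 1) ^ 2) / 2 + 3 * (1 / d - 1 / (d + 1))) * X b ^ 7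
      + ((1 / d ^ 3 - 1 / (d + 1) ^ 3) / 6 + 3 * (1 / d ^ 2 - 1 / (d + 1) ^ 2) / 2
        + 3 * (1 / d - 1 / (d + 1))) * X b ^ 8)) := by
  refine (((V21b d hd).m (os2 d hd) 9).add (((s2d d hd).t 9 5 (-(d + 1 / 2))).add
    (((s2d d hd).t 9 6 (-3 * (d + 1 / 2))).add (((s2d d hd).t 9 7 (-3 * (d + 1 / 2))).add
    (((oX 0).t 9 9 (-(d + 1 / 2) * ((1 / d ^ 3 - 1 / (d + 1) ^ 3) / 2
       + 3 * (1 / d ^ 2 - 1 / (d + 1) ^ 2) / 2))).add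
    ((oX 0).t 9 10 (-(d + 1 / 2) * ((1 / d ^ 3 - 1 / (d + 1) ^ 3) / 2)))))))).of_eq
    (Eventually.of_forall fun b => ?_)
  ring

lemma R7 (d : ℕ) (hd : 1 ≤ d) : Oh 9 (fun b => V d 2 2 b * s b 3 d
    - (1 + 2 * d) * (-(d + 1 / 2)) * ((1 / d ^ 2 - 1 / (d + 1) ^ 2) / 2) * X b ^ 8) := by
  refine (((V22b d hd).m (os3 d hd) 9).add ((s3d d hd).t 9 6 ((1 + 2 * d) * (-(d + 1 / 2))))).of_eq
    (Eventually.of_forall fun b => ?_)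
  ring

lemma R8 (d : ℕ) (hd : 1 ≤ d) : Oh 9 (fun b => V d 2 3 b * s b 4 d) :=
  (V23b d hd).m (s4d d hd) 9

lemma main_Oh (d : ℕ) (hd : 1 ≤ d) (c5 c6 c7 c8 : ℝ)
    (h5 : c5 = -(-(d + 1 / 2)) * (1 / d ^ 2))
    (h6 : c6 = (-(d + 1 / 2)) * (-(1 / d - 1 / (d + 1)) - 2 * (1 / d ^ 2) + 2 * d * (1 / d ^ 3)))
    (h7 : c7 = (-(d + 1 / 2)) * (-zetaR 2 + 2 * (1 / d ^ 2)
      - ((1 / d ^ 2 - 1 / (d + 1) ^ 2) / 2 + 3 * (1 / d - 1 / (d + 1))) - (1 / d ^ 2)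
      + 4 * d * (1 / d ^ 3) + (1 + 2 * d) * (1 / d ^ 3) - 3 * d ^ 2 * (1 / d ^ 4)))
    (h8 : c8 = (-(d + 1 / 2)) * (-1 + (1 / d - 1 / (d + 1)) - (3 * zetaR 2 - 1) + 2 * d * zetaR 3
      + 6 * (1 / d ^ 2) - 4 * d * (1 / d ^ 3) - ((1 / d ^ 3 - 1 / (d + 1) ^ 3) / 6
        + 3 * (1 / d ^ 2 - 1 / (d + 1) ^ 2) / 2 + 3 * (1 / d - 1 / (d + 1)))
      + (1 + 2 * d) * ((1 / d ^ 2 - 1 / (d + 1) ^ 2) / 2) + 2 * (1 / d ^ 2) + 2 * d * (1 / d ^ 3)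
      + (1 + 2 * d) * (1 / d ^ 3) - (6 * d ^ 2 + 3 * d * (1 + 2 * d) + 1) * (1 / d ^ 4)
      + 4 * d ^ 3 * (1 / d ^ 5)) + (-(d + 1 / 2) - (d ^ 2 + d + 1 / 3)) * (1 / d ^ 3)) :
    Oh 9 (fun b => irwinSum b d 3 - b * Real.log b
      - (c5 * X b ^ 5 + c6 * X b ^ 6 + c7 * X b ^ 7 + c8 * X b ^ 8)) := by
  have A1 := ((((nu3_sum d hd).t 9 0 1).add ((nu3_d d hd).t 9 0 (-1))).add ((nu2_d d hd).t 9 0 1))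
  have A2 := (((R1 d hd).t 9 0 (-1)).add ((R2 d hd).t 9 0 1)).add (((R3 d hd).t 9 0 (-1)).add
    (((R4 d hd).t 9 0 (2 * d)).add ((R5 d hd).t 9 0 1)))
  have A3 := (((R6 d hd).t 9 0 (-1)).add ((R7 d hd).t 9 0 1)).add ((R8 d hd).t 9 0 (-1))
  have A4 := (((V11b d hd).t 9 2 (-(1 / d ^ 2))).add ((V11c d hd).t 9 3 (2 * d * (1 / d ^ 3)))).add
    (((V11d d hd).t 9 4 (-(3 * d ^ 2 * (1 / d ^ 4)))).add ((V11a d hd).t 9 5 (4 * d ^ 3 * (1 / d ^ 5))))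
  have A5 := (((V12b d hd).t 9 3 (1 / d ^ 3)).add ((V12c d hd).t 9 4 (-(3 * d * (1 / d ^ 4))))).add
    (((V12a d hd).t 9 5 (6 * d ^ 2 * (1 / d ^ 5))).add (((V13b d hd).t 9 4 (-(1 / d ^ 4))).add
    (((V13a d hd).t 9 5 (4 * d * (1 / d ^ 5))).add ((V14b d hd).t 9 5 (1 / d ^ 5)))))
  have A6 := (((V21c d hd).t 9 2 (2 * (1 / d ^ 2))).add
    (((V21d d hd).t 9 3 (-(4 * d * (1 / d ^ 3)))).add ((V22a d hd).t 9 3 (-2 * (1 / d ^ 3)))))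
  refine (((A1.add A2).add (A3.add A4)).add (A5.add A6)).of_eq ((Ok_ev d hd).mono fun b h => ?_)
  have e := irwin_nu h 2
  norm_num at e
  rw [e, h5, h6, h7, h8]
  clear h5 h6 h7 h8 e A1 A2 A3 A4 A5 A6
  simp only [div_eq_mul_inv, one_mul]
  push_cast
  generalize zetaR 2 = z2
  generalize zetaR 3 = z3
  generalize ((d : ℝ) ^ 2)⁻¹ = i2
  generalize ((d : ℝ) ^ 3)⁻¹ = i3
  generalize ((d : ℝ) ^ 4)⁻¹ = i4
  generalize ((d : ℝ) ^ 5)⁻¹ = i5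
  generalize (((d : ℝ) + 1) ^ 2)⁻¹ = k2
  generalize (((d : ℝ) + 1) ^ 3)⁻¹ = k3
  generalize ((d : ℝ) + 1)⁻¹ = k1
  generalize (d : ℝ)⁻¹ = i1
  ring

end Irw

theorem irwin_d_three_asymptotic (d : ℕ) (hd : 1 ≤ d) (a1 a2 a3 a4 : ℝ)
    (h1 : a1 = ((d : ℝ) + 1 / 2) / (d : ℝ) ^ 2)
    (h2 : a2 = ((d : ℝ) + 1 / 2) * d / ((d : ℝ) ^ 2 * ((d : ℝ) + 1)))
    (h3 : a3 = ((d : ℝ) + 1 / 2) * zetaR 2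
      + ((d : ℝ) + 1 / 2) * (-2 * (d : ℝ) ^ 3 - 10 * (d : ℝ) ^ 2 - 11 * d - 2)
        / (2 * (d : ℝ) ^ 3 * ((d : ℝ) + 1) ^ 2))
    (h4 : a4 = -(2 * (d : ℝ) + 1) * d * zetaR 3 + 3 * ((d : ℝ) + 1 / 2) * zetaR 2
      - (12 * (d : ℝ) ^ 6 - 50 * (d : ℝ) ^ 4 - 81 * (d : ℝ) ^ 3 - 71 * (d : ℝ) ^ 2
          - 33 * d - 6)
        / (12 * (d : ℝ) ^ 4 * ((d : ℝ) + 1) ^ 3)) :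
    (fun b : ℕ => irwinSum b d 3 -
      ((b : ℝ) * Real.log b
        + a1 / (b : ℝ) ^ 5 + a2 / (b : ℝ) ^ 6 + a3 / (b : ℝ) ^ 7 + a4 / (b : ℝ) ^ 8))
      =O[atTop] fun b : ℕ => ((b : ℝ) ^ 9)⁻¹ := by
  have hd0 : (d : ℝ) ≠ 0 := by
    have : (1 : ℝ) ≤ d := by exact_mod_cast hd
    positivity
  have hd1 : (d : ℝ) + 1 ≠ 0 := by positivity
  have key := Irw.main_Oh d hd a1 a2 a3 a4
    (by rw [h1]; field_simp)
    (by rw [h2]; field_simp; ring)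
    (by rw [h3]; field_simp; ring)
    (by rw [h4]; field_simp; ring)
  unfold Irw.Oh at key
  refine (key.congr_left fun b => ?_).congr_right fun b => ?_
  · unfold Irw.X; simp only [inv_pow]; ring
  · unfold Irw.X; rw [inv_pow]
end

section
/- For every pair of fixed integers d ≥ 0 and k ≥ 0 there exists a real sequence (aₙ)_{n≥1} such that for every N ≥ 0, as the integer b → ∞ (with b > d), I(b,d,k) − b·log b + c₀(b) − ∑_{n=1}^{N} aₙ/bⁿ = O(b^{−(N+1)}), where c₀(b) = b·log(1 + 1/d) if k = 0 and d ≥ 1, and c₀(b) = 0 otherwise; i.e. I(b,d,k) − b·log b (corrected by −b·log(1+1/d) when k = 0 and d ≥ 1) admits an asymptotic expansion to all orders in descending powers of b. -/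
open Filter Asymptotics

/-- Level `l` functional: sum of `g (0.a₁…a_l)` over digit strings with `d` exactly `j` times,
divided by `b^l`. -/
noncomputable def pM (b d : ℕ) : ℕ → ℤ → (ℝ → ℝ) → ℝ
  | 0, j, g => if j = 0 then g 0 else 0
  | l + 1, j, g =>
    (∑ a ∈ Finset.range b, pM b d l (j - if a = d then 1 else 0) (fun x => g ((a + x) / b))) / b

noncomputable def mu (b d : ℕ) (j : ℤ) (g : ℝ → ℝ) : ℝ := ∑' l, pM b d l j g

def Bd (g : ℝ → ℝ) : Prop := ∃ C, ∀ x ∈ Set.Icc (0 : ℝ) 1, |g x| ≤ C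

lemma fa_mem {b a : ℕ} (ha : a < b) {x : ℝ} (hx : x ∈ Set.Icc (0 : ℝ) 1) :
    ((a : ℝ) + x) / b ∈ Set.Icc (0 : ℝ) 1 := by
  have hb : (0 : ℝ) < b := by exact_mod_cast (by omega : 0 < b)
  have h1 : (a : ℝ) + 1 ≤ b := by exact_mod_cast ha
  have h0 : (0 : ℝ) ≤ a := Nat.cast_nonneg a
  refine ⟨div_nonneg (by linarith [hx.1]) hb.le, ?_⟩
  rw [div_le_one hb]
  linarith [hx.2]

lemma pM_mono {b d : ℕ} (l : ℕ) : ∀ (j : ℤ) (g h : ℝ → ℝ),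
    (∀ x ∈ Set.Icc (0 : ℝ) 1, g x ≤ h x) → pM b d l j g ≤ pM b d l j h := by
  induction l with
  | zero =>
    intro j g h H
    simp only [pM]
    split_ifs
    · exact H 0 (by simp)
    · exact le_rfl
  | succ l ih =>
    intro j g h H
    simp only [pM]
    gcongr with a ha
    exact ih _ _ _ fun x hx => H _ (fa_mem (Finset.mem_range.1 ha) hx)

lemma pM_add {b d : ℕ} (l : ℕ) : ∀ (j : ℤ) (g h : ℝ → ℝ),
    pM b d l j (fun x => g x + h x) = pM b d l j g + pM b d l j h := by
  induction l with
  | zero => intro j g h; simp only [pM]; split_ifs <;> simp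
  | succ l ih =>
    intro j g h
    simp only [pM]
    rw [← add_div, ← Finset.sum_add_distrib]
    congr 1
    exact Finset.sum_congr rfl fun a _ => ih _ _ _

lemma pM_smul {b d : ℕ} (c : ℝ) (l : ℕ) : ∀ (j : ℤ) (g : ℝ → ℝ),
    pM b d l j (fun x => c * g x) = c * pM b d l j g := by
  induction l with
  | zero => intro j g; simp only [pM]; split_ifs <;> simp
  | succ l ih =>
    intro j g
    simp only [pM]
    rw [← mul_div_assoc, Finset.mul_sum]
    congr 1
    exact Finset.sum_congr rfl fun a _ => ih _ _

lemma pM_congr {b d : ℕ} (l : ℕ) (j : ℤ) (g h : ℝ → ℝ)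
    (H : ∀ x ∈ Set.Icc (0 : ℝ) 1, g x = h x) : pM b d l j g = pM b d l j h :=
  le_antisymm (pM_mono l j g h fun x hx => (H x hx).le) (pM_mono l j h g fun x hx => (H x hx).ge)

lemma pM_abs {b d : ℕ} (l : ℕ) (j : ℤ) (g : ℝ → ℝ) (C : ℝ)
    (H : ∀ x ∈ Set.Icc (0 : ℝ) 1, |g x| ≤ C) :
    |pM b d l j g| ≤ C * pM b d l j (fun _ => 1) := by
  rw [abs_le, ← neg_mul, ← pM_smul, ← pM_smul]
  constructor
  · exact pM_mono l j _ _ fun x hx => by linarith [neg_abs_le (g x), H x hx]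
  · exact pM_mono l j _ _ fun x hx => by linarith [le_abs_self (g x), H x hx]

lemma sum_shift {b d : ℕ} (hb : d < b) (F : ℤ → ℕ → ℝ) (j : ℤ) :
    ∑ a ∈ Finset.range b, F (j - if a = d then 1 else 0) a
      = ∑ a ∈ Finset.range b, F j a + (F (j - 1) d - F j d) := by
  have : ∀ a ∈ Finset.range b, F (j - if a = d then 1 else 0) a
      = F j a + if a = d then (F (j - 1) d - F j d) else 0 := by
    intro a _
    by_cases h : a = d
    · subst h; simp
    · simp [h]
  rw [Finset.sum_congr rfl this, Finset.sum_add_distrib]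
  simp [hb]

lemma w_succ {b d : ℕ} (hb : d < b) (l : ℕ) (j : ℤ) :
    pM b d (l + 1) j (fun _ => 1) = (1 - 1 / b) * pM b d l j (fun _ => 1)
      + 1 / b * pM b d l (j - 1) (fun _ => 1) := by
  have hb' : (b : ℝ) ≠ 0 := by exact_mod_cast (by omega : b ≠ 0)
  simp only [pM]
  rw [sum_shift hb (fun j _ => pM b d l j (fun _ => 1))]
  simp
  field_simp
  ring

lemma pM_neg {b d : ℕ} (l : ℕ) : ∀ (j : ℤ) (_ : j < 0) (g : ℝ → ℝ), pM b d l j g = 0 := by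
  induction l with
  | zero => intro j hj g; simp [pM, hj.ne]
  | succ l ih =>
    intro j hj g
    simp only [pM]
    rw [Finset.sum_eq_zero, zero_div]
    intro a _
    apply ih
    split_ifs <;> omega

lemma w_nonneg {b d : ℕ} (l : ℕ) (j : ℤ) : 0 ≤ pM b d l j (fun _ => 1) := by
  have := pM_mono (b := b) (d := d) l j (fun _ => 0 * 1) (fun _ => 1) (by simp)
  rw [pM_smul] at this
  simpa using this

lemma summable_rec {q : ℝ} (hq1 : q < 1) {x y : ℕ → ℝ} (hx : ∀ l, 0 ≤ x l)
    (hy0 : ∀ l, 0 ≤ y l) (hy : Summable y) (h : ∀ l, x (l + 1) = q * x l + y l) : Summable x := by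
  refine summable_of_sum_range_le (c := (x 0 + ∑' l, y l) / (1 - q)) hx ?_
  intro n
  have h1 : ∑ i ∈ Finset.range n, x i ≤ ∑ i ∈ Finset.range (n + 1), x i := by
    rw [Finset.sum_range_succ]; linarith [hx n]
  have h2 : ∑ i ∈ Finset.range (n + 1), x i
      = q * ∑ i ∈ Finset.range n, x i + ∑ i ∈ Finset.range n, y i + x 0 := by
    rw [Finset.sum_range_succ', Finset.sum_congr rfl (fun i _ => h i), Finset.sum_add_distrib,
      Finset.mul_sum]
  have h3 := hy.sum_le_tsum (Finset.range n) (fun i _ => hy0 i)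
  rw [le_div_iff₀ (by linarith)]
  linarith

lemma w_hasSum {b d : ℕ} (hb : d < b) (j : ℤ) :
    HasSum (fun l => pM b d l j (fun _ => 1)) (if 0 ≤ j then (b : ℝ) else 0) := by
  have hb1 : (1 : ℝ) ≤ b := by exact_mod_cast (by omega : 1 ≤ b)
  have hb0 : (0 : ℝ) < b := by linarith
  have hinv : (1 : ℝ) / b ≤ 1 := by rw [div_le_one hb0]; exact hb1
  have hpos : (0 : ℝ) < 1 / b := by positivity
  by_cases hj : j < 0
  · rw [if_neg (by omega)]
    simp_rw [pM_neg _ j hj]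
    exact hasSum_zero
  have key : ∀ i : ℤ, ∀ s : ℝ, HasSum (fun l => pM b d l (i - 1) (fun _ => 1)) s →
      HasSum (fun l => pM b d l i (fun _ => 1)) ((if i = 0 then (b : ℝ) else 0) + s) := by
    intro i s hs
    have hsum : Summable (fun l => pM b d l i (fun _ => 1)) :=
      summable_rec (q := 1 - 1 / b) (by linarith) (fun l => w_nonneg l i)
        (fun l => mul_nonneg hpos.le (w_nonneg l (i - 1))) (hs.summable.mul_left (1 / (b : ℝ)))
        (fun l => w_succ hb l i)
    have h1 := hsum.tsum_eq_zero_add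
    simp_rw [w_succ hb] at h1
    rw [(hsum.mul_left _).tsum_add (hs.summable.mul_left _), tsum_mul_left, tsum_mul_left,
      hs.tsum_eq] at h1
    rw [hsum.hasSum_iff]
    simp only [pM] at h1
    set T := ∑' l, pM b d l i (fun _ => 1)
    split_ifs at h1 ⊢ <;> field_simp at h1 <;> nlinarith
  lift j to ℕ using (by omega)
  simp only [Nat.cast_nonneg, if_true]
  induction j with
  | zero =>
    have := key 0 0 (by simp_rw [pM_neg _ (0 - 1 : ℤ) (by norm_num)]; exact hasSum_zero)
    simpa using this
  | succ n ih =>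
    have := key (n + 1 : ℕ) b (by simpa using ih (by omega))
    simpa [show ((n : ℤ) + 1 ≠ 0) by omega] using this

lemma pM_summable {b d : ℕ} (hb : d < b) (j : ℤ) {g : ℝ → ℝ} (hg : Bd g) :
    Summable (fun l => pM b d l j g) := by
  obtain ⟨C, hC⟩ := hg
  exact Summable.of_norm_bounded ((w_hasSum hb j).summable.mul_left C)
    (fun l => by rw [Real.norm_eq_abs]; exact pM_abs l j g C hC)

lemma mu_one {b d : ℕ} (hb : d < b) (j : ℤ) : mu b d j (fun _ => 1) = if 0 ≤ j then (b : ℝ) else 0 :=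
  (w_hasSum hb j).tsum_eq

lemma mu_add {b d : ℕ} (hb : d < b) (j : ℤ) {g h : ℝ → ℝ} (hg : Bd g) (hh : Bd h) :
    mu b d j (fun x => g x + h x) = mu b d j g + mu b d j h := by
  simp only [mu, pM_add]
  exact (pM_summable hb j hg).tsum_add (pM_summable hb j hh)

lemma mu_smul {b d : ℕ} (j : ℤ) (c : ℝ) (g : ℝ → ℝ) :
    mu b d j (fun x => c * g x) = c * mu b d j g := by
  simp only [mu, pM_smul]
  exact tsum_mul_left

lemma mu_congr {b d : ℕ} (j : ℤ) {g h : ℝ → ℝ} (H : ∀ x ∈ Set.Icc (0 : ℝ) 1, g x = h x) :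
    mu b d j g = mu b d j h := by
  simp only [mu]
  exact tsum_congr fun l => pM_congr l j g h H

lemma mu_abs {b d : ℕ} (hb : d < b) (j : ℤ) {g : ℝ → ℝ} {C : ℝ}
    (H : ∀ x ∈ Set.Icc (0 : ℝ) 1, |g x| ≤ C) : |mu b d j g| ≤ C * b := by
  have hC : 0 ≤ C := le_trans (abs_nonneg _) (H 0 (by simp))
  have h1 : ‖∑' l, pM b d l j g‖ ≤ C * (if 0 ≤ j then (b : ℝ) else 0) :=
    tsum_of_norm_bounded ((w_hasSum hb j).mul_left C) (fun l => by
      rw [Real.norm_eq_abs]; exact pM_abs l j g C H)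
  refine h1.trans ?_
  gcongr
  split_ifs <;> simp

lemma Bd.add {g h : ℝ → ℝ} (hg : Bd g) (hh : Bd h) : Bd (fun x => g x + h x) := by
  obtain ⟨C, hC⟩ := hg
  obtain ⟨D, hD⟩ := hh
  exact ⟨C + D, fun x hx => (abs_add_le _ _).trans (add_le_add (hC x hx) (hD x hx))⟩

lemma Bd.smul {g : ℝ → ℝ} (c : ℝ) (hg : Bd g) : Bd (fun x => c * g x) := by
  obtain ⟨C, hC⟩ := hg
  exact ⟨|c| * C, fun x hx => by rw [abs_mul]; gcongr; exact hC x hx⟩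

lemma Bd.const (c : ℝ) : Bd (fun _ => c) := ⟨|c|, fun _ _ => le_rfl⟩

lemma Bd.sub {g h : ℝ → ℝ} (hg : Bd g) (hh : Bd h) : Bd (fun x => g x - h x) := by
  have := hg.add (hh.smul (-1))
  simpa [sub_eq_add_neg] using this

lemma Bd.sum {ι : Type*} (s : Finset ι) {g : ι → ℝ → ℝ} (hg : ∀ i ∈ s, Bd (g i)) :
    Bd (fun x => ∑ i ∈ s, g i x) := by
  classical
  induction s using Finset.induction_on with
  | empty => simpa using Bd.const 0
  | insert a s ha ih =>
    simp only [Finset.sum_insert ha]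
    exact (hg a (by simp)).add (ih fun i hi => hg i (by simp [hi]))

lemma mu_const {b d : ℕ} (hb : d < b) (j : ℤ) (c : ℝ) :
    mu b d j (fun _ => c) = c * if 0 ≤ j then (b : ℝ) else 0 := by
  have := mu_smul (b := b) (d := d) j c (fun _ => 1)
  rw [mu_one hb] at this
  simpa using this

lemma mu_sub {b d : ℕ} (hb : d < b) (j : ℤ) {g h : ℝ → ℝ} (hg : Bd g) (hh : Bd h) :
    mu b d j (fun x => g x - h x) = mu b d j g - mu b d j h := by
  have := mu_add hb j hg (hh.smul (-1))
  rw [mu_smul] at this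
  simpa [sub_eq_add_neg] using this

lemma mu_sum {b d : ℕ} (hb : d < b) (j : ℤ) {ι : Type*} (s : Finset ι) {g : ι → ℝ → ℝ}
    (hg : ∀ i ∈ s, Bd (g i)) :
    mu b d j (fun x => ∑ i ∈ s, g i x) = ∑ i ∈ s, mu b d j (g i) := by
  classical
  induction s using Finset.induction_on with
  | empty => simpa using mu_const hb j 0
  | insert a s ha ih =>
    simp only [Finset.sum_insert ha]
    rw [mu_add hb j (hg a (by simp)) (Bd.sum s fun i hi => hg i (by simp [hi])),
      ih fun i hi => hg i (by simp [hi])]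

/-- averaging operator -/
noncomputable def av (b : ℕ) (g : ℝ → ℝ) (x : ℝ) : ℝ :=
  (∑ a ∈ Finset.range b, g ((a + x) / b)) / b

lemma Bd.comp {b a : ℕ} (ha : a < b) {g : ℝ → ℝ} (hg : Bd g) :
    Bd (fun x => g ((a + x) / b)) := by
  obtain ⟨C, hC⟩ := hg
  exact ⟨C, fun x hx => hC _ (fa_mem ha hx)⟩

lemma Bd.av {b : ℕ} {g : ℝ → ℝ} (hg : Bd g) : Bd (av b g) := by
  have := (Bd.sum (Finset.range b) (g := fun a x => g ((a + x) / b))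
    (fun a ha => hg.comp (Finset.mem_range.1 ha))).smul (1 / (b : ℝ))
  have e : _root_.av b g = fun x => (1 / (b : ℝ)) * ∑ a ∈ Finset.range b, g ((a + x) / b) := by
    funext x
    simp only [_root_.av]
    ring
  rw [e]
  exact this

lemma mu_rec {b d : ℕ} (hb : d < b) (j : ℤ) {g : ℝ → ℝ} (hg : Bd g) :
    mu b d j g = (if j = 0 then g 0 else 0) + mu b d j (av b g)
      + (mu b d (j - 1) (fun x => g ((d + x) / b)) - mu b d j (fun x => g ((d + x) / b))) / b := by
  have h1 : mu b d j g = (if j = 0 then g 0 else 0) + ∑' l, pM b d (l + 1) j g :=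
    (pM_summable hb j hg).tsum_eq_zero_add
  have h2 : ∑' l, pM b d (l + 1) j g
      = (∑ a ∈ Finset.range b,
          mu b d (j - if a = d then 1 else 0) (fun x => g ((a + x) / b))) / b := by
    simp only [pM, mu]
    rw [tsum_div_const, Summable.tsum_finsetSum]
    intro a ha
    exact pM_summable hb _ (hg.comp (Finset.mem_range.1 ha))
  have h3 : mu b d j (av b g) = (∑ a ∈ Finset.range b, mu b d j (fun x => g ((a + x) / b))) / b := by
    rw [← mu_sum hb j _ (fun a ha => hg.comp (Finset.mem_range.1 ha)), div_eq_inv_mul, ← mu_smul]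
    apply mu_congr
    intro x _
    simp only [av]
    ring
  rw [h1, h2, h3, sum_shift hb (fun j a => mu b d j (fun x => g ((a + x) / b)))]
  ring


lemma sum_blocks (f : ℕ → ℝ) (u : ℕ → ℕ) (hu : Monotone u) (n : ℕ) :
    ∑ a ∈ Finset.range n, ∑ m ∈ Finset.Ico (u a) (u (a + 1)), f m
      = ∑ m ∈ Finset.Ico (u 0) (u n), f m := by
  induction n with
  | zero => simp
  | succ n ih =>
    rw [Finset.sum_range_succ, ih, Finset.sum_Ico_consecutive _ (hu (Nat.zero_le n)) (hu (Nat.le_succ n))]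

lemma count_step {b d n a : ℕ} (hb : 2 ≤ b) (hn : 1 ≤ n) (ha : a < b) :
    ((Nat.digits b (n * b + a)).count d : ℤ)
      = (Nat.digits b n).count d + if a = d then 1 else 0 := by
  have : n * b + a = a + b * n := by ring
  rw [this, Nat.digits_add b (by omega) a n ha (Or.inr (by omega)), List.count_cons]
  by_cases h : a = d <;> simp [h]

lemma pM_inv {b d : ℕ} (hb : 2 ≤ b) (l : ℕ) : ∀ (j : ℤ) (n : ℕ), 1 ≤ n →
    pM b d l j (fun x => 1 / ((n : ℝ) + x))
      = ∑ m ∈ Finset.Ico (n * b ^ l) ((n + 1) * b ^ l),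
        if ((Nat.digits b m).count d : ℤ) = (Nat.digits b n).count d + j
          then (1 : ℝ) / m else 0 := by
  have hb0 : (b : ℝ) ≠ 0 := by exact_mod_cast (by omega : b ≠ 0)
  induction l with
  | zero =>
    intro j n hn
    simp [pM, eq_comm]
  | succ l ih =>
    intro j n hn
    have e : ∀ a : ℕ, (fun x : ℝ => 1 / ((n : ℝ) + ((a : ℝ) + x) / b))
        = fun x => (b : ℝ) * (1 / (((n * b + a : ℕ) : ℝ) + x)) := by
      intro a
      funext x
      have : (n : ℝ) + ((a : ℝ) + x) / b = (((n * b + a : ℕ) : ℝ) + x) / b := by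
        push_cast; field_simp; ring
      rw [this, one_div_div]
      ring
    simp only [pM, e, pM_smul]
    rw [← Finset.mul_sum, mul_div_cancel_left₀ _ hb0]
    have hu : Monotone (fun a : ℕ => (n * b + a) * b ^ l) := by
      intro a a' h
      dsimp only
      gcongr
    have := sum_blocks (fun m => if ((Nat.digits b m).count d : ℤ) = (Nat.digits b n).count d + j
          then (1 : ℝ) / m else 0) _ hu b
    have e1 : (n * b + 0) * b ^ l = n * b ^ (l + 1) := by ring
    have e2 : (n * b + b) * b ^ l = (n + 1) * b ^ (l + 1) := by ring
    simp only [e1, e2] at this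
    rw [← this]
    refine Finset.sum_congr rfl fun a ha => ?_
    rw [ih _ (n * b + a) (by nlinarith)]
    rw [count_step hb hn (Finset.mem_range.1 ha)]
    refine Finset.sum_congr rfl fun m _ => ?_
    congr 1
    rw [eq_iff_iff]
    constructor <;> intro h <;> linarith

lemma bd_inv {n : ℕ} (hn : 1 ≤ n) : Bd (fun x => 1 / ((n : ℝ) + x)) := by
  refine ⟨1, fun x hx => ?_⟩
  have h1 : (1 : ℝ) ≤ n := by exact_mod_cast hn
  have h2 : (1 : ℝ) ≤ n + x := by linarith [hx.1]
  rw [abs_of_nonneg (by positivity), div_le_one (by linarith)]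
  exact h2

lemma irwin_eq {b d : ℕ} (hb : 2 ≤ b) (hd : d < b) (k : ℕ) :
    irwinSum b d k = ∑ n ∈ Finset.range (b - 1),
      mu b d (k - if n + 1 = d then 1 else 0) (fun x => 1 / (((n + 1 : ℕ) : ℝ) + x)) := by
  set f : ℕ → ℝ := fun m => if 0 < m ∧ (Nat.digits b m).count d = k then (1 : ℝ) / m else 0 with hf
  have hf0 : ∀ m, 0 ≤ f m := by
    intro m
    simp only [hf]
    split_ifs <;> positivity
  have hblock : ∀ l, ∑ m ∈ Finset.Ico (b ^ l) (b ^ (l + 1)), f m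
      = ∑ n ∈ Finset.range (b - 1),
        pM b d l (k - if n + 1 = d then 1 else 0) (fun x => 1 / (((n + 1 : ℕ) : ℝ) + x)) := by
    intro l
    have hu : Monotone (fun a : ℕ => (a + 1) * b ^ l) := by
      intro a a' h
      dsimp only
      gcongr
    have := sum_blocks f _ hu (b - 1)
    have e1 : (0 + 1) * b ^ l = b ^ l := by ring
    have e2 : (b - 1 + 1) * b ^ l = b ^ (l + 1) := by
      rw [Nat.sub_add_cancel (by omega)]; ring
    simp only [e1, e2] at this
    rw [← this]
    refine Finset.sum_congr rfl fun n hn => ?_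
    have hnb : n + 1 < b := by have := Finset.mem_range.1 hn; omega
    rw [pM_inv hb l _ (n + 1) (by omega)]
    refine Finset.sum_congr rfl fun m hm => ?_
    have hm0 : 0 < m := by
      have := (Finset.mem_Ico.1 hm).1
      have h2 : 0 < (n + 1) * b ^ l := by positivity
      omega
    have hc : ((Nat.digits b (n + 1)).count d : ℤ) = if n + 1 = d then 1 else 0 := by
      rw [Nat.digits_of_lt b (n + 1) (by omega) hnb]
      by_cases h : n + 1 = d <;> simp [h]
    rw [hc]
    simp only [hf, hm0, true_and]
    congr 1
    rw [eq_iff_iff]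
    constructor
    · intro h; rw [h]; ring
    · intro h
      have : ((Nat.digits b m).count d : ℤ) = k := by linarith
      exact_mod_cast this
  have hS : HasSum (fun l => ∑ m ∈ Finset.Ico (b ^ l) (b ^ (l + 1)), f m)
      (∑ n ∈ Finset.range (b - 1),
        mu b d (k - if n + 1 = d then 1 else 0) (fun x => 1 / (((n + 1 : ℕ) : ℝ) + x))) := by
    simp_rw [hblock]
    exact hasSum_sum fun n _ => (pM_summable hd _ (bd_inv (by omega))).hasSum
  set S := ∑ n ∈ Finset.range (b - 1),
        mu b d (k - if n + 1 = d then 1 else 0) (fun x => 1 / (((n + 1 : ℕ) : ℝ) + x))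
  have hpart : ∀ L, ∑ m ∈ Finset.range (b ^ L), f m
      = ∑ l ∈ Finset.range L, ∑ m ∈ Finset.Ico (b ^ l) (b ^ (l + 1)), f m := by
    intro L
    rw [sum_blocks f (fun l => b ^ l) (fun i j h => Nat.pow_le_pow_right (by omega) h) L]
    rw [Finset.range_eq_Ico, ← Finset.sum_Ico_consecutive f (Nat.zero_le 1)
      (Nat.one_le_pow L b (by omega))]
    simp [hf]
  have hsum : Summable f := by
    refine summable_of_sum_range_le (c := S) hf0 fun n => ?_
    calc ∑ i ∈ Finset.range n, f i ≤ ∑ i ∈ Finset.range (b ^ n), f i :=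
          Finset.sum_le_sum_of_subset_of_nonneg
            (Finset.range_mono (Nat.lt_pow_self (by omega)).le) (fun i _ _ => hf0 i)
      _ = _ := hpart n
      _ ≤ S := sum_le_hasSum _ (fun l _ => Finset.sum_nonneg fun i _ => hf0 i) hS
  have t1 : Tendsto (fun L => ∑ m ∈ Finset.range (b ^ L), f m) atTop (nhds (∑' m, f m)) :=
    hsum.hasSum.tendsto_sum_nat.comp (tendsto_pow_atTop_atTop_of_one_lt (by omega))
  simp_rw [hpart] at t1
  exact tendsto_nhds_unique t1 hS.tendsto_sum_nat


open scoped ContDiff in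
/-- smooth functions on a neighbourhood of the unit interval -/
def Sm (g : ℝ → ℝ) : Prop := ContDiffOn ℝ ∞ g (Set.Ioi (-1 / 2 : ℝ))

lemma icc_sub {x : ℝ} (hx : x ∈ Set.Icc (0 : ℝ) 1) : x ∈ Set.Ioi (-1 / 2 : ℝ) := by
  have := hx.1
  simp only [Set.mem_Ioi]
  linarith

lemma Sm.deriv {g : ℝ → ℝ} (hg : Sm g) : Sm (deriv g) :=
  ((contDiffOn_infty_iff_deriv_of_isOpen isOpen_Ioi).1 hg).2

lemma Sm.hasDerivAt {g : ℝ → ℝ} (hg : Sm g) {x : ℝ} (hx : x ∈ Set.Ioi (-1 / 2 : ℝ)) :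
    HasDerivAt g (_root_.deriv g x) x :=
  ((((contDiffOn_infty_iff_deriv_of_isOpen isOpen_Ioi).1 hg).1 x hx).differentiableAt
    (isOpen_Ioi.mem_nhds hx)).hasDerivAt

lemma Sm.iter {g : ℝ → ℝ} (hg : Sm g) (n : ℕ) : Sm (iteratedDeriv n g) := by
  induction n with
  | zero => simpa using hg
  | succ n ih => rw [iteratedDeriv_succ]; exact ih.deriv

lemma Sm.contOn {g : ℝ → ℝ} (hg : Sm g) : ContinuousOn g (Set.Icc (0 : ℝ) 1) :=
  hg.continuousOn.mono fun _ hx => icc_sub hx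

lemma Sm.bd {g : ℝ → ℝ} (hg : Sm g) : Bd g := by
  obtain ⟨C, hC⟩ := isCompact_Icc.exists_bound_of_continuousOn hg.contOn
  exact ⟨C, hC⟩

lemma Sm.antideriv {g : ℝ → ℝ} (hg : Sm g) : ∃ G, Sm G ∧
    (∀ x ∈ Set.Ioi (-1 / 2 : ℝ), _root_.deriv G x = g x) ∧ G 1 - G 0 = ∫ x in (0 : ℝ)..1, g x := by
  have hd : ∀ x ∈ Set.Ioi (-1 / 2 : ℝ), HasDerivAt (fun y => ∫ t in (0 : ℝ)..y, g t) (g x) x := by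
    intro x hx
    have hsub : Set.uIcc 0 x ⊆ Set.Ioi (-1 / 2 : ℝ) := by
      apply (convex_Ioi _).ordConnected.uIcc_subset
      · norm_num
      · exact hx
    refine intervalIntegral.integral_hasDerivAt_right
      ((hg.continuousOn.mono hsub).intervalIntegrable) ?_ (hg.continuousOn.continuousAt
        (isOpen_Ioi.mem_nhds hx))
    exact hg.continuousOn.stronglyMeasurableAtFilter isOpen_Ioi x hx
  refine ⟨_, ?_, fun x hx => (hd x hx).deriv, by simp⟩
  refine (contDiffOn_infty_iff_deriv_of_isOpen isOpen_Ioi).2 ⟨fun x hx =>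
    (hd x hx).differentiableAt.differentiableWithinAt, ?_⟩
  exact ContDiffOn.congr hg fun x hx => (hd x hx).deriv

lemma taylor_bd (n : ℕ) : ∀ g, Sm g → ∃ C, ∀ x ∈ Set.Icc (0 : ℝ) 1, ∀ y ∈ Set.Icc (0 : ℝ) 1,
    |g y - ∑ i ∈ Finset.range n, iteratedDeriv i g x * (y - x) ^ i / (i.factorial : ℝ)|
      ≤ C * |y - x| ^ n := by
  induction n with
  | zero =>
    intro g hg
    obtain ⟨C, hC⟩ := hg.bd
    exact ⟨C, fun x _ y hy => by simpa using hC y hy⟩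
  | succ n ih =>
    intro g hg
    obtain ⟨C, hC⟩ := ih _ hg.deriv
    refine ⟨C, fun x hx y hy => ?_⟩
    have hC0 : 0 ≤ C * |y - x| ^ n := (abs_nonneg _).trans (hC x hx y hy)
    set R : ℝ → ℝ := fun t => g t - ∑ i ∈ Finset.range (n + 1),
      iteratedDeriv i g x * (t - x) ^ i / (i.factorial : ℝ) with hR
    have hsub : Set.uIcc x y ⊆ Set.Icc (0 : ℝ) 1 := Set.ordConnected_Icc.uIcc_subset hx hy
    have hd : ∀ t ∈ Set.Icc (0 : ℝ) 1, HasDerivAt R (deriv g t - ∑ i ∈ Finset.range n,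
        iteratedDeriv i (deriv g) x * (t - x) ^ i / (i.factorial : ℝ)) t := by
      intro t ht
      refine (hg.hasDerivAt (icc_sub ht)).sub ?_
      have h1 : ∀ i ∈ Finset.range (n + 1), HasDerivAt
          (fun t => iteratedDeriv i g x * (t - x) ^ i / (i.factorial : ℝ))
          (iteratedDeriv i g x * (i * (t - x) ^ (i - 1)) / (i.factorial : ℝ)) t := by
        intro i _
        have := (((hasDerivAt_id t).sub_const x).pow i).const_mul (iteratedDeriv i g x)
          |>.div_const (i.factorial : ℝ)
        simpa using this
      have h2 := HasDerivAt.fun_sum h1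
      convert h2 using 1
      rw [Finset.sum_range_succ']
      simp only [Nat.cast_zero, zero_mul, mul_zero, zero_div, add_zero]
      refine Finset.sum_congr rfl fun i _ => ?_
      rw [iteratedDeriv_succ', Nat.factorial_succ]
      have : (i.factorial : ℝ) ≠ 0 := by positivity
      push_cast
      field_simp
    have hmv := (convex_uIcc x y).norm_image_sub_le_of_norm_hasDerivWithin_le (f := R)
      (C := C * |y - x| ^ n) (fun t ht => (hd t (hsub ht)).hasDerivWithinAt) (fun t ht => by
        rw [Real.norm_eq_abs]
        refine (hC x hx t (hsub ht)).trans ?_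
        have hle : |t - x| ≤ |y - x| := Set.abs_sub_left_of_mem_uIcc ht
        by_cases hxy : y = x
        · subst hxy
          have : t = y := by simpa using ht
          rw [this]
        · have hpos : 0 < |y - x| ^ n := by
            have := abs_pos.2 (sub_ne_zero.2 hxy)
            positivity
          have : 0 ≤ C := by
            by_contra hneg
            push Not at hneg
            nlinarith
          gcongr) Set.left_mem_uIcc Set.right_mem_uIcc
    have hRx : R x = 0 := by
      simp only [hR]
      rw [Finset.sum_range_succ']
      simp
    rw [hRx, sub_zero, Real.norm_eq_abs, Real.norm_eq_abs] at hmv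
    calc |R y| ≤ _ := hmv
      _ = _ := by rw [pow_succ]; ring

/-- uniform expansions -/
def UE (N : ℕ) (h : ℕ → ℝ → ℝ) : Prop :=
  ∃ Q : ℕ → ℝ → ℝ, (∀ r, Sm (Q r)) ∧ ∃ C : ℝ, ∀ᶠ b : ℕ in atTop, ∀ x ∈ Set.Icc (0 : ℝ) 1,
    |h b x - ∑ r ∈ Finset.range N, Q r x * (1 / (b : ℝ)) ^ r| ≤ C * (1 / (b : ℝ)) ^ N

/-- scalar expansions -/
def EE (N : ℕ) (f : ℕ → ℝ) : Prop :=
  ∃ c : ℕ → ℝ, ∃ C : ℝ, ∀ᶠ b : ℕ in atTop,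
    |f b - ∑ r ∈ Finset.range N, c r * (1 / (b : ℝ)) ^ r| ≤ C * (1 / (b : ℝ)) ^ N

lemma Sm.const (c : ℝ) : Sm (fun _ => c) := contDiffOn_const

lemma UE.congr {N : ℕ} {h h' : ℕ → ℝ → ℝ} (H : UE N h)
    (e : ∀ᶠ b : ℕ in atTop, ∀ x ∈ Set.Icc (0 : ℝ) 1, h' b x = h b x) : UE N h' := by
  obtain ⟨Q, hQ, C, hC⟩ := H
  refine ⟨Q, hQ, C, ?_⟩
  filter_upwards [hC, e] with b h1 h2 x hx
  rw [h2 x hx]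
  exact h1 x hx

lemma UE.small {N : ℕ} {h : ℕ → ℝ → ℝ} (C : ℝ)
    (e : ∀ᶠ b : ℕ in atTop, ∀ x ∈ Set.Icc (0 : ℝ) 1, |h b x| ≤ C * (1 / (b : ℝ)) ^ N) :
    UE N h := by
  refine ⟨fun _ _ => 0, fun _ => Sm.const 0, C, ?_⟩
  filter_upwards [e] with b h1 x hx
  simpa using h1 x hx

lemma UE.add {N : ℕ} {h h' : ℕ → ℝ → ℝ} (H : UE N h) (H' : UE N h') :
    UE N (fun b x => h b x + h' b x) := by
  obtain ⟨Q, hQ, C, hC⟩ := H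
  obtain ⟨Q', hQ', C', hC'⟩ := H'
  refine ⟨fun r x => Q r x + Q' r x, fun r => (hQ r).add (hQ' r), C + C', ?_⟩
  filter_upwards [hC, hC'] with b h1 h2 x hx
  simp only [add_mul, Finset.sum_add_distrib]
  rw [add_sub_add_comm]
  exact (abs_add_le _ _).trans (add_le_add (h1 x hx) (h2 x hx))

lemma UE.mul {N : ℕ} {h : ℕ → ℝ → ℝ} {p : ℝ → ℝ} (hp : Sm p) (H : UE N h) :
    UE N (fun b x => p x * h b x) := by
  obtain ⟨Q, hQ, C, hC⟩ := H
  obtain ⟨D, hD⟩ := hp.bd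
  refine ⟨fun r x => p x * Q r x, fun r => hp.mul (hQ r), D * C, ?_⟩
  filter_upwards [hC] with b h1 x hx
  simp only [mul_assoc]
  rw [← Finset.mul_sum, ← mul_sub, abs_mul]
  have hD0 : 0 ≤ D := (abs_nonneg _).trans (hD x hx)
  exact mul_le_mul (hD x hx) (h1 x hx) (abs_nonneg _) hD0

lemma UE.shift {N : ℕ} {h : ℕ → ℝ → ℝ} (H : UE N h) :
    UE (N + 1) (fun b x => 1 / (b : ℝ) * h b x) := by
  obtain ⟨Q, hQ, C, hC⟩ := H
  refine ⟨fun r x => if r = 0 then 0 else Q (r - 1) x, fun r => ?_, C, ?_⟩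
  · by_cases h : r = 0
    · simpa [h] using Sm.const 0
    · simpa [h] using hQ (r - 1)
  · filter_upwards [hC] with b h1 x hx
    rw [Finset.sum_range_succ']
    simp only [Nat.add_eq_zero_iff, one_ne_zero, and_false, if_false, Nat.add_sub_cancel, if_true,
      zero_mul, add_zero, pow_succ]
    have : ∑ r ∈ Finset.range N, Q r x * ((1 / (b : ℝ)) ^ r * (1 / b))
        = 1 / b * ∑ r ∈ Finset.range N, Q r x * (1 / (b : ℝ)) ^ r := by
      rw [Finset.mul_sum]
      exact Finset.sum_congr rfl fun r _ => by ring
    rw [this, ← mul_sub, abs_mul, abs_of_nonneg (by positivity : (0 : ℝ) ≤ 1 / b)]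
    calc _ ≤ 1 / (b : ℝ) * (C * (1 / (b : ℝ)) ^ N) := by gcongr; exact h1 x hx
      _ = _ := by ring

lemma UE.mono {N : ℕ} {h : ℕ → ℝ → ℝ} (H : UE (N + 1) h) : UE N h := by
  obtain ⟨Q, hQ, C, hC⟩ := H
  obtain ⟨D, hD⟩ := (hQ N).bd
  refine ⟨Q, hQ, |C| + D, ?_⟩
  filter_upwards [hC, eventually_ge_atTop 1] with b h1 hb x hx
  have h2 := h1 x hx
  rw [Finset.sum_range_succ] at h2
  have hb1 : (1 : ℝ) ≤ b := by exact_mod_cast hb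
  have hi : 1 / (b : ℝ) ≤ 1 := by rw [div_le_one (by linarith)]; exact hb1
  have hi0 : (0 : ℝ) ≤ 1 / b := by positivity
  have hp : (0 : ℝ) ≤ (1 / (b : ℝ)) ^ N := by positivity
  set S := ∑ r ∈ Finset.range N, Q r x * (1 / (b : ℝ)) ^ r
  calc |h b x - S| = |(h b x - (S + Q N x * (1 / (b : ℝ)) ^ N)) + Q N x * (1 / (b : ℝ)) ^ N| := by
        congr 1; ring
    _ ≤ C * (1 / (b : ℝ)) ^ (N + 1) + D * (1 / (b : ℝ)) ^ N := by
        refine (abs_add_le _ _).trans (add_le_add h2 ?_)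
        rw [abs_mul, abs_of_nonneg hp]
        gcongr
        exact hD x hx
    _ ≤ (|C| + D) * (1 / (b : ℝ)) ^ N := by
        rw [add_mul]
        gcongr ?_ + _
        calc C * (1 / (b : ℝ)) ^ (N + 1) ≤ |C| * (1 / (b : ℝ)) ^ (N + 1) := by
              gcongr; exact le_abs_self C
          _ ≤ _ := by gcongr _ * ?_; exact pow_le_pow_of_le_one hi0 hi (Nat.le_succ N)

lemma UE.zero (N : ℕ) : UE N (fun _ _ => 0) :=
  UE.small 0 (Eventually.of_forall fun b x _ => by simp)

lemma UE.sum {N : ℕ} {ι : Type*} (s : Finset ι) {h : ι → ℕ → ℝ → ℝ} (H : ∀ i ∈ s, UE N (h i)) :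
    UE N (fun b x => ∑ i ∈ s, h i b x) := by
  classical
  induction s using Finset.induction_on with
  | empty => simpa using UE.zero N
  | insert a s ha ih =>
    simp only [Finset.sum_insert ha]
    exact (H a (by simp)).add (ih fun i hi => H i (by simp [hi]))

lemma UE.of_sm {N : ℕ} {g : ℝ → ℝ} (hg : Sm g) : UE N (fun _ => g) := by
  cases N with
  | zero =>
    obtain ⟨D, hD⟩ := hg.bd
    exact UE.small D (Eventually.of_forall fun b x hx => by simpa using hD x hx)
  | succ N =>
    refine ⟨fun r x => if r = 0 then g x else 0, fun r => ?_, 0, Eventually.of_forall fun b x hx => ?_⟩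
    · by_cases h : r = 0
      · simpa [h] using hg
      · simpa [h] using Sm.const 0
    · rw [Finset.sum_range_succ']
      simp

lemma UE.shifts {N : ℕ} {h : ℕ → ℝ → ℝ} (H : UE N h) (i : ℕ) :
    UE N (fun b x => (1 / (b : ℝ)) ^ i * h b x) := by
  induction i with
  | zero => simpa using H
  | succ i ih =>
    refine (ih.shift.mono).congr (Eventually.of_forall fun b x _ => ?_)
    ring


noncomputable def qq (i : ℕ) (x : ℝ) : ℝ := ((1 - x) ^ i - (-x) ^ i) / (i.factorial : ℝ)

lemma qq_sm (i : ℕ) : Sm (qq i) := by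
  unfold qq Sm
  fun_prop

lemma av_eq (N : ℕ) {G : ℝ → ℝ} (hG : Sm G) : ∃ C : ℝ, ∀ b : ℕ, 1 ≤ b → ∀ x ∈ Set.Icc (0 : ℝ) 1,
    |(b : ℝ) * (av b (deriv G) x - (G 1 - G 0))
      + ∑ i ∈ Finset.range N, qq (i + 2) x * ((1 / (b : ℝ)) ^ i *
          av b (iteratedDeriv (i + 1) (deriv G)) x)| ≤ C * (1 / (b : ℝ)) ^ N := by
  obtain ⟨C, hC⟩ := taylor_bd (N + 2) G hG
  have hC0 : 0 ≤ C := by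
    have := hC 0 (by simp) 1 (by simp)
    have := (abs_nonneg _).trans this
    simpa using this
  refine ⟨2 * C, fun b hb x hx => ?_⟩
  have hb0 : (0 : ℝ) < b := by exact_mod_cast hb
  have hterm : ∀ a ∈ Finset.range b, |(G (((a + 1 : ℕ) : ℝ) / b) - G ((a : ℝ) / b))
      - ∑ i ∈ Finset.range (N + 2), qq i x * ((1 / (b : ℝ)) ^ i *
        iteratedDeriv i G ((a + x) / b))| ≤ 2 * C * (1 / (b : ℝ)) ^ (N + 2) := by
    intro a ha
    have hab := Finset.mem_range.1 ha
    have hc := fa_mem hab hx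
    have h1 := hC _ hc _ (fa_mem hab (x := 1) (by simp))
    have h0 := hC _ hc _ (fa_mem hab (x := 0) (by simp))
    have e1 : ((a : ℝ) + 1) / b - (a + x) / b = (1 - x) * (1 / b) := by field_simp; ring
    have e0 : ((a : ℝ) + 0) / b - (a + x) / b = (-x) * (1 / b) := by field_simp; ring
    rw [e1] at h1
    rw [e0] at h0
    have b1 : |(1 - x) * (1 / (b : ℝ))| ^ (N + 2) ≤ (1 / (b : ℝ)) ^ (N + 2) := by
      gcongr
      rw [abs_mul, abs_of_nonneg (by positivity : (0 : ℝ) ≤ 1 / b)]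
      apply mul_le_of_le_one_left (by positivity)
      rw [abs_le]; constructor <;> linarith [hx.1, hx.2]
    have b0 : |(-x) * (1 / (b : ℝ))| ^ (N + 2) ≤ (1 / (b : ℝ)) ^ (N + 2) := by
      gcongr
      rw [abs_mul, abs_of_nonneg (by positivity : (0 : ℝ) ≤ 1 / b)]
      apply mul_le_of_le_one_left (by positivity)
      rw [abs_le]; constructor <;> linarith [hx.1, hx.2]
    have h1' := h1.trans (mul_le_mul_of_nonneg_left b1 hC0)
    have h0' := h0.trans (mul_le_mul_of_nonneg_left b0 hC0)
    have e2 : ∑ i ∈ Finset.range (N + 2), qq i x * ((1 / (b : ℝ)) ^ i *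
        iteratedDeriv i G ((a + x) / b))
        = ∑ i ∈ Finset.range (N + 2), iteratedDeriv i G ((a + x) / b) * ((1 - x) * (1 / (b : ℝ))) ^ i
            / (i.factorial : ℝ)
        - ∑ i ∈ Finset.range (N + 2), iteratedDeriv i G ((a + x) / b) * ((-x) * (1 / (b : ℝ))) ^ i
            / (i.factorial : ℝ) := by
      rw [← Finset.sum_sub_distrib]
      refine Finset.sum_congr rfl fun i _ => ?_
      simp only [qq, mul_pow]
      ring
    rw [e2]
    push_cast
    rw [add_zero] at h0'
    rw [sub_sub_sub_comm]
    refine (abs_sub _ _).trans ?_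
    linarith
  have hsum := (Finset.abs_sum_le_sum_abs _ _).trans (Finset.sum_le_sum hterm)
  rw [Finset.sum_sub_distrib, Finset.sum_range_sub (fun a : ℕ => G ((a : ℝ) / b)), Finset.sum_comm,
    Finset.sum_range_succ', Finset.sum_range_succ'] at hsum
  simp only [← Finset.mul_sum] at hsum
  have q0 : qq 0 x = 0 := by simp [qq]
  have q1 : qq (0 + 1) x = 1 := by simp [qq]
  have ea : ∀ i : ℕ, ∑ a ∈ Finset.range b, iteratedDeriv (i + 1) G ((a + x) / b)
      = b * av b (iteratedDeriv i (deriv G)) x := by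
    intro i
    simp only [av, iteratedDeriv_succ']
    field_simp
  rw [q0, q1, ea 0] at hsum
  simp only [ea] at hsum
  rw [div_self hb0.ne'] at hsum
  simp only [Nat.cast_zero, zero_div, zero_add, zero_mul, add_zero, pow_one, one_mul,
    iteratedDeriv_zero, Finset.sum_const, Finset.card_range, nsmul_eq_mul] at hsum
  have e3 : (b : ℝ) * (av b (deriv G) x - (G 1 - G 0))
      + ∑ i ∈ Finset.range N, qq (i + 2) x * ((1 / (b : ℝ)) ^ i *
          av b (iteratedDeriv (i + 1) (deriv G)) x)
      = - (b * (G 1 - G 0 - (∑ i ∈ Finset.range N, qq (i + 1 + 1) x * ((1 / (b : ℝ)) ^ (i + 1 + 1) *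
          (b * av b (iteratedDeriv (i + 1) (deriv G)) x)) + 1 / b * (b * av b (deriv G) x)))) := by
    have : ∑ i ∈ Finset.range N, qq (i + 2) x * ((1 / (b : ℝ)) ^ i *
          av b (iteratedDeriv (i + 1) (deriv G)) x)
        = b * ∑ i ∈ Finset.range N, qq (i + 1 + 1) x * ((1 / (b : ℝ)) ^ (i + 1 + 1) *
          (b * av b (iteratedDeriv (i + 1) (deriv G)) x)) := by
      rw [Finset.mul_sum]
      refine Finset.sum_congr rfl fun i _ => ?_
      rw [pow_succ, pow_succ]
      field_simp
    rw [this]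
    field_simp
    ring
  rw [e3, abs_neg, abs_mul, abs_of_pos hb0]
  calc _ ≤ (b : ℝ) * (2 * C * (b * (1 / (b : ℝ)) ^ (N + 2))) := by gcongr
    _ = _ := by rw [pow_succ, pow_succ]; field_simp

lemma av_congr {b : ℕ} {g h : ℝ → ℝ} (H : ∀ x ∈ Set.Ioi (-1 / 2 : ℝ), g x = h x) {x : ℝ}
    (hx : x ∈ Set.Icc (0 : ℝ) 1) : av b g x = av b h x := by
  simp only [av]
  congr 1
  exact Finset.sum_congr rfl fun a ha => H _ (icc_sub (fa_mem (Finset.mem_range.1 ha) hx))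

/-- the scaled defect of the averaging operator -/
noncomputable def hh (g : ℝ → ℝ) (b : ℕ) (x : ℝ) : ℝ :=
  (b : ℝ) * (av b g x - ∫ t in (0 : ℝ)..1, g t)

lemma av_abs {b : ℕ} (hb : 1 ≤ b) {g : ℝ → ℝ} {C : ℝ} (hC : ∀ x ∈ Set.Icc (0 : ℝ) 1, |g x| ≤ C)
    {x : ℝ} (hx : x ∈ Set.Icc (0 : ℝ) 1) : |av b g x| ≤ C := by
  have hb0 : (0 : ℝ) < b := by exact_mod_cast hb
  simp only [av]
  rw [abs_div, abs_of_pos hb0, div_le_iff₀ hb0]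
  refine (Finset.abs_sum_le_sum_abs _ _).trans ?_
  refine (Finset.sum_le_sum fun a ha => hC _ (fa_mem (Finset.mem_range.1 ha) hx)).trans ?_
  simp [mul_comm]

lemma hh_step (N : ℕ) (H : ∀ g, Sm g → UE N (fun b => av b g)) {g : ℝ → ℝ} (hg : Sm g) :
    UE N (hh g) := by
  obtain ⟨G, hG, hd, hI⟩ := hg.antideriv
  obtain ⟨C, hC⟩ := av_eq N hG
  have h1 := UE.sum (N := N) (Finset.range N) (h := fun i b x => qq (i + 2) x * ((1 / (b : ℝ)) ^ i *
          av b (iteratedDeriv (i + 1) (deriv G)) x)) (fun i _ =>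
            ((H _ (hG.deriv.iter (i + 1))).shifts i).mul (qq_sm (i + 2)))
  have h2 := (h1.mul (Sm.const (-1))).add (UE.small (N := N) (h := fun b x =>
    (b : ℝ) * (av b (deriv G) x - (G 1 - G 0))
      + ∑ i ∈ Finset.range N, qq (i + 2) x * ((1 / (b : ℝ)) ^ i *
          av b (iteratedDeriv (i + 1) (deriv G)) x)) C
    ((eventually_ge_atTop 1).mono hC))
  refine h2.congr (Eventually.of_forall fun b x hx => ?_)
  simp only [hh]
  rw [← hI, av_congr (fun x hx => (hd x hx).symm) hx]
  ring

lemma av_UE (N : ℕ) : ∀ g, Sm g → UE N (fun b => av b g) := by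
  induction N with
  | zero =>
    intro g hg
    obtain ⟨C, hC⟩ := hg.bd
    refine UE.small C ?_
    filter_upwards [eventually_ge_atTop 1] with b hb x hx
    simpa using av_abs hb hC hx
  | succ N ih =>
    intro g hg
    refine ((UE.of_sm (Sm.const (∫ t in (0 : ℝ)..1, g t))).add (hh_step N ih hg).shift).congr ?_
    filter_upwards [eventually_ge_atTop 1] with b hb x hx
    have hb0 : (b : ℝ) ≠ 0 := by exact_mod_cast (by omega : b ≠ 0)
    simp only [hh]
    field_simp
    ring

lemma hh_UE (N : ℕ) {g : ℝ → ℝ} (hg : Sm g) : UE N (hh g) := hh_step N (av_UE N) hg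

lemma hh_bd {g : ℝ → ℝ} (hg : Sm g) : ∃ C, ∀ᶠ b : ℕ in atTop, ∀ x ∈ Set.Icc (0 : ℝ) 1,
    |hh g b x| ≤ C := by
  obtain ⟨Q, _, C, hC⟩ := hh_UE 0 hg
  exact ⟨C, by simpa using hC⟩

/-- first order term -/
lemma hh_one {g : ℝ → ℝ} (hg : Sm g) : ∃ K C, ∀ᶠ b : ℕ in atTop, ∀ x ∈ Set.Icc (0 : ℝ) 1,
    |hh g b x - K * (x - 1 / 2)| ≤ C * (1 / (b : ℝ)) := by
  obtain ⟨G, hG, hd, hI⟩ := hg.antideriv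
  obtain ⟨C, hC⟩ := av_eq 1 hG
  obtain ⟨D, hD⟩ := hh_bd hG.deriv.deriv
  refine ⟨∫ t in (0 : ℝ)..1, deriv (deriv G) t, C + D, ?_⟩
  filter_upwards [eventually_ge_atTop 1, hD] with b hb hD x hx
  have hb0 : (0 : ℝ) < b := by exact_mod_cast hb
  have h1 := hC b hb x hx
  have h2 := hD x hx
  have e1 : (b : ℝ) * (av b (deriv G) x - (G 1 - G 0)) = hh g b x := by
    simp only [hh]
    rw [← hI, av_congr (fun x hx => (hd x hx).symm) hx]
  rw [e1] at h1
  simp only [Finset.sum_range_one, pow_zero, one_mul, pow_one, zero_add, iteratedDeriv_one] at h1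
  set K := ∫ t in (0 : ℝ)..1, deriv (deriv G) t with hK
  have q2 : qq 2 x = 1 / 2 - x := by simp [qq]; ring
  rw [q2] at h1
  have e2 : hh g b x - K * (x - 1 / 2)
      = (hh g b x + (1 / 2 - x) * av b (deriv (deriv G)) x)
        - (1 / 2 - x) * (1 / b * hh (deriv (deriv G)) b x) := by
    simp only [hh]
    rw [← hK]
    field_simp
    ring
  rw [e2]
  refine (abs_sub _ _).trans ?_
  rw [add_mul]
  refine add_le_add h1 ?_
  rw [abs_mul, abs_mul, abs_of_pos (by positivity : (0 : ℝ) < 1 / b)]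
  have hx2 : |1 / 2 - x| ≤ 1 := by rw [abs_le]; constructor <;> linarith [hx.1, hx.2]
  calc |1 / 2 - x| * (1 / (b : ℝ) * |hh (deriv (deriv G)) b x|) ≤ 1 * (1 / (b : ℝ) * D) := by gcongr
    _ = _ := by ring

/-- expansion of `g ((d+x)/b)` -/
lemma comp_UE (N d : ℕ) {g : ℝ → ℝ} (hg : Sm g) : UE N (fun b x => g ((d + x) / b)) := by
  obtain ⟨C, hC⟩ := taylor_bd N g hg
  refine ⟨fun r x => iteratedDeriv r g 0 * ((d : ℝ) + x) ^ r / (r.factorial : ℝ), fun r => ?_,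
    |C| * ((d : ℝ) + 1) ^ N, ?_⟩
  · unfold Sm; fun_prop
  · filter_upwards [eventually_gt_atTop d] with b hb x hx
    have h := hC 0 (by simp) _ (fa_mem hb hx)
    have hb0 : (0 : ℝ) < b := by exact_mod_cast (by omega : 0 < b)
    have hx0 := hx.1
    have hx1 := hx.2
    simp only [sub_zero] at h
    have e : ∑ r ∈ Finset.range N, iteratedDeriv r g 0 * ((d : ℝ) + x) ^ r / (r.factorial : ℝ)
          * (1 / (b : ℝ)) ^ r
        = ∑ i ∈ Finset.range N, iteratedDeriv i g 0 * (((d : ℝ) + x) / b) ^ i / (i.factorial : ℝ) := by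
      refine Finset.sum_congr rfl fun i _ => ?_
      rw [div_pow, div_pow]
      field_simp
      try simp
    rw [e]
    refine h.trans ?_
    rw [abs_of_nonneg (by positivity), div_eq_mul_one_div, mul_pow, ← mul_assoc]
    gcongr
    exact le_abs_self C


lemma EE.congr {N : ℕ} {f f' : ℕ → ℝ} (H : EE N f) (e : ∀ᶠ b : ℕ in atTop, f' b = f b) :
    EE N f' := by
  obtain ⟨c, C, hC⟩ := H
  refine ⟨c, C, ?_⟩
  filter_upwards [hC, e] with b h1 h2
  rw [h2]
  exact h1

lemma EE.small {N : ℕ} {f : ℕ → ℝ} (C : ℝ)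
    (e : ∀ᶠ b : ℕ in atTop, |f b| ≤ C * (1 / (b : ℝ)) ^ N) : EE N f := by
  refine ⟨fun _ => 0, C, ?_⟩
  filter_upwards [e] with b h1
  simpa using h1

lemma EE.add {N : ℕ} {f f' : ℕ → ℝ} (H : EE N f) (H' : EE N f') :
    EE N (fun b => f b + f' b) := by
  obtain ⟨c, C, hC⟩ := H
  obtain ⟨c', C', hC'⟩ := H'
  refine ⟨fun r => c r + c' r, C + C', ?_⟩
  filter_upwards [hC, hC'] with b h1 h2
  simp only [add_mul, Finset.sum_add_distrib]
  rw [add_sub_add_comm]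
  exact (abs_add_le _ _).trans (add_le_add h1 h2)

lemma EE.mul {N : ℕ} {f : ℕ → ℝ} (p : ℝ) (H : EE N f) : EE N (fun b => p * f b) := by
  obtain ⟨c, C, hC⟩ := H
  refine ⟨fun r => p * c r, |p| * C, ?_⟩
  filter_upwards [hC] with b h1
  simp only [mul_assoc]
  rw [← Finset.mul_sum, ← mul_sub, abs_mul]
  gcongr

lemma EE.sub {N : ℕ} {f f' : ℕ → ℝ} (H : EE N f) (H' : EE N f') :
    EE N (fun b => f b - f' b) :=
  (H.add (H'.mul (-1))).congr (Eventually.of_forall fun b => by ring)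

lemma EE.shift {N : ℕ} {f : ℕ → ℝ} (H : EE N f) : EE (N + 1) (fun b => 1 / (b : ℝ) * f b) := by
  obtain ⟨c, C, hC⟩ := H
  refine ⟨fun r => if r = 0 then 0 else c (r - 1), C, ?_⟩
  filter_upwards [hC] with b h1
  rw [Finset.sum_range_succ']
  simp only [Nat.add_eq_zero_iff, one_ne_zero, and_false, if_false, Nat.add_sub_cancel, if_true,
    zero_mul, add_zero, pow_succ]
  have : ∑ r ∈ Finset.range N, c r * ((1 / (b : ℝ)) ^ r * (1 / b))
      = 1 / b * ∑ r ∈ Finset.range N, c r * (1 / (b : ℝ)) ^ r := by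
    rw [Finset.mul_sum]
    exact Finset.sum_congr rfl fun r _ => by ring
  rw [this, ← mul_sub, abs_mul, abs_of_nonneg (by positivity : (0 : ℝ) ≤ 1 / b)]
  calc _ ≤ 1 / (b : ℝ) * (C * (1 / (b : ℝ)) ^ N) := by gcongr
    _ = _ := by ring

lemma EE.mono {N : ℕ} {f : ℕ → ℝ} (H : EE (N + 1) f) : EE N f := by
  obtain ⟨c, C, hC⟩ := H
  refine ⟨c, |C| + |c N|, ?_⟩
  filter_upwards [hC, eventually_ge_atTop 1] with b h2 hb
  rw [Finset.sum_range_succ] at h2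
  have hb1 : (1 : ℝ) ≤ b := by exact_mod_cast hb
  have hi : 1 / (b : ℝ) ≤ 1 := by rw [div_le_one (by linarith)]; exact hb1
  have hi0 : (0 : ℝ) ≤ 1 / b := by positivity
  have hp : (0 : ℝ) ≤ (1 / (b : ℝ)) ^ N := by positivity
  set S := ∑ r ∈ Finset.range N, c r * (1 / (b : ℝ)) ^ r
  calc |f b - S| = |(f b - (S + c N * (1 / (b : ℝ)) ^ N)) + c N * (1 / (b : ℝ)) ^ N| := by
        congr 1; ring
    _ ≤ C * (1 / (b : ℝ)) ^ (N + 1) + |c N| * (1 / (b : ℝ)) ^ N := by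
        refine (abs_add_le _ _).trans (add_le_add h2 ?_)
        rw [abs_mul, abs_of_nonneg hp]
    _ ≤ (|C| + |c N|) * (1 / (b : ℝ)) ^ N := by
        rw [add_mul]
        gcongr ?_ + _
        calc C * (1 / (b : ℝ)) ^ (N + 1) ≤ |C| * (1 / (b : ℝ)) ^ (N + 1) := by
              gcongr; exact le_abs_self C
          _ ≤ _ := by gcongr _ * ?_; exact pow_le_pow_of_le_one hi0 hi (Nat.le_succ N)

lemma EE.zero (N : ℕ) : EE N (fun _ => 0) :=
  EE.small 0 (Eventually.of_forall fun b => by simp)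

lemma EE.sum {N : ℕ} {ι : Type*} (s : Finset ι) {f : ι → ℕ → ℝ} (H : ∀ i ∈ s, EE N (f i)) :
    EE N (fun b => ∑ i ∈ s, f i b) := by
  classical
  induction s using Finset.induction_on with
  | empty => simpa using EE.zero N
  | insert a s ha ih =>
    simp only [Finset.sum_insert ha]
    exact (H a (by simp)).add (ih fun i hi => H i (by simp [hi]))

lemma EE.const (N : ℕ) (p : ℝ) : EE N (fun _ => p) := by
  cases N with
  | zero => exact EE.small |p| (Eventually.of_forall fun b => by simp)
  | succ N =>
    refine ⟨fun r => if r = 0 then p else 0, 0, Eventually.of_forall fun b => ?_⟩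
    rw [Finset.sum_range_succ']
    simp

lemma EE.shifts {N : ℕ} {f : ℕ → ℝ} (H : EE N f) (i : ℕ) :
    EE N (fun b => (1 / (b : ℝ)) ^ i * f b) := by
  induction i with
  | zero => simpa using H
  | succ i ih =>
    refine (ih.shift.mono).congr (Eventually.of_forall fun b => ?_)
    ring

lemma mu_div_abs {b d : ℕ} (hb : d < b) (j : ℤ) {g : ℝ → ℝ} {C : ℝ}
    (H : ∀ x ∈ Set.Icc (0 : ℝ) 1, |g x| ≤ C) : |mu b d j g / b| ≤ C := by
  have hb0 : (0 : ℝ) < b := by exact_mod_cast (by omega : 0 < b)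
  rw [abs_div, abs_of_pos hb0, div_le_iff₀ hb0]
  exact mu_abs hb j H

lemma transfer {N d : ℕ} {j : ℤ} (H : ∀ g, Sm g → EE N (fun b => mu b d j g / b))
    {h : ℕ → ℝ → ℝ} (hU : UE N h) : EE N (fun b => mu b d j (h b) / b) := by
  obtain ⟨Q, hQ, C, hC⟩ := hU
  have h1 := EE.sum (Finset.range N) (f := fun r b => (1 / (b : ℝ)) ^ r * (mu b d j (Q r) / b))
    (fun r _ => (H _ (hQ r)).shifts r)
  have h2 : EE N (fun b => mu b d j (fun x => h b x -
      ∑ r ∈ Finset.range N, Q r x * (1 / (b : ℝ)) ^ r) / b) := by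
    refine EE.small C ?_
    filter_upwards [hC, eventually_gt_atTop d] with b h1 hb
    exact mu_div_abs hb j h1
  refine (h1.add h2).congr ?_
  filter_upwards [hC, eventually_gt_atTop d] with b h3 hb
  have hB1 : ∀ r ∈ Finset.range N, Bd (fun x => (1 / (b : ℝ)) ^ r * Q r x) :=
    fun r _ => (hQ r).bd.smul _
  have e : mu b d j (h b) = mu b d j (fun x => ∑ r ∈ Finset.range N, (1 / (b : ℝ)) ^ r * Q r x)
      + mu b d j (fun x => h b x - ∑ r ∈ Finset.range N, Q r x * (1 / (b : ℝ)) ^ r) := by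
    rw [← mu_add hb j (Bd.sum _ hB1) ⟨_, h3⟩]
    apply mu_congr
    intro x _
    simp only [mul_comm]
    ring
  rw [e, mu_sum hb j _ hB1, add_div, Finset.sum_div]
  congr 1
  refine Finset.sum_congr rfl fun r _ => ?_
  rw [mu_smul, mul_div_assoc]

/-- limiting mass -/
def W (j : ℤ) : ℝ := if 0 ≤ j then 1 else 0

lemma mu_const_div {b d : ℕ} (hb : d < b) (j : ℤ) (c : ℝ) :
    mu b d j (fun _ => c) / b = W j * c := by
  have hb0 : (b : ℝ) ≠ 0 := by exact_mod_cast (by omega : b ≠ 0)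
  rw [mu_const hb]
  unfold W
  split_ifs
  · field_simp
  · simp

lemma hh_Bd {b : ℕ} {g : ℝ → ℝ} (hg : Sm g) : Bd (hh g b) :=
  ((hg.bd.av (b := b)).sub (Bd.const _)).smul _

lemma mu_av_div {b d : ℕ} (hb : d < b) (j : ℤ) {g : ℝ → ℝ} (hg : Sm g) :
    mu b d j (av b g) / b = W j * (∫ t in (0 : ℝ)..1, g t) + 1 / b * (mu b d j (hh g b) / b) := by
  have hb0 : (b : ℝ) ≠ 0 := by exact_mod_cast (by omega : b ≠ 0)
  rw [← mu_const_div hb, ← mul_div_assoc, ← mu_smul, ← add_div,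
    ← mu_add hb j (Bd.const _) ((hh_Bd hg).smul _)]
  congr 1
  apply mu_congr
  intro x _
  simp only [hh]
  field_simp
  ring

lemma mu_rec_div {b d : ℕ} (hb : d < b) (j : ℤ) {g : ℝ → ℝ} (hg : Sm g) :
    mu b d j g / b = W j * (∫ t in (0 : ℝ)..1, g t)
      + 1 / b * ((if j = 0 then g 0 else 0) + mu b d j (hh g b) / b
      + (mu b d (j - 1) (fun x => g ((d + x) / b)) / b
        - mu b d j (fun x => g ((d + x) / b)) / b)) := by
  have h := mu_rec hb j hg.bd
  have h2 := mu_av_div hb j hg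
  rw [h, add_div, add_div, h2]
  ring

theorem mu_EE (d N : ℕ) : ∀ (j : ℤ) (g : ℝ → ℝ), Sm g → EE N (fun b => mu b d j g / b) := by
  induction N with
  | zero =>
    intro j g hg
    obtain ⟨C, hC⟩ := hg.bd
    refine EE.small C ?_
    filter_upwards [eventually_gt_atTop d] with b hb
    simpa using mu_div_abs hb j hC
  | succ N ih =>
    intro j g hg
    have h1 := transfer (ih j) (hh_UE N hg)
    have h2 := transfer (ih (j - 1)) (comp_UE N d hg)
    have h3 := transfer (ih j) (comp_UE N d hg)
    refine ((EE.const (N + 1) (W j * (∫ t in (0 : ℝ)..1, g t))).add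
      (((EE.const N (if j = 0 then g 0 else 0)).add h1).add (h2.sub h3)).shift).congr ?_
    filter_upwards [eventually_gt_atTop d] with b hb
    exact mu_rec_div hb j hg

lemma F1 (d : ℕ) (j : ℤ) {g : ℝ → ℝ} (hg : Sm g) : ∃ C, ∀ᶠ b : ℕ in atTop,
    |mu b d j g / b - W j * ∫ t in (0 : ℝ)..1, g t| ≤ C * (1 / (b : ℝ)) := by
  obtain ⟨C, hC⟩ := hg.bd
  obtain ⟨D, hD⟩ := hh_bd hg
  refine ⟨|g 0| + D + (C + C), ?_⟩
  filter_upwards [hD, eventually_gt_atTop d] with b hD hb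
  have hb0 : (0 : ℝ) < b := by exact_mod_cast (by omega : 0 < b)
  rw [mu_rec_div hb j hg, add_sub_cancel_left, abs_mul, abs_of_pos (by positivity : (0 : ℝ) < 1 / b),
    mul_comm]
  gcongr
  refine (abs_add_le _ _).trans (add_le_add ((abs_add_le _ _).trans (add_le_add ?_ ?_))
    ((abs_sub _ _).trans (add_le_add ?_ ?_)))
  · split_ifs <;> simp
  · exact mu_div_abs hb j hD
  · exact mu_div_abs hb _ fun x hx => hC _ (fa_mem hb hx)
  · exact mu_div_abs hb _ fun x hx => hC _ (fa_mem hb hx)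

lemma hh_mu (d : ℕ) (j : ℤ) {g : ℝ → ℝ} (hg : Sm g) : ∃ C, ∀ᶠ b : ℕ in atTop,
    |mu b d j (hh g b) / b| ≤ C * (1 / (b : ℝ)) := by
  obtain ⟨K, C, hC⟩ := hh_one hg
  have hs : Sm (fun x => K * (x - 1 / 2)) := by unfold Sm; fun_prop
  obtain ⟨D, hD⟩ := F1 d j hs
  have hI : ∫ t in (0 : ℝ)..1, K * (t - 1 / 2) = 0 := by
    rw [intervalIntegral.integral_const_mul, intervalIntegral.integral_sub (by simp) (by simp)]
    simp
  rw [hI] at hD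
  refine ⟨C + D, ?_⟩
  filter_upwards [hC, hD, eventually_gt_atTop d] with b h1 h2 hb
  have e := mu_add hb j (hs.bd) (⟨_, h1⟩ : Bd (fun x => hh g b x - K * (x - 1 / 2)))
  have e2 : mu b d j (hh g b) = mu b d j (fun x => K * (x - 1 / 2))
      + mu b d j (fun x => hh g b x - K * (x - 1 / 2)) := by
    rw [← e]
    apply mu_congr
    intro x _
    ring
  rw [e2, add_div]
  have h3 := mu_div_abs hb j h1
  rw [mul_zero, sub_zero] at h2
  refine (abs_add_le _ _).trans ?_
  linarith

lemma comp_mu (d : ℕ) (j : ℤ) {g : ℝ → ℝ} (hg : Sm g) : ∃ C, ∀ᶠ b : ℕ in atTop,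
    |mu b d j (fun x => g ((d + x) / b)) / b - W j * g 0| ≤ C * (1 / (b : ℝ)) := by
  obtain ⟨C, hC⟩ := taylor_bd 1 g hg
  refine ⟨|C| * (d + 1), ?_⟩
  filter_upwards [eventually_gt_atTop d] with b hb
  have hb0 : (0 : ℝ) < b := by exact_mod_cast (by omega : 0 < b)
  rw [← mu_const_div hb, ← sub_div, ← mu_sub hb j (hg.bd.comp hb) (Bd.const _)]
  refine mu_div_abs hb j fun x hx => ?_
  have h := hC 0 (by simp) _ (fa_mem hb hx)
  simp only [Finset.sum_range_one, iteratedDeriv_zero, pow_zero, mul_one, Nat.factorial_zero,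
    Nat.cast_one, div_one, sub_zero, pow_one] at h
  refine h.trans ?_
  have hx0 := hx.1
  rw [abs_of_nonneg (by positivity), div_eq_mul_one_div, ← mul_assoc]
  gcongr
  · exact le_abs_self C
  · exact hx.2

lemma F2 (d : ℕ) (j : ℤ) {g : ℝ → ℝ} (hg : Sm g) : ∃ C, ∀ᶠ b : ℕ in atTop,
    |mu b d j g / b - W j * ∫ t in (0 : ℝ)..1, g t| ≤ C * (1 / (b : ℝ)) ^ 2 := by
  obtain ⟨C, hC⟩ := hh_mu d j hg
  obtain ⟨D, hD⟩ := comp_mu d j hg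
  obtain ⟨D', hD'⟩ := comp_mu d (j - 1) hg
  refine ⟨C + D + D', ?_⟩
  filter_upwards [hC, hD, hD', eventually_gt_atTop d] with b h1 h2 h3 hb
  have hb0 : (0 : ℝ) < b := by exact_mod_cast (by omega : 0 < b)
  rw [mu_rec_div hb j hg, add_sub_cancel_left, abs_mul, abs_of_pos (by positivity : (0 : ℝ) < 1 / b)]
  have hW : (if j = 0 then g 0 else 0) = W j * g 0 - W (j - 1) * g 0 := by
    unfold W
    split_ifs <;> first | omega | simp
  rw [hW]
  set A := mu b d j (hh g b) / b
  set B := mu b d j (fun x => g ((d + x) / b)) / b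
  set B' := mu b d (j - 1) (fun x => g ((d + x) / b)) / b
  have e : W j * g 0 - W (j - 1) * g 0 + A + (B' - B)
      = A - (B - W j * g 0) + (B' - W (j - 1) * g 0) := by ring
  rw [e, pow_two, ← mul_assoc, mul_comm (1 / (b : ℝ))]
  gcongr
  refine (abs_add_le _ _).trans ((add_le_add_left (abs_sub _ _) _).trans ?_)
  linarith


noncomputable def tt : ℕ → ℕ → ℝ → ℝ
  | 0, n, x => 1 / ((n : ℝ) + 1 + x) - (Real.log (n + 2) - Real.log (n + 1))
  | i + 1, n, x => (-1) ^ (i + 1) * ((i + 1).factorial : ℝ) * (((n : ℝ) + 1 + x) ^ (i + 2))⁻¹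

lemma tt_deriv (i n : ℕ) {x : ℝ} (hx : x ∈ Set.Ioi (-1 / 2 : ℝ)) :
    HasDerivAt (tt i n) (tt (i + 1) n x) x := by
  have hn : (0 : ℝ) ≤ n := Nat.cast_nonneg n
  have hx' : (-1 / 2 : ℝ) < x := hx
  have hpos : (0 : ℝ) < (n : ℝ) + 1 + x := by linarith
  have h0 : HasDerivAt (fun y : ℝ => (n : ℝ) + 1 + y) 1 x := (hasDerivAt_id x).const_add _
  cases i with
  | zero =>
    have h := (h0.inv hpos.ne').sub_const (Real.log (n + 2) - Real.log (n + 1))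
    have hf : tt 0 n = fun x => (fun y : ℝ => (n : ℝ) + 1 + y)⁻¹ x
        - (Real.log (n + 2) - Real.log (n + 1)) := by
      funext y; simp [tt]
    have hv : tt (0 + 1) n x = -1 / ((n : ℝ) + 1 + x) ^ 2 := by
      simp [tt]; field_simp
    rw [hf, hv]
    exact h
  | succ i =>
    have h := ((h0.pow (i + 2)).inv (by simp; positivity)).const_mul
      ((-1) ^ (i + 1) * ((i + 1).factorial : ℝ))
    refine HasDerivAt.congr_deriv h ?_
    simp only [tt, Nat.factorial_succ (i + 1), Pi.pow_apply]
    push_cast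
    field_simp
    ring

lemma tt_bound (i n : ℕ) {x : ℝ} (hx : x ∈ Set.Ioi (-1 / 2 : ℝ)) :
    ‖tt (i + 1) n x‖ ≤ ((i + 1).factorial : ℝ) * 2 ^ (i + 2) * (1 / ((n + 1 : ℕ) : ℝ) ^ (i + 2)) := by
  have hn : (0 : ℝ) ≤ n := Nat.cast_nonneg n
  have hx' : (-1 / 2 : ℝ) < x := hx
  have hpos : (0 : ℝ) < (n : ℝ) + 1 + x := by linarith
  have h1 : ((n + 1 : ℕ) : ℝ) / 2 ≤ (n : ℝ) + 1 + x := by push_cast; linarith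
  have h2 : (0 : ℝ) < ((n + 1 : ℕ) : ℝ) := by positivity
  simp only [tt]
  rw [norm_mul, norm_mul, norm_pow, norm_neg, norm_one, one_pow, one_mul, Real.norm_eq_abs,
    Real.norm_eq_abs, abs_of_nonneg (by positivity), abs_of_nonneg (by positivity), mul_assoc]
  gcongr
  calc (((n : ℝ) + 1 + x) ^ (i + 2))⁻¹ ≤ ((((n + 1 : ℕ) : ℝ) / 2) ^ (i + 2))⁻¹ := by gcongr
    _ = _ := by rw [div_pow, inv_div]; ring

lemma summable_aux (p : ℕ) (hp : 1 < p) :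
    Summable (fun n : ℕ => 1 / ((n + 1 : ℕ) : ℝ) ^ p) := by
  have h := Real.summable_one_div_nat_pow.2 hp
  exact (summable_nat_add_iff (f := fun n : ℕ => 1 / (n : ℝ) ^ p) 1).2 h

lemma summable_bound (i : ℕ) : Summable (fun n : ℕ =>
    ((i + 1).factorial : ℝ) * 2 ^ (i + 2) * (1 / ((n + 1 : ℕ) : ℝ) ^ (i + 2))) :=
  (summable_aux (i + 2) (by omega)).mul_left _

lemma tt_summable_zero : Summable (fun n => tt 0 n 0) := by
  refine Summable.of_nonneg_of_le (f := fun n : ℕ => 1 / ((n + 1 : ℕ) : ℝ) ^ 2) ?_ ?_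
    (summable_aux 2 (by omega))
  · intro n
    simp only [tt, add_zero]
    have hp : (0 : ℝ) < (n : ℝ) + 1 := by positivity
    rw [← Real.log_div (by positivity) (by positivity)]
    have := Real.log_le_sub_one_of_pos (x := ((n : ℝ) + 2) / (n + 1)) (by positivity)
    have e : ((n : ℝ) + 2) / (n + 1) - 1 = 1 / (n + 1) := by field_simp; ring
    linarith
  · intro n
    simp only [tt, add_zero]
    have hp : (0 : ℝ) < (n : ℝ) + 1 := by positivity
    rw [← Real.log_div (by positivity) (by positivity)]
    have := Real.one_sub_inv_le_log_of_pos (x := ((n : ℝ) + 2) / (n + 1)) (by positivity)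
    have e : 1 / ((n : ℝ) + 1) - (1 - (((n : ℝ) + 2) / (n + 1))⁻¹) = 1 / ((n + 1) * (n + 2)) := by
      field_simp; ring
    have e2 : 1 / (((n : ℝ) + 1) * (n + 2)) ≤ 1 / ((n + 1 : ℕ) : ℝ) ^ 2 := by
      push_cast
      rw [pow_two]
      gcongr
      norm_num
    linarith

lemma zero_mem' : (0 : ℝ) ∈ Set.Ioi (-1 / 2 : ℝ) := by norm_num

lemma tt_summable (i : ℕ) {x : ℝ} (hx : x ∈ Set.Ioi (-1 / 2 : ℝ)) :
    Summable (fun n => tt i n x) := by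
  cases i with
  | zero =>
    exact summable_of_summable_hasDerivAt_of_isPreconnected (summable_bound 0) isOpen_Ioi
      isPreconnected_Ioi (fun n y hy => tt_deriv 0 n hy) (fun n y hy => tt_bound 0 n hy) zero_mem'
      tt_summable_zero hx
  | succ i => exact Summable.of_norm_bounded (summable_bound i) (fun n => tt_bound i n hx)

noncomputable def Fi (i : ℕ) (x : ℝ) : ℝ := ∑' n, tt i n x

lemma Fi_deriv (i : ℕ) {x : ℝ} (hx : x ∈ Set.Ioi (-1 / 2 : ℝ)) :
    HasDerivAt (Fi i) (Fi (i + 1) x) x :=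
  hasDerivAt_tsum_of_isPreconnected (summable_bound i) isOpen_Ioi
      isPreconnected_Ioi (fun n y hy => tt_deriv i n hy) (fun n y hy => tt_bound i n hy) zero_mem'
      (tt_summable i zero_mem') hx

lemma Fi_contDiff (n : ℕ) : ∀ i, ContDiffOn ℝ n (Fi i) (Set.Ioi (-1 / 2 : ℝ)) := by
  induction n with
  | zero =>
    intro i
    rw [Nat.cast_zero, contDiffOn_zero]
    exact fun x hx => (Fi_deriv i hx).continuousAt.continuousWithinAt
  | succ n ih =>
    intro i
    push_cast
    rw [contDiffOn_succ_iff_deriv_of_isOpen isOpen_Ioi]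
    refine ⟨fun x hx => (Fi_deriv i hx).differentiableAt.differentiableWithinAt, by simp, ?_⟩
    exact (ih (i + 1)).congr fun x hx => (Fi_deriv i hx).deriv

lemma Phi_sm : Sm (Fi 0) := contDiffOn_infty.2 fun n => Fi_contDiff n 0

noncomputable def KK (M : ℕ) (x : ℝ) : ℝ :=
  ∑ n ∈ Finset.range M, 1 / (((n + 1 : ℕ) : ℝ) + x) - Real.log (M + 1)

lemma KK_eq (M : ℕ) (x : ℝ) : ∑ n ∈ Finset.range M, tt 0 n x = KK M x := by
  simp only [tt, KK]
  rw [Finset.sum_sub_distrib]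
  congr 1
  · push_cast; rfl
  · have := Finset.sum_range_sub (fun n : ℕ => Real.log ((n : ℝ) + 1)) M
    simp only [Nat.cast_zero, zero_add, Real.log_one, sub_zero] at this
    rw [← this]
    refine Finset.sum_congr rfl fun n _ => ?_
    push_cast
    ring_nf

lemma KK_tendsto {x : ℝ} (hx : x ∈ Set.Icc (0 : ℝ) 1) :
    Tendsto (fun M => KK M x) atTop (nhds (Fi 0 x)) := by
  have := (tt_summable 0 (icc_sub hx)).hasSum.tendsto_sum_nat
  simp only [KK_eq] at this
  exact this

lemma KK_mult {b : ℕ} (hb : 1 ≤ b) (M : ℕ) {x : ℝ} :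
    KK (b * (M + 1) - 1) x = KK (b - 1) x + av b (KK M) x := by
  have hb0 : (0 : ℝ) < b := by exact_mod_cast hb
  have hs : ∀ n : ℕ, 1 ≤ n → ∑ i ∈ Finset.range (n - 1), 1 / (((i + 1 : ℕ) : ℝ) + x)
      = ∑ i ∈ Finset.Ico 1 n, 1 / ((i : ℝ) + x) := by
    intro n hn
    rw [Finset.sum_Ico_eq_sum_range]
    refine Finset.sum_congr rfl fun i _ => ?_
    rw [add_comm 1 i]
  have hbM : b ≤ b * (M + 1) := Nat.le_mul_of_pos_right b (by omega)
  have hu : Monotone (fun n : ℕ => (n + 1) * b) := by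
    intro a a' h
    dsimp only
    gcongr
  have hbl := sum_blocks (fun i => 1 / ((i : ℝ) + x)) _ hu M
  have hav : av b (KK M) x = ∑ i ∈ Finset.Ico b (b * (M + 1)), 1 / ((i : ℝ) + x)
      - Real.log (M + 1) := by
    simp only [av, KK]
    rw [Finset.sum_sub_distrib, sub_div]
    congr 1
    · rw [zero_add, one_mul, mul_comm (M + 1) b] at hbl
      rw [← hbl, Finset.sum_comm, Finset.sum_div]
      refine Finset.sum_congr rfl fun n _ => ?_
      rw [Finset.sum_Ico_eq_sum_range]
      have e : (n + 1 + 1) * b - (n + 1) * b = b := by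
        rw [← Nat.sub_mul]; simp
      rw [e, Finset.sum_div]
      refine Finset.sum_congr rfl fun a _ => ?_
      have e2 : ((n + 1 : ℕ) : ℝ) + ((a : ℝ) + x) / b = ((((n + 1) * b + a : ℕ) : ℝ) + x) / b := by
        push_cast
        field_simp
        ring
      rw [e2, one_div_div]
      field_simp
    · simp
      field_simp
  rw [hav]
  simp only [KK]
  rw [hs _ hb, hs _ (hb.trans hbM), ← Finset.sum_Ico_consecutive _ hb hbM]
  have e3 : ((b * (M + 1) - 1 : ℕ) : ℝ) + 1 = b * (M + 1) := by
    rw [Nat.cast_sub (hb.trans hbM)]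
    push_cast; ring
  have e4 : ((b - 1 : ℕ) : ℝ) + 1 = b := by
    rw [Nat.cast_sub hb]
    push_cast; ring
  rw [e3, e4, Real.log_mul hb0.ne' (by positivity)]
  ring

lemma KK_Phi {b : ℕ} (hb : 1 ≤ b) {x : ℝ} (hx : x ∈ Set.Icc (0 : ℝ) 1) :
    Fi 0 x = KK (b - 1) x + av b (Fi 0) x := by
  have h1 : Tendsto (fun M : ℕ => KK (b * (M + 1) - 1) x) atTop (nhds (Fi 0 x)) := by
    refine (KK_tendsto hx).comp (tendsto_atTop_mono (f := fun M => M) (fun M => ?_) tendsto_id)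
    have : 1 * (M + 1) ≤ b * (M + 1) := Nat.mul_le_mul_right _ hb
    omega
  simp_rw [KK_mult hb] at h1
  have h2 : Tendsto (fun M : ℕ => KK (b - 1) x + av b (KK M) x) atTop
      (nhds (KK (b - 1) x + av b (Fi 0) x)) := by
    refine Tendsto.const_add _ ?_
    simp only [av]
    refine Tendsto.div_const (tendsto_finsetSum _ fun a ha => ?_) _
    exact KK_tendsto (fa_mem (Finset.mem_range.1 ha) hx)
  exact tendsto_nhds_unique h1 h2


lemma EE_uniq (N : ℕ) : ∀ (e : ℕ → ℝ) (C : ℝ), (∀ᶠ b : ℕ in atTop,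
    |∑ r ∈ Finset.range N, e r * (1 / (b : ℝ)) ^ r| ≤ C * (1 / (b : ℝ)) ^ N) →
    ∀ r < N, e r = 0 := by
  induction N with
  | zero => intro e C _ r hr; omega
  | succ N ih =>
    intro e C h
    have h1 : ∀ r < N, e r = 0 := by
      apply ih e (|C| + |e N|)
      filter_upwards [h, eventually_ge_atTop 1] with b h2 hb
      rw [Finset.sum_range_succ] at h2
      have hb1 : (1 : ℝ) ≤ b := by exact_mod_cast hb
      have hi : 1 / (b : ℝ) ≤ 1 := by rw [div_le_one (by linarith)]; exact hb1
      have hi0 : (0 : ℝ) ≤ 1 / b := by positivity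
      have hp : (0 : ℝ) ≤ (1 / (b : ℝ)) ^ N := by positivity
      set S := ∑ r ∈ Finset.range N, e r * (1 / (b : ℝ)) ^ r
      calc |S| = |(S + e N * (1 / (b : ℝ)) ^ N) - e N * (1 / (b : ℝ)) ^ N| := by
            congr 1; ring
        _ ≤ C * (1 / (b : ℝ)) ^ (N + 1) + |e N| * (1 / (b : ℝ)) ^ N := by
            refine (abs_sub _ _).trans (add_le_add h2 ?_)
            rw [abs_mul, abs_of_nonneg hp]
        _ ≤ (|C| + |e N|) * (1 / (b : ℝ)) ^ N := by
            rw [add_mul]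
            gcongr ?_ + _
            calc C * (1 / (b : ℝ)) ^ (N + 1) ≤ |C| * (1 / (b : ℝ)) ^ (N + 1) := by
                  gcongr; exact le_abs_self C
              _ ≤ _ := by gcongr _ * ?_; exact pow_le_pow_of_le_one hi0 hi (Nat.le_succ N)
    have h2 : e N = 0 := by
      have h3 : ∀ᶠ b : ℕ in atTop, |e N| ≤ C * (1 / (b : ℝ)) := by
        filter_upwards [h, eventually_ge_atTop 1] with b h2 hb
        have hb0 : (0 : ℝ) < b := by exact_mod_cast hb
        rw [Finset.sum_range_succ, Finset.sum_eq_zero, zero_add, abs_mul,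
          abs_of_pos (by positivity : (0 : ℝ) < (1 / (b : ℝ)) ^ N), pow_succ, mul_comm (_ ^ N),
          ← mul_assoc] at h2
        · exact le_of_mul_le_mul_right h2 (by positivity)
        · intro r hr
          rw [h1 r (Finset.mem_range.1 hr), zero_mul]
      have h4 : Tendsto (fun b : ℕ => C * (1 / (b : ℝ))) atTop (nhds (C * 0)) :=
        tendsto_one_div_atTop_nhds_zero_nat.const_mul C
      have h5 : |e N| ≤ C * 0 := ge_of_tendsto h4 h3
      rw [mul_zero] at h5
      exact abs_nonpos_iff.1 h5
    intro r hr
    rcases Nat.lt_succ_iff_lt_or_eq.1 hr with h | h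
    · exact h1 r h
    · rw [h]; exact h2

/-- the bound defining an expansion with given coefficients -/
def HasEx (f : ℕ → ℝ) (c : ℕ → ℝ) (N : ℕ) : Prop := ∃ C : ℝ, ∀ᶠ b : ℕ in atTop,
    |f b - ∑ r ∈ Finset.range N, c r * (1 / (b : ℝ)) ^ r| ≤ C * (1 / (b : ℝ)) ^ N

lemma HasEx.mono {f c : ℕ → ℝ} {N : ℕ} (H : HasEx f c (N + 1)) : HasEx f c N := by
  obtain ⟨C, hC⟩ := H
  refine ⟨|C| + |c N|, ?_⟩
  filter_upwards [hC, eventually_ge_atTop 1] with b h2 hb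
  rw [Finset.sum_range_succ] at h2
  have hb1 : (1 : ℝ) ≤ b := by exact_mod_cast hb
  have hi : 1 / (b : ℝ) ≤ 1 := by rw [div_le_one (by linarith)]; exact hb1
  have hi0 : (0 : ℝ) ≤ 1 / b := by positivity
  have hp : (0 : ℝ) ≤ (1 / (b : ℝ)) ^ N := by positivity
  set S := ∑ r ∈ Finset.range N, c r * (1 / (b : ℝ)) ^ r
  calc |f b - S| = |(f b - (S + c N * (1 / (b : ℝ)) ^ N)) + c N * (1 / (b : ℝ)) ^ N| := by
        congr 1; ring
    _ ≤ C * (1 / (b : ℝ)) ^ (N + 1) + |c N| * (1 / (b : ℝ)) ^ N := by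
        refine (abs_add_le _ _).trans (add_le_add h2 ?_)
        rw [abs_mul, abs_of_nonneg hp]
    _ ≤ (|C| + |c N|) * (1 / (b : ℝ)) ^ N := by
        rw [add_mul]
        gcongr ?_ + _
        calc C * (1 / (b : ℝ)) ^ (N + 1) ≤ |C| * (1 / (b : ℝ)) ^ (N + 1) := by
              gcongr; exact le_abs_self C
          _ ≤ _ := by gcongr _ * ?_; exact pow_le_pow_of_le_one hi0 hi (Nat.le_succ N)

lemma HasEx.mono_le {f c : ℕ → ℝ} {N M : ℕ} (h : N ≤ M) (H : HasEx f c M) : HasEx f c N := by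
  induction M, h using Nat.le_induction with
  | base => exact H
  | succ M _ ih => exact ih H.mono

lemma HasEx.uniq {f c c' : ℕ → ℝ} {N : ℕ} (H : HasEx f c N) (H' : HasEx f c' N) :
    ∀ r < N, c r = c' r := by
  obtain ⟨C, hC⟩ := H
  obtain ⟨C', hC'⟩ := H'
  have := EE_uniq N (fun r => c r - c' r) (C' + C) (by
    filter_upwards [hC, hC'] with b h1 h2
    simp only [sub_mul, Finset.sum_sub_distrib]
    set S := ∑ r ∈ Finset.range N, c r * (1 / (b : ℝ)) ^ r
    set S' := ∑ r ∈ Finset.range N, c' r * (1 / (b : ℝ)) ^ r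
    have : S - S' = (f b - S') - (f b - S) := by ring
    rw [this, add_mul]
    exact (abs_sub _ _).trans (add_le_add h2 h1))
  intro r hr
  linarith [this r hr]

lemma EE_seq {f : ℕ → ℝ} (H : ∀ N, EE N f) : ∃ a : ℕ → ℝ, ∀ N, HasEx f a N := by
  choose c hc using H
  have hc' : ∀ N, HasEx f (c N) N := hc
  refine ⟨fun n => c (n + 1) n, fun N => ?_⟩
  obtain ⟨C, hC⟩ := hc' N
  refine ⟨C, ?_⟩
  filter_upwards [hC] with b hb
  have : ∑ r ∈ Finset.range N, c (r + 1) r * (1 / (b : ℝ)) ^ r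
      = ∑ r ∈ Finset.range N, c N r * (1 / (b : ℝ)) ^ r := by
    refine Finset.sum_congr rfl fun r hr => ?_
    have hr' := Finset.mem_range.1 hr
    rw [(hc' (r + 1)).uniq ((hc' N).mono_le (by omega : r + 1 ≤ N)) r (by omega)]
  rw [this]
  exact hb

lemma irwin_dec {b d : ℕ} (hb : 2 ≤ b) (hd : d < b) (k : ℕ) :
    irwinSum b d k = mu b d k (KK (b - 1)) + b * Real.log b
      + if 1 ≤ d then mu b d ((k : ℤ) - 1) (fun x => 1 / ((d : ℝ) + x))
          - mu b d k (fun x => 1 / ((d : ℝ) + x)) else 0 := by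
  rw [irwin_eq hb hd]
  have hB : ∀ n ∈ Finset.range (b - 1), Bd (fun x => 1 / (((n + 1 : ℕ) : ℝ) + x)) :=
    fun n _ => bd_inv (by omega)
  have h1 : ∑ n ∈ Finset.range (b - 1), mu b d (k - if n + 1 = d then 1 else 0)
        (fun x => 1 / (((n + 1 : ℕ) : ℝ) + x))
      = ∑ n ∈ Finset.range (b - 1), mu b d k (fun x => 1 / (((n + 1 : ℕ) : ℝ) + x))
        + ∑ n ∈ Finset.range (b - 1), if n + 1 = d then
          (mu b d ((k : ℤ) - 1) (fun x => 1 / ((d : ℝ) + x))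
            - mu b d k (fun x => 1 / ((d : ℝ) + x))) else 0 := by
    rw [← Finset.sum_add_distrib]
    refine Finset.sum_congr rfl fun n _ => ?_
    by_cases h : n + 1 = d
    · simp only [h, if_true]; ring
    · simp only [h, if_false]; simp
  rw [h1]
  congr 1
  · rw [← mu_sum hd _ _ hB]
    have e : ((b - 1 : ℕ) : ℝ) + 1 = b := by
      rw [Nat.cast_sub (by omega)]
      push_cast; ring
    have h2 : mu b d k (KK (b - 1)) = mu b d k (fun x => ∑ n ∈ Finset.range (b - 1),
        1 / (((n + 1 : ℕ) : ℝ) + x)) - mu b d k (fun _ => Real.log b) := by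
      rw [← mu_sub hd _ (Bd.sum _ hB) (Bd.const _)]
      apply mu_congr
      intro x _
      simp only [KK]
      rw [e]
    rw [h2, mu_const hd]
    simp
    ring
  · by_cases h : 1 ≤ d
    · rw [if_pos h, Finset.sum_eq_single (d - 1)]
      · rw [if_pos (by omega)]
      · intro n _ hn
        rw [if_neg (by omega)]
      · intro hn
        exact absurd (Finset.mem_range.2 (by omega)) hn
    · rw [if_neg h]
      refine Finset.sum_eq_zero fun n _ => ?_
      rw [if_neg (by omega)]

lemma inv_sm {d : ℕ} (hd : 1 ≤ d) : Sm (fun x => 1 / ((d : ℝ) + x)) := by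
  unfold Sm
  refine contDiffOn_const.div (by fun_prop) fun x hx => ?_
  have h1 : (1 : ℝ) ≤ d := by exact_mod_cast hd
  have : (-1 / 2 : ℝ) < x := hx
  linarith

lemma inv_int {d : ℕ} (hd : 1 ≤ d) :
    ∫ x in (0 : ℝ)..1, 1 / ((d : ℝ) + x) = Real.log (1 + 1 / (d : ℝ)) := by
  have h1 : (1 : ℝ) ≤ d := by exact_mod_cast hd
  have := intervalIntegral.integral_comp_add_left (a := (0 : ℝ)) (b := 1) (fun x => 1 / x) (d : ℝ)
  rw [this, integral_one_div_of_pos (by linarith) (by linarith)]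
  congr 1
  field_simp
  ring

lemma X_eq {b d : ℕ} (hb : 2 ≤ b) (hd : d < b) (k : ℕ) :
    (irwinSum b d k - b * Real.log b
      + (if k = 0 ∧ 1 ≤ d then (b : ℝ) * Real.log (1 + 1 / (d : ℝ)) else 0)) / b
    = (mu b d k (Fi 0) / b - W k * ∫ t in (0 : ℝ)..1, Fi 0 t)
      - 1 / b * (mu b d k (hh (Fi 0) b) / b)
      + if 1 ≤ d then
        (mu b d ((k : ℤ) - 1) (fun x => 1 / ((d : ℝ) + x)) / b
            - W ((k : ℤ) - 1) * ∫ x in (0 : ℝ)..1, 1 / ((d : ℝ) + x))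
          - (mu b d k (fun x => 1 / ((d : ℝ) + x)) / b
            - W k * ∫ x in (0 : ℝ)..1, 1 / ((d : ℝ) + x)) else 0 := by
  have hb0 : (b : ℝ) ≠ 0 := by exact_mod_cast (by omega : b ≠ 0)
  have h1 : mu b d k (KK (b - 1)) / b = (mu b d k (Fi 0) / b - W k * ∫ t in (0 : ℝ)..1, Fi 0 t)
      - 1 / b * (mu b d k (hh (Fi 0) b) / b) := by
    have := mu_av_div hd k Phi_sm
    have h2 : mu b d k (KK (b - 1)) = mu b d k (Fi 0) - mu b d k (av b (Fi 0)) := by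
      rw [← mu_sub hd _ Phi_sm.bd Phi_sm.bd.av]
      apply mu_congr
      intro x hx
      rw [KK_Phi (by omega : 1 ≤ b) hx]
      ring
    rw [h2, sub_div, this]
    ring
  rw [← h1, irwin_dec hb hd]
  by_cases h : 1 ≤ d
  · simp only [h, and_true, if_true]
    rw [inv_int h]
    by_cases hk : k = 0
    · subst hk
      simp [W]
      field_simp
      ring
    · have hk1 : 1 ≤ k := by omega
      have w1 : W ((k : ℤ) - 1) = 1 := by unfold W; rw [if_pos (by omega)]
      have w2 : W (k : ℤ) = 1 := by unfold W; rw [if_pos (by omega)]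
      rw [w1, w2, if_neg hk]
      ring
  · simp only [h, and_false, if_false]
    ring

theorem irwin_asymptotic_expansion_all_orders (d k : ℕ) :
    ∃ a : ℕ → ℝ, ∀ N : ℕ,
      (fun b : ℕ => irwinSum b d k - (b : ℝ) * Real.log b
        + (if k = 0 ∧ 1 ≤ d then (b : ℝ) * Real.log (1 + 1 / (d : ℝ)) else 0)
        - ∑ n ∈ Finset.Icc 1 N, a n / (b : ℝ) ^ n)
      =O[atTop] fun b : ℕ => ((b : ℝ) ^ (N + 1))⁻¹ := by
  set X : ℕ → ℝ := fun b => (irwinSum b d k - b * Real.log b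
      + (if k = 0 ∧ 1 ≤ d then (b : ℝ) * Real.log (1 + 1 / (d : ℝ)) else 0)) / b with hX
  have hev : ∀ᶠ b : ℕ in atTop, 2 ≤ b ∧ d < b :=
    (eventually_ge_atTop 2).and (eventually_gt_atTop d)
  have hEE : ∀ N, EE N X := by
    intro N
    have h1 := (mu_EE d N k _ Phi_sm).sub (EE.const N (W k * ∫ t in (0 : ℝ)..1, Fi 0 t))
    have h2 := ((transfer (mu_EE d N k) (hh_UE N Phi_sm))).shift.mono
    have h3 : EE N (fun b => if 1 ≤ d then
        (mu b d ((k : ℤ) - 1) (fun x => 1 / ((d : ℝ) + x)) / b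
            - W ((k : ℤ) - 1) * ∫ x in (0 : ℝ)..1, 1 / ((d : ℝ) + x))
          - (mu b d k (fun x => 1 / ((d : ℝ) + x)) / b
            - W k * ∫ x in (0 : ℝ)..1, 1 / ((d : ℝ) + x)) else 0) := by
      by_cases h : 1 ≤ d
      · simp only [h, if_true]
        exact ((mu_EE d N _ _ (inv_sm h)).sub (EE.const N _)).sub
          ((mu_EE d N _ _ (inv_sm h)).sub (EE.const N _))
      · simp only [h, if_false]
        exact EE.zero N
    refine ((h1.sub h2).add h3).congr ?_
    filter_upwards [hev] with b hb
    exact X_eq hb.1 hb.2 k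
  have hO : HasEx X (fun _ => 0) 2 := by
    obtain ⟨C1, h1⟩ := F2 d k Phi_sm
    obtain ⟨C2, h2⟩ := hh_mu d k Phi_sm
    have h3 : ∃ C3, ∀ᶠ b : ℕ in atTop, |if 1 ≤ d then
        (mu b d ((k : ℤ) - 1) (fun x => 1 / ((d : ℝ) + x)) / b
            - W ((k : ℤ) - 1) * ∫ x in (0 : ℝ)..1, 1 / ((d : ℝ) + x))
          - (mu b d k (fun x => 1 / ((d : ℝ) + x)) / b
            - W k * ∫ x in (0 : ℝ)..1, 1 / ((d : ℝ) + x)) else 0| ≤ C3 * (1 / (b : ℝ)) ^ 2 := by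
      by_cases h : 1 ≤ d
      · simp only [h, if_true]
        obtain ⟨D1, g1⟩ := F2 d ((k : ℤ) - 1) (inv_sm h)
        obtain ⟨D2, g2⟩ := F2 d k (inv_sm h)
        refine ⟨D1 + D2, ?_⟩
        filter_upwards [g1, g2] with b g1 g2
        rw [add_mul]
        exact (abs_sub _ _).trans (add_le_add g1 g2)
      · simp only [h, if_false]
        exact ⟨0, Eventually.of_forall fun b => by simp⟩
    obtain ⟨C3, h3⟩ := h3
    refine ⟨C1 + C2 + C3, ?_⟩
    filter_upwards [hev, h1, h2, h3] with b hb h1 h2 h3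
    have e : X b = _ := X_eq hb.1 hb.2 k
    simp only [zero_mul, Finset.sum_const_zero, sub_zero]
    rw [e, add_mul, add_mul]
    refine (abs_add_le _ _).trans (add_le_add ((abs_sub _ _).trans (add_le_add h1 ?_)) h3)
    rw [abs_mul, abs_of_nonneg (by positivity : (0 : ℝ) ≤ 1 / b)]
    calc _ ≤ 1 / (b : ℝ) * (C2 * (1 / b)) := by gcongr
      _ = _ := by ring
  obtain ⟨a, ha⟩ := EE_seq hEE
  have hz := (ha 2).uniq hO
  have a0 : a 0 = 0 := hz 0 (by omega)
  have a1 : a 1 = 0 := hz 1 (by omega)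
  refine ⟨fun n => a (n + 1), fun N => ?_⟩
  obtain ⟨C, hC⟩ := ha (N + 2)
  refine IsBigO.of_bound C ?_
  filter_upwards [hC, hev] with b h hb
  have hb0 : (0 : ℝ) < b := by exact_mod_cast (by omega : 0 < b)
  have hXb : irwinSum b d k - (b : ℝ) * Real.log b
        + (if k = 0 ∧ 1 ≤ d then (b : ℝ) * Real.log (1 + 1 / (d : ℝ)) else 0) = b * X b := by
    simp only [hX]
    field_simp
  rw [Finset.sum_range_succ', Finset.sum_range_succ', a0, a1] at h
  simp only [zero_mul, add_zero, zero_add] at h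
  have hs : ∑ n ∈ Finset.Icc 1 N, a (n + 1) / (b : ℝ) ^ n
      = b * ∑ r ∈ Finset.range N, a (r + 1 + 1) * (1 / (b : ℝ)) ^ (r + 1 + 1) := by
    rw [← Finset.Ico_add_one_right_eq_Icc, Finset.sum_Ico_eq_sum_range, Finset.mul_sum]
    refine Finset.sum_congr rfl fun r _ => ?_
    rw [add_comm 1 r, one_div, inv_pow, pow_succ (b : ℝ) (r + 1)]
    field_simp
  rw [hXb, hs, ← mul_sub, Real.norm_eq_abs, Real.norm_eq_abs, abs_mul, abs_of_pos hb0,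
    abs_of_pos (by positivity : (0 : ℝ) < ((b : ℝ) ^ (N + 1))⁻¹)]
  calc _ ≤ (b : ℝ) * (C * (1 / (b : ℝ)) ^ (N + 2)) := by gcongr
    _ = _ := by
      rw [one_div, inv_pow, pow_succ (b : ℝ) (N + 1)]
      field_simp
end
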